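/- Let K be a field, t ∈ K^× and κ ∈ Z^ℓ a multicharge, and suppose (K,t) separates Std(P_n). Then the cyclotomic Hecke algebra H = H_n(K,t,κ) decomposes as an internal direct sum of K-subspaces H = ⊕_λ ⊕_{s,t ∈ Std(λ)} H_{st}, where the outer sum is over all ℓ-multipartitions λ of n, H_{st} = { h ∈ H : L_r h = [c_r(s)]_t h and h L_r = [c_r(t)]_t h for all 1 ≤ r ≤ n }, and each subspace H_{st} is one-dimensional. -/

import Mathlib

open scoped BigOperators
open scoped Classical

namespace Paper

/-! ## Quantum integers -/

/-- The quantum integer `[d]_x` in a field, for `d ∈ ℤ`. -/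
noncomputable def qint {K : Type*} [Field K] (x : K) (d : ℤ) : K :=
  if 0 ≤ d then ∑ k ∈ Finset.range d.toNat, x ^ k
  else -∑ k ∈ Finset.range (-d).toNat, x ^ (-((k : ℤ) + 1))

/-- The quantum integer `[d]_t` in a commutative ring, for an invertible `t` and `d ∈ ℤ`. -/
def qintU {O : Type*} [CommRing O] (t : Oˣ) (d : ℤ) : O :=
  if 0 ≤ d then ∑ k ∈ Finset.range d.toNat, (t : O) ^ k
  else -∑ k ∈ Finset.range (-d).toNat, ((t ^ (-((k : ℤ) + 1)) : Oˣ) : O)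

/-! ## Nodes, multipartitions and standard tableaux -/

/-- A node `(l, r, c)`: component `l`, row `r`, column `c` (all `0`-based). -/
abbrev Node : Type := ℕ × ℕ × ℕ

/-- `nodeBelow A B` holds when `B` is strictly below `A`, i.e. `A < B` lexicographically. -/
def nodeBelow (A B : Node) : Prop :=
  A.1 < B.1 ∨ (A.1 = B.1 ∧ (A.2.1 < B.2.1 ∨ (A.2.1 = B.2.1 ∧ A.2.2 < B.2.2)))

/-- An `ℓ`-multipartition of `n`. -/
structure Multipartition (ℓ n : ℕ) : Type where
  part : ℕ → ℕ → ℕ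
  comp_bound : ∀ l, ℓ ≤ l → ∀ r, part l r = 0
  antitone : ∀ l, Antitone (part l)
  row_bound : ∀ l r, n ≤ r → part l r = 0
  size : (∑ l ∈ Finset.range ℓ, ∑ r ∈ Finset.range n, part l r) = n

/-- The diagram of a multipartition. -/
def Multipartition.diagram {ℓ n : ℕ} (μ : Multipartition ℓ n) : Set Node :=
  {A | A.2.2 < μ.part A.1 A.2.1}

/-- A standard tableau: a bijection from the diagram of its shape onto `{1, …, n}`
that increases along rows and down columns of each component (it takes the value
`0` off the diagram, so that it is determined by its entries). -/
structure StdTableau (ℓ n : ℕ) : Type where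
  shape : Multipartition ℓ n
  entry : Node → ℕ
  entry_zero : ∀ A, A ∉ shape.diagram → entry A = 0
  bijOn : Set.BijOn entry shape.diagram (Set.Icc 1 n)
  row_inc : ∀ l r c, (l, r, c + 1) ∈ shape.diagram → entry (l, r, c) < entry (l, r, c + 1)
  col_inc : ∀ l r c, (l, r + 1, c) ∈ shape.diagram → entry (l, r, c) < entry (l, r + 1, c)

/-- The node of a standard tableau containing the entry `k`. -/
noncomputable def StdTableau.node {ℓ n : ℕ} (T : StdTableau ℓ n) (k : ℕ) : Node :=
  Function.invFunOn T.entry T.shape.diagram k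

/-- The content `c_k(T) = κ_l + c - r` of the entry `k` in the tableau `T`
(`1 ≤ k ≤ n`). -/
noncomputable def content {ℓ n : ℕ} (κ : ℕ → ℤ) (T : StdTableau ℓ n) (k : ℕ) : ℤ :=
  κ (T.node k).1 + ((T.node k).2.2 : ℤ) - ((T.node k).2.1 : ℤ)

/-- The residue sequence of a standard tableau, in `I^n` with `I = ℤ/eℤ`. -/
noncomputable def resSeq {ℓ n : ℕ} (e : ℕ) (κ : ℕ → ℤ) (T : StdTableau ℓ n) :
    Fin n → ZMod e :=
  fun k => ((content κ T (k.1 + 1) : ℤ) : ZMod e)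

/-- The residue of a node. -/
def resNode (e : ℕ) (κ : ℕ → ℤ) (A : Node) : ZMod e :=
  ((κ A.1 + (A.2.2 : ℤ) - (A.2.1 : ℤ) : ℤ) : ZMod e)

/-- A set of nodes is the diagram of a multipartition (with at most `ℓ` components)
iff it is finite and downward closed in rows and columns. -/
def IsDiagramSet (ℓ : ℕ) (S : Set Node) : Prop :=
  S.Finite ∧ (∀ A ∈ S, A.1 < ℓ) ∧
    (∀ l r c, (l, r, c + 1) ∈ S → (l, r, c) ∈ S) ∧
    (∀ l r c, (l, r + 1, c) ∈ S → (l, r, c) ∈ S)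

/-- `A` is an addable node of the diagram `S`. -/
def Addable (ℓ : ℕ) (S : Set Node) (A : Node) : Prop :=
  A ∉ S ∧ IsDiagramSet ℓ (S ∪ {A})

/-- `A` is a removable node of the diagram `S`. -/
def Removable (ℓ : ℕ) (S : Set Node) (A : Node) : Prop :=
  A ∈ S ∧ IsDiagramSet ℓ (S \ {A})

/-- `d_A(S)`: the number of addable nodes of `S` of the same residue as `A` strictly
below `A`, minus the number of removable ones. -/
noncomputable def dNode (ℓ e : ℕ) (κ : ℕ → ℤ) (S : Set Node) (A : Node) : ℤ :=
  (Set.ncard {B | Addable ℓ S B ∧ resNode e κ B = resNode e κ A ∧ nodeBelow A B} : ℤ) -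
    (Set.ncard {B | Removable ℓ S B ∧ resNode e κ B = resNode e κ A ∧ nodeBelow A B} : ℤ)

/-- The Brundan–Kleshchev–Wang degree `deg_e(T)` of a standard tableau, written as the
telescoping sum of the recursion `deg_e(T) = deg_e(T↓(n-1)) + d_A(Shape(T))`. -/
noncomputable def degE {ℓ n : ℕ} (e : ℕ) (κ : ℕ → ℤ) (T : StdTableau ℓ n) : ℤ :=
  ∑ m ∈ Finset.Icc 1 n,
    dNode ℓ e κ {A | A ∈ T.shape.diagram ∧ T.entry A ≤ m} (T.node m)

/-- The restriction of the diagram of `T` to entries `≤ m` (the diagram of `Shape(T↓m)`). -/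
def restDiag {ℓ n : ℕ} (T : StdTableau ℓ n) (m : ℕ) : Set Node :=
  {A | A ∈ T.shape.diagram ∧ T.entry A ≤ m}

/-- Dominance order on standard tableaux: `domTab S T` iff `S ⊵ T`. -/
def domTab {ℓ n : ℕ} (S T : StdTableau ℓ n) : Prop :=
  ∀ m l i : ℕ,
    Set.ncard {A | A ∈ restDiag T m ∧ (A.1 < l ∨ (A.1 = l ∧ A.2.1 ≤ i))} ≤
      Set.ncard {A | A ∈ restDiag S m ∧ (A.1 < l ∨ (A.1 = l ∧ A.2.1 ≤ i))}

/-- Interchange the entries `r` and `r + 1` in an entry function. -/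
def swapEntry (f : Node → ℕ) (r : ℕ) : Node → ℕ :=
  fun A => if f A = r then r + 1 else if f A = r + 1 then r else f A

/-- `ρ_r(T) = c_r(T) - c_{r+1}(T)`, the axial distance. -/
noncomputable def rhoTab {ℓ n : ℕ} (κ : ℕ → ℤ) (T : StdTableau ℓ n) (r : ℕ) : ℤ :=
  content κ T r - content κ T (r + 1)

/-- The entry function of the row-reading initial tableau `t^λ`. -/
noncomputable def tlamEntry {ℓ n : ℕ} (μ : Multipartition ℓ n) (A : Node) : ℕ :=
  if A ∈ μ.diagram then
    (∑ l ∈ Finset.range A.1, ∑ r ∈ Finset.range n, μ.part l r) +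
      (∑ r ∈ Finset.range A.2.1, μ.part A.1 r) + A.2.2 + 1
  else 0

/-- The finite set of possible contents of standard tableaux of size `n`. -/
noncomputable def contFinset (ℓ n : ℕ) (κ : ℕ → ℤ) : Finset ℤ :=
  ((Finset.range ℓ ×ˢ Finset.range n ×ˢ Finset.range n).image
      (fun x => κ x.1 + (x.2.2 : ℤ) - (x.2.1 : ℤ))).filter
    (fun c => ∃ T : StdTableau ℓ n, ∃ k, 1 ≤ k ∧ k ≤ n ∧ content κ T k = c)

/-- The standard tableau (if any) obtained from `T` by interchanging the entries
`r` and `r + 1`; i.e. `T·s_r` if it is standard, and `none` otherwise. -/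
noncomputable def oSwapO {ℓ n : ℕ} (T : StdTableau ℓ n) (r : ℕ) :
    Option (StdTableau ℓ n) :=
  if h : ∃ V : StdTableau ℓ n, V.entry = swapEntry T.entry r then some (Classical.choose h)
  else none

/-- `oSwap` extended to `Option`. -/
noncomputable def oSwap {ℓ n : ℕ} (X : Option (StdTableau ℓ n)) (r : ℕ) :
    Option (StdTableau ℓ n) :=
  X.bind fun T => oSwapO T r

/-- Evaluate a seminormal coefficient system on an optional tableau (by `0` if none). -/
noncomputable def aE {ℓ n : ℕ} {K : Type*} [Field K] (α : ℕ → StdTableau ℓ n → K) (r : ℕ)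
    (X : Option (StdTableau ℓ n)) : K :=
  X.elim 0 (α r)

/-! ## Separation and idempotent subrings -/

/-- `(K, t)` separates `Std(P_n)` (field version):
`[n]!_t ∏_{1 ≤ l < m ≤ ℓ} ∏_{-n < d < n} [κ_l - κ_m + d]_t ≠ 0`. -/
def SeparatesF {K : Type*} [Field K] (t : Kˣ) (n ℓ : ℕ) (κ : ℕ → ℤ) : Prop :=
  ((∏ d ∈ Finset.Icc 1 n, qint (t : K) (d : ℤ)) *
      ∏ l ∈ Finset.range ℓ, ∏ m ∈ Finset.Ioo l ℓ,
        ∏ d ∈ Finset.Ioo (-(n : ℤ)) (n : ℤ), qint (t : K) (κ l - κ m + d)) ≠ 0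

/-- `(O, t)` separates `Std(P_n)` (subring version): the separation element is a unit. -/
def SeparatesU {O : Type*} [CommRing O] (t : Oˣ) (n ℓ : ℕ) (κ : ℕ → ℤ) : Prop :=
  IsUnit ((∏ d ∈ Finset.Icc 1 n, qintU t (d : ℤ)) *
      ∏ l ∈ Finset.range ℓ, ∏ m ∈ Finset.Ioo l ℓ,
        ∏ d ∈ Finset.Ioo (-(n : ℤ)) (n : ℤ), qintU t (κ l - κ m + d))

/-- `(O, t)` is an `e`-idempotent subring of the field `K`. -/
def IsIdempotentSubring {K : Type*} [Field K] (O : Subring K) (t : Oˣ) (e n ℓ : ℕ)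
    (κ : ℕ → ℤ) : Prop :=
  SeparatesU t n ℓ κ ∧
    (∀ k : ℤ, ¬(e : ℤ) ∣ k → IsUnit (qintU t k)) ∧
    (∀ k : ℤ, (e : ℤ) ∣ k → qintU t k ∈ Ideal.jacobson (⊥ : Ideal O))

/-! ## The cyclotomic Hecke algebra, by generators and relations -/

/-- Generators `L_1, …, L_n`, `T_1, …, T_{n-1}` (here `0`-based). -/
inductive HeckeGen (n : ℕ) : Type
  | L : Fin n → HeckeGen n
  | T : Fin (n - 1) → HeckeGen n

/-- The position `r` of the pair `(r, r+1)` interchanged by the `r`-th transposition. -/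
def pL {n : ℕ} (r : Fin (n - 1)) : Fin n := ⟨r.1, by have := r.2; omega⟩

/-- The position `r + 1` of the pair interchanged by the `r`-th transposition. -/
def pR {n : ℕ} (r : Fin (n - 1)) : Fin n := ⟨r.1 + 1, by have := r.2; omega⟩

/-- The position `r + 2`, used in braid relations. -/
def pM {n : ℕ} (r : Fin (n - 1)) (hr : r.1 + 1 < n - 1) : Fin n := ⟨r.1 + 2, by omega⟩

/-- The free algebra generator `L_k`. -/
def hL (R : Type*) [CommRing R] {n : ℕ} (k : Fin n) : FreeAlgebra R (HeckeGen n) :=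
  FreeAlgebra.ι R (HeckeGen.L k)

/-- The free algebra generator `T_r`. -/
def hT (R : Type*) [CommRing R] {n : ℕ} (r : Fin (n - 1)) : FreeAlgebra R (HeckeGen n) :=
  FreeAlgebra.ι R (HeckeGen.T r)

/-- The defining relations of the integral cyclotomic Hecke algebra `H_n(R, t, κ)`. -/
inductive HeckeRel (R : Type*) [CommRing R] (t : Rˣ) (n ℓ : ℕ) (κ : ℕ → ℤ) :
    FreeAlgebra R (HeckeGen n) → FreeAlgebra R (HeckeGen n) → Prop
  | cyc (h : 0 < n) :
      HeckeRel R t n ℓ κ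
        (((List.range ℓ).map fun l =>
          hL R (⟨0, h⟩ : Fin n) - algebraMap R _ (qintU t (κ l))).prod) 0
  | quad (r : Fin (n - 1)) :
      HeckeRel R t n ℓ κ ((hT R r + 1) * (hT R r - algebraMap R _ (t : R))) 0
  | LL (k m : Fin n) : HeckeRel R t n ℓ κ (hL R k * hL R m) (hL R m * hL R k)
  | TTfar (r s : Fin (n - 1)) (h : r.1 + 1 < s.1 ∨ s.1 + 1 < r.1) :
      HeckeRel R t n ℓ κ (hT R r * hT R s) (hT R s * hT R r)
  | braid (r s : Fin (n - 1)) (h : s.1 = r.1 + 1) :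
      HeckeRel R t n ℓ κ (hT R r * hT R s * hT R r) (hT R s * hT R r * hT R s)
  | TL (r : Fin (n - 1)) (k : Fin n) (h : k.1 ≠ r.1 ∧ k.1 ≠ r.1 + 1) :
      HeckeRel R t n ℓ κ (hT R r * hL R k) (hL R k * hT R r)
  | LT (r : Fin (n - 1)) :
      HeckeRel R t n ℓ κ (hL R (pR r) * (hT R r - algebraMap R _ (t : R) + 1))
        (hT R r * hL R (pL r) + 1)

/-- The integral cyclotomic Hecke algebra of type `A`, `H_n(R, t, κ)`. -/
noncomputable abbrev CycHecke (R : Type*) [CommRing R] (t : Rˣ) (n ℓ : ℕ) (κ : ℕ → ℤ) :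
    Type _ :=
  RingQuot (HeckeRel R t n ℓ κ)

/-- The generator `L_k` of the cyclotomic Hecke algebra. -/
noncomputable def Lgen (R : Type*) [CommRing R] (t : Rˣ) (n ℓ : ℕ) (κ : ℕ → ℤ)
    (k : Fin n) : CycHecke R t n ℓ κ :=
  RingQuot.mkAlgHom R (HeckeRel R t n ℓ κ) (hL R k)

/-- The generator `T_r` of the cyclotomic Hecke algebra. -/
noncomputable def Tgen (R : Type*) [CommRing R] (t : Rˣ) (n ℓ : ℕ) (κ : ℕ → ℤ)
    (r : Fin (n - 1)) : CycHecke R t n ℓ κ :=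
  RingQuot.mkAlgHom R (HeckeRel R t n ℓ κ) (hT R r)

end Paper
/-! ## Quiver Hecke (KLR) algebras, by generators and relations -/

namespace Paper

/-- Generators `e(i)` (`i ∈ I^n`), `ψ_1, …, ψ_{n-1}`, `y_1, …, y_n` (here `0`-based). -/
inductive KLRGen (n e : ℕ) : Type
  | idem : (Fin n → ZMod e) → KLRGen n e
  | psi : Fin (n - 1) → KLRGen n e
  | y : Fin n → KLRGen n e

/-- The free algebra generator `e(i)`. -/
def kE (R : Type*) [CommRing R] {n e : ℕ} (i : Fin n → ZMod e) :
    FreeAlgebra R (KLRGen n e) :=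
  FreeAlgebra.ι R (KLRGen.idem i)

/-- The free algebra generator `ψ_r`. -/
def kPsi (R : Type*) [CommRing R] {n e : ℕ} (r : Fin (n - 1)) :
    FreeAlgebra R (KLRGen n e) :=
  FreeAlgebra.ι R (KLRGen.psi r)

/-- The free algebra generator `y_k`. -/
def kY (R : Type*) [CommRing R] {n e : ℕ} (k : Fin n) : FreeAlgebra R (KLRGen n e) :=
  FreeAlgebra.ι R (KLRGen.y k)

/-- `s_r · i`: interchange the entries of `i` at positions `r` and `r + 1`. -/
def swapSeq {n e : ℕ} (i : Fin n → ZMod e) (r : Fin (n - 1)) : Fin n → ZMod e :=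
  fun k => if k = pL r then i (pR r) else if k = pR r then i (pL r) else i k

/-- The defining relations of the cyclotomic quiver Hecke algebra `R_n^Λ(R)` where
`Λ = Σ_l Λ_{κ_l mod e}`. -/
inductive KLRRel (R : Type*) [CommRing R] (n e ℓ : ℕ) [NeZero e] (κ : ℕ → ℤ) :
    FreeAlgebra R (KLRGen n e) → FreeAlgebra R (KLRGen n e) → Prop
  | cyc (h : 0 < n) (i : Fin n → ZMod e) :
      KLRRel R n e ℓ κ
        ((kY R (⟨0, h⟩ : Fin n)) ^
            (((Finset.range ℓ).filter fun l => ((κ l : ZMod e) = i ⟨0, h⟩)).card) *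
          kE R i) 0
  | orth (i j : Fin n → ZMod e) (h : i ≠ j) : KLRRel R n e ℓ κ (kE R i * kE R j) 0
  | idem (i : Fin n → ZMod e) : KLRRel R n e ℓ κ (kE R i * kE R i) (kE R i)
  | complete : KLRRel R n e ℓ κ (∑ i : Fin n → ZMod e, kE R i) 1
  | yE (k : Fin n) (i : Fin n → ZMod e) :
      KLRRel R n e ℓ κ (kY R k * kE R i) (kE R i * kY R k)
  | psiE (r : Fin (n - 1)) (i : Fin n → ZMod e) :
      KLRRel R n e ℓ κ (kPsi R r * kE R i) (kE R (swapSeq i r) * kPsi R r)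
  | yy (k m : Fin n) : KLRRel R n e ℓ κ (kY R k * kY R m) (kY R m * kY R k)
  | psiyEq (r : Fin (n - 1)) (i : Fin n → ZMod e) (h : i (pL r) = i (pR r)) :
      KLRRel R n e ℓ κ (kPsi R r * kY R (pR r) * kE R i)
        ((kY R (pL r) * kPsi R r + 1) * kE R i)
  | psiyNe (r : Fin (n - 1)) (i : Fin n → ZMod e) (h : i (pL r) ≠ i (pR r)) :
      KLRRel R n e ℓ κ (kPsi R r * kY R (pR r) * kE R i)
        (kY R (pL r) * kPsi R r * kE R i)
  | ypsiEq (r : Fin (n - 1)) (i : Fin n → ZMod e) (h : i (pL r) = i (pR r)) :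
      KLRRel R n e ℓ κ (kY R (pR r) * kPsi R r * kE R i)
        ((kPsi R r * kY R (pL r) + 1) * kE R i)
  | ypsiNe (r : Fin (n - 1)) (i : Fin n → ZMod e) (h : i (pL r) ≠ i (pR r)) :
      KLRRel R n e ℓ κ (kY R (pR r) * kPsi R r * kE R i)
        (kPsi R r * kY R (pL r) * kE R i)
  | psiyFar (r : Fin (n - 1)) (k : Fin n) (h : k.1 ≠ r.1 ∧ k.1 ≠ r.1 + 1) :
      KLRRel R n e ℓ κ (kPsi R r * kY R k) (kY R k * kPsi R r)
  | psipsiFar (r s : Fin (n - 1)) (h : r.1 + 1 < s.1 ∨ s.1 + 1 < r.1) :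
      KLRRel R n e ℓ κ (kPsi R r * kPsi R s) (kPsi R s * kPsi R r)
  | quadEq (r : Fin (n - 1)) (i : Fin n → ZMod e) (h : i (pL r) = i (pR r)) :
      KLRRel R n e ℓ κ (kPsi R r ^ 2 * kE R i) 0
  | quadR (r : Fin (n - 1)) (i : Fin n → ZMod e)
      (h1 : i (pR r) = i (pL r) + 1) (h2 : i (pL r) ≠ i (pR r) + 1) :
      KLRRel R n e ℓ κ (kPsi R r ^ 2 * kE R i) ((kY R (pL r) - kY R (pR r)) * kE R i)
  | quadL (r : Fin (n - 1)) (i : Fin n → ZMod e)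
      (h1 : i (pL r) = i (pR r) + 1) (h2 : i (pR r) ≠ i (pL r) + 1) :
      KLRRel R n e ℓ κ (kPsi R r ^ 2 * kE R i) ((kY R (pR r) - kY R (pL r)) * kE R i)
  | quadBoth (r : Fin (n - 1)) (i : Fin n → ZMod e)
      (h1 : i (pR r) = i (pL r) + 1) (h2 : i (pL r) = i (pR r) + 1) :
      KLRRel R n e ℓ κ (kPsi R r ^ 2 * kE R i)
        ((kY R (pR r) - kY R (pL r)) * (kY R (pL r) - kY R (pR r)) * kE R i)
  | quadNone (r : Fin (n - 1)) (i : Fin n → ZMod e) (h1 : i (pL r) ≠ i (pR r))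
      (h2 : i (pR r) ≠ i (pL r) + 1) (h3 : i (pL r) ≠ i (pR r) + 1) :
      KLRRel R n e ℓ κ (kPsi R r ^ 2 * kE R i) (kE R i)
  | braidR (r : Fin (n - 1)) (hr : r.1 + 1 < n - 1) (i : Fin n → ZMod e)
      (h0 : i (pM r hr) = i (pL r)) (h1 : i (pR r) = i (pL r) + 1)
      (h2 : i (pL r) ≠ i (pR r) + 1) :
      KLRRel R n e ℓ κ (kPsi R r * kPsi R ⟨r.1 + 1, hr⟩ * kPsi R r * kE R i)
        ((kPsi R ⟨r.1 + 1, hr⟩ * kPsi R r * kPsi R ⟨r.1 + 1, hr⟩ - 1) * kE R i)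
  | braidL (r : Fin (n - 1)) (hr : r.1 + 1 < n - 1) (i : Fin n → ZMod e)
      (h0 : i (pM r hr) = i (pL r)) (h1 : i (pL r) = i (pR r) + 1)
      (h2 : i (pR r) ≠ i (pL r) + 1) :
      KLRRel R n e ℓ κ (kPsi R r * kPsi R ⟨r.1 + 1, hr⟩ * kPsi R r * kE R i)
        ((kPsi R ⟨r.1 + 1, hr⟩ * kPsi R r * kPsi R ⟨r.1 + 1, hr⟩ + 1) * kE R i)
  | braidBoth (r : Fin (n - 1)) (hr : r.1 + 1 < n - 1) (i : Fin n → ZMod e)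
      (h0 : i (pM r hr) = i (pL r)) (h1 : i (pR r) = i (pL r) + 1)
      (h2 : i (pL r) = i (pR r) + 1) :
      KLRRel R n e ℓ κ (kPsi R r * kPsi R ⟨r.1 + 1, hr⟩ * kPsi R r * kE R i)
        ((kPsi R ⟨r.1 + 1, hr⟩ * kPsi R r * kPsi R ⟨r.1 + 1, hr⟩ +
            kY R (pL r) - 2 * kY R (pR r) + kY R (pM r hr)) * kE R i)
  | braidNone (r : Fin (n - 1)) (hr : r.1 + 1 < n - 1) (i : Fin n → ZMod e)
      (h : ¬(i (pM r hr) = i (pL r) ∧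
        (i (pR r) = i (pL r) + 1 ∨ i (pL r) = i (pR r) + 1))) :
      KLRRel R n e ℓ κ (kPsi R r * kPsi R ⟨r.1 + 1, hr⟩ * kPsi R r * kE R i)
        (kPsi R ⟨r.1 + 1, hr⟩ * kPsi R r * kPsi R ⟨r.1 + 1, hr⟩ * kE R i)

/-- The cyclotomic quiver Hecke algebra `R_n^Λ(R)`, `Λ = Σ_l Λ_{κ_l mod e}`. -/
noncomputable abbrev KLR (R : Type*) [CommRing R] (n e ℓ : ℕ) [NeZero e] (κ : ℕ → ℤ) :
    Type _ :=
  RingQuot (KLRRel R n e ℓ κ)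

/-- The generator `e(i)` of the cyclotomic quiver Hecke algebra. -/
noncomputable def KeGen (R : Type*) [CommRing R] (n e ℓ : ℕ) [NeZero e] (κ : ℕ → ℤ)
    (i : Fin n → ZMod e) : KLR R n e ℓ κ :=
  RingQuot.mkAlgHom R (KLRRel R n e ℓ κ) (kE R i)

/-- The generator `ψ_r` of the cyclotomic quiver Hecke algebra. -/
noncomputable def KpsiGen (R : Type*) [CommRing R] (n e ℓ : ℕ) [NeZero e] (κ : ℕ → ℤ)
    (r : Fin (n - 1)) : KLR R n e ℓ κ :=
  RingQuot.mkAlgHom R (KLRRel R n e ℓ κ) (kPsi R r)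

/-- The generator `y_k` of the cyclotomic quiver Hecke algebra. -/
noncomputable def KyGen (R : Type*) [CommRing R] (n e ℓ : ℕ) [NeZero e] (κ : ℕ → ℤ)
    (k : Fin n) : KLR R n e ℓ κ :=
  RingQuot.mkAlgHom R (KLRRel R n e ℓ κ) (kY R k)

end Paper
/-! ## The deformed cyclotomic quiver Hecke algebra -/

namespace Paper

/-- `y_k^⟨d⟩ = t^d y_k + [d]_t` in the free algebra. -/
def ydot (R : Type*) [CommRing R] (t : Rˣ) {n e : ℕ} (d : ℤ) (k : Fin n) :
    FreeAlgebra R (KLRGen n e) :=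
  algebraMap R _ ((t ^ d : Rˣ) : R) * kY R k + algebraMap R _ (qintU t d)

/-- `ρ_r(i) = î_r - î_{r+1}` for `i ∈ I^n`. -/
def rhoI {n e : ℕ} (i : Fin n → ZMod e) (r : Fin (n - 1)) : ℤ :=
  ((i (pL r)).val : ℤ) - ((i (pR r)).val : ℤ)

/-- The defining relations of the deformed cyclotomic quiver Hecke algebra `R_n(O)`. -/
inductive DefKLRRel (R : Type*) [CommRing R] (t : Rˣ) (n e ℓ : ℕ) [NeZero e] (κ : ℕ → ℤ) :
    FreeAlgebra R (KLRGen n e) → FreeAlgebra R (KLRGen n e) → Prop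
  | cyc (h : 0 < n) (i : Fin n → ZMod e) :
      DefKLRRel R t n e ℓ κ
        ((((List.range ℓ).map fun l =>
            if ((κ l : ZMod e) = i ⟨0, h⟩) then
              kY R (⟨0, h⟩ : Fin n) -
                algebraMap R _ (qintU t (κ l - ((i ⟨0, h⟩).val : ℤ)))
            else 1).prod) * kE R i) 0
  | orth (i j : Fin n → ZMod e) (h : i ≠ j) : DefKLRRel R t n e ℓ κ (kE R i * kE R j) 0
  | idem (i : Fin n → ZMod e) : DefKLRRel R t n e ℓ κ (kE R i * kE R i) (kE R i)
  | complete : DefKLRRel R t n e ℓ κ (∑ i : Fin n → ZMod e, kE R i) 1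
  | yE (k : Fin n) (i : Fin n → ZMod e) :
      DefKLRRel R t n e ℓ κ (kY R k * kE R i) (kE R i * kY R k)
  | psiE (r : Fin (n - 1)) (i : Fin n → ZMod e) :
      DefKLRRel R t n e ℓ κ (kPsi R r * kE R i) (kE R (swapSeq i r) * kPsi R r)
  | yy (k m : Fin n) : DefKLRRel R t n e ℓ κ (kY R k * kY R m) (kY R m * kY R k)
  | psiyEq (r : Fin (n - 1)) (i : Fin n → ZMod e) (h : i (pL r) = i (pR r)) :
      DefKLRRel R t n e ℓ κ (kPsi R r * kY R (pR r) * kE R i)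
        ((kY R (pL r) * kPsi R r + 1) * kE R i)
  | psiyNe (r : Fin (n - 1)) (i : Fin n → ZMod e) (h : i (pL r) ≠ i (pR r)) :
      DefKLRRel R t n e ℓ κ (kPsi R r * kY R (pR r) * kE R i)
        (kY R (pL r) * kPsi R r * kE R i)
  | ypsiEq (r : Fin (n - 1)) (i : Fin n → ZMod e) (h : i (pL r) = i (pR r)) :
      DefKLRRel R t n e ℓ κ (kY R (pR r) * kPsi R r * kE R i)
        ((kPsi R r * kY R (pL r) + 1) * kE R i)
  | ypsiNe (r : Fin (n - 1)) (i : Fin n → ZMod e) (h : i (pL r) ≠ i (pR r)) :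
      DefKLRRel R t n e ℓ κ (kY R (pR r) * kPsi R r * kE R i)
        (kPsi R r * kY R (pL r) * kE R i)
  | psiyFar (r : Fin (n - 1)) (k : Fin n) (h : k.1 ≠ r.1 ∧ k.1 ≠ r.1 + 1) :
      DefKLRRel R t n e ℓ κ (kPsi R r * kY R k) (kY R k * kPsi R r)
  | psipsiFar (r s : Fin (n - 1)) (h : r.1 + 1 < s.1 ∨ s.1 + 1 < r.1) :
      DefKLRRel R t n e ℓ κ (kPsi R r * kPsi R s) (kPsi R s * kPsi R r)
  | quadEq (r : Fin (n - 1)) (i : Fin n → ZMod e) (h : i (pL r) = i (pR r)) :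
      DefKLRRel R t n e ℓ κ (kPsi R r ^ 2 * kE R i) 0
  | quadR (r : Fin (n - 1)) (i : Fin n → ZMod e)
      (h1 : i (pR r) = i (pL r) + 1) (h2 : i (pL r) ≠ i (pR r) + 1) :
      DefKLRRel R t n e ℓ κ (kPsi R r ^ 2 * kE R i)
        ((ydot R t (1 + rhoI i r) (pL r) - kY R (pR r)) * kE R i)
  | quadL (r : Fin (n - 1)) (i : Fin n → ZMod e)
      (h1 : i (pL r) = i (pR r) + 1) (h2 : i (pR r) ≠ i (pL r) + 1) :
      DefKLRRel R t n e ℓ κ (kPsi R r ^ 2 * kE R i)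
        ((ydot R t (1 - rhoI i r) (pR r) - kY R (pL r)) * kE R i)
  | quadBoth (r : Fin (n - 1)) (i : Fin n → ZMod e)
      (h1 : i (pR r) = i (pL r) + 1) (h2 : i (pL r) = i (pR r) + 1) :
      DefKLRRel R t n e ℓ κ (kPsi R r ^ 2 * kE R i)
        ((ydot R t (1 + rhoI i r) (pL r) - kY R (pR r)) *
          (ydot R t (1 - rhoI i r) (pR r) - kY R (pL r)) * kE R i)
  | quadNone (r : Fin (n - 1)) (i : Fin n → ZMod e) (h1 : i (pL r) ≠ i (pR r))
      (h2 : i (pR r) ≠ i (pL r) + 1) (h3 : i (pL r) ≠ i (pR r) + 1) :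
      DefKLRRel R t n e ℓ κ (kPsi R r ^ 2 * kE R i) (kE R i)
  | braidBoth (r : Fin (n - 1)) (hr : r.1 + 1 < n - 1) (i : Fin n → ZMod e)
      (h0 : i (pM r hr) = i (pL r)) (h1 : i (pR r) = i (pL r) + 1)
      (h2 : i (pL r) = i (pR r) + 1) :
      DefKLRRel R t n e ℓ κ
        ((kPsi R r * kPsi R ⟨r.1 + 1, hr⟩ * kPsi R r -
            kPsi R ⟨r.1 + 1, hr⟩ * kPsi R r * kPsi R ⟨r.1 + 1, hr⟩) * kE R i)
        ((ydot R t (1 + rhoI i r) (pL r) + ydot R t (1 + rhoI i r) (pM r hr) -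
            ydot R t (1 + rhoI i r) (pR r) - ydot R t (1 - rhoI i r) (pR r)) * kE R i)
  | braidR (r : Fin (n - 1)) (hr : r.1 + 1 < n - 1) (i : Fin n → ZMod e)
      (h0 : i (pM r hr) = i (pL r)) (h1 : i (pR r) = i (pL r) + 1)
      (h2 : i (pL r) ≠ i (pR r) + 1) :
      DefKLRRel R t n e ℓ κ
        ((kPsi R r * kPsi R ⟨r.1 + 1, hr⟩ * kPsi R r -
            kPsi R ⟨r.1 + 1, hr⟩ * kPsi R r * kPsi R ⟨r.1 + 1, hr⟩) * kE R i)
        (algebraMap R _ (-(((t ^ (1 + rhoI i r) : Rˣ) : R))) * kE R i)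
  | braidL (r : Fin (n - 1)) (hr : r.1 + 1 < n - 1) (i : Fin n → ZMod e)
      (h0 : i (pM r hr) = i (pL r)) (h1 : i (pL r) = i (pR r) + 1)
      (h2 : i (pR r) ≠ i (pL r) + 1) :
      DefKLRRel R t n e ℓ κ
        ((kPsi R r * kPsi R ⟨r.1 + 1, hr⟩ * kPsi R r -
            kPsi R ⟨r.1 + 1, hr⟩ * kPsi R r * kPsi R ⟨r.1 + 1, hr⟩) * kE R i)
        (kE R i)
  | braidNone (r : Fin (n - 1)) (hr : r.1 + 1 < n - 1) (i : Fin n → ZMod e)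
      (h : ¬(i (pM r hr) = i (pL r) ∧
        (i (pR r) = i (pL r) + 1 ∨ i (pL r) = i (pR r) + 1))) :
      DefKLRRel R t n e ℓ κ
        ((kPsi R r * kPsi R ⟨r.1 + 1, hr⟩ * kPsi R r -
            kPsi R ⟨r.1 + 1, hr⟩ * kPsi R r * kPsi R ⟨r.1 + 1, hr⟩) * kE R i) 0

/-- The deformed cyclotomic quiver Hecke algebra `R_n(R)`. -/
noncomputable abbrev DefKLR (R : Type*) [CommRing R] (t : Rˣ) (n e ℓ : ℕ) [NeZero e]
    (κ : ℕ → ℤ) : Type _ :=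
  RingQuot (DefKLRRel R t n e ℓ κ)

/-- The generator `f_i` of the deformed cyclotomic quiver Hecke algebra. -/
noncomputable def DfGen (R : Type*) [CommRing R] (t : Rˣ) (n e ℓ : ℕ) [NeZero e]
    (κ : ℕ → ℤ) (i : Fin n → ZMod e) : DefKLR R t n e ℓ κ :=
  RingQuot.mkAlgHom R (DefKLRRel R t n e ℓ κ) (kE R i)

/-- The generator `ψ_r` of the deformed cyclotomic quiver Hecke algebra. -/
noncomputable def DpsiGen (R : Type*) [CommRing R] (t : Rˣ) (n e ℓ : ℕ) [NeZero e]
    (κ : ℕ → ℤ) (r : Fin (n - 1)) : DefKLR R t n e ℓ κ :=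
  RingQuot.mkAlgHom R (DefKLRRel R t n e ℓ κ) (kPsi R r)

/-- The generator `y_k` of the deformed cyclotomic quiver Hecke algebra. -/
noncomputable def DyGen (R : Type*) [CommRing R] (t : Rˣ) (n e ℓ : ℕ) [NeZero e]
    (κ : ℕ → ℤ) (k : Fin n) : DefKLR R t n e ℓ κ :=
  RingQuot.mkAlgHom R (DefKLRRel R t n e ℓ κ) (kY R k)

/-! ## Seminormal idempotents -/

/-- The seminormal idempotent `F_T` of the semisimple cyclotomic Hecke algebra:
`F_T = ∏_{k=1}^n ∏_{c ∈ Cont(n), [c_k(T)] ≠ [c]} (L_k - [c]) / ([c_k(T)] - [c])`. -/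
noncomputable def Fidem (K : Type*) [Field K] (tK : Kˣ) (n ℓ : ℕ) (κ : ℕ → ℤ)
    (T : StdTableau ℓ n) : CycHecke K tK n ℓ κ :=
  ((List.finRange n).map (fun k =>
    (((contFinset ℓ n κ).sort (· ≤ ·)).map (fun c =>
      if qint (tK : K) (content κ T (k.1 + 1)) ≠ qint (tK : K) c then
        (Lgen K tK n ℓ κ k - algebraMap K _ (qint (tK : K) c)) *
          algebraMap K _ ((qint (tK : K) (content κ T (k.1 + 1)) - qint (tK : K) c)⁻¹)
      else 1)).prod)).prod

/-- The residue idempotent `f_i = Σ_{T ∈ Std(i)} F_T`. -/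
noncomputable def fres (K : Type*) [Field K] (tK : Kˣ) (n ℓ e : ℕ) (κ : ℕ → ℤ)
    (i : Fin n → ZMod e) : CycHecke K tK n ℓ κ :=
  ∑ᶠ T : {T : StdTableau ℓ n // resSeq e κ T = i}, Fidem K tK n ℓ κ T.1

/-- The simultaneous two-sided eigenspace `H_{S,T}` of the Jucys–Murphy elements. -/
noncomputable def eigSub (K : Type*) [Field K] (tK : Kˣ) (n ℓ : ℕ) (κ : ℕ → ℤ)
    (S T : StdTableau ℓ n) : Submodule K (CycHecke K tK n ℓ κ) where
  carrier := {h | ∀ k : Fin n,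
      Lgen K tK n ℓ κ k * h = qint (tK : K) (content κ S (k.1 + 1)) • h ∧
      h * Lgen K tK n ℓ κ k = qint (tK : K) (content κ T (k.1 + 1)) • h}
  add_mem' := by
    intro a b ha hb
    intro k
    obtain ⟨h1, h2⟩ := ha k
    obtain ⟨h3, h4⟩ := hb k
    exact ⟨by rw [mul_add, h1, h3, smul_add], by rw [add_mul, h2, h4, smul_add]⟩
  zero_mem' := by intro k; simp
  smul_mem' := by
    intro c a ha
    intro k
    obtain ⟨h1, h2⟩ := ha k
    constructor
    · rw [mul_smul_comm, h1, smul_comm]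
    · rw [smul_mul_assoc, h2, smul_comm]

end Paper

/-!
The seminormal form makes `H_n(K, t, κ)` act on the vector space with basis `Std(P_n)`: `L_k` acts
on the basis vector of `T` by the scalar `[c_k(T)]_t`, and `T_r` mixes `T` only with the tableau in
which `r` and `r + 1` are swapped. Separation makes all denominators nonzero and makes the sequence
of scalars determine `T`, so the diagonal matrix units are polynomials in the `L_k`. Since standard
tableaux of the same shape are connected by such swaps with nonzero coefficients, the image contains
every matrix unit `E_{ST}` with `S` and `T` of the same shape.

Over the cosets of `S_k` in `S_{k+1}`, the elements `T_k ⋯ T_{j+1} L_{j+1}^a` with `j ≤ k` and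
`a < ℓ` generate `H_{k+1}` as a left module over the image of `H_k`, so `dim H_n ≤ ℓ^n n!`. On the
other hand Young's lattice of `ℓ`-multipartitions is `ℓ`-differential, which gives at least
`ℓ^n n!` pairs of standard tableaux of the same shape. Hence the representation is an isomorphism
onto the span of these `E_{ST}`, and `H_{ST}` corresponds to the line through `E_{ST}`.
-/

namespace Paper

/-! ## Quantum integers and separation -/

section QuantumIntegers

variable {K : Type*} [Field K] {x : K}

lemma qint_natCast (x : K) (m : ℕ) : qint x m = ∑ k ∈ Finset.range m, x ^ k := by
  simp [qint]

lemma qint_neg_natCast (x : K) (m : ℕ) :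
    qint x (-m) = -∑ k ∈ Finset.range m, x ^ (-((k : ℤ) + 1)) := by
  rcases m.eq_zero_or_pos with rfl | hm
  · simp [qint]
  · rw [qint, if_neg (by omega), neg_neg, Int.toNat_natCast]

@[simp]
lemma qint_zero (x : K) : qint x 0 = 0 := by
  simp [qint]

lemma qint_add_one (hx : x ≠ 0) (d : ℤ) : qint x (d + 1) = x * qint x d + 1 := by
  rcases lt_or_ge d 0 with hd | hd
  · obtain ⟨m, rfl⟩ : ∃ m : ℕ, d = -((m + 1 : ℕ) : ℤ) := ⟨(-d - 1).toNat, by omega⟩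
    have shift : ∀ k ∈ Finset.range m,
        x * x ^ (-(((k + 1 : ℕ) : ℤ) + 1)) = x ^ (-((k : ℤ) + 1)) := fun k _ ↦ by
      rw [← zpow_one_add₀ hx]
      congr 1
    rw [show -((m + 1 : ℕ) : ℤ) + 1 = -(m : ℤ) by push_cast; ring, qint_neg_natCast,
      qint_neg_natCast, Finset.sum_range_succ', mul_neg, mul_add, Finset.mul_sum,
      Finset.sum_congr rfl shift]
    simp [hx]
  · lift d to ℕ using hd
    rw [show (d : ℤ) + 1 = (d + 1 : ℕ) by push_cast; ring, qint_natCast, qint_natCast,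
      Finset.sum_range_succ', Finset.mul_sum]
    simp [pow_succ']

lemma one_add_mul_qint (hx : x ≠ 0) (d : ℤ) : 1 + (x - 1) * qint x d = x ^ d := by
  induction d using Int.induction_on with
  | zero => simp
  | succ i ih => rw [qint_add_one hx, zpow_add_one₀ hx, ← ih]; ring
  | pred i ih =>
    have step := qint_add_one hx (-(i : ℤ) - 1)
    rw [sub_add_cancel] at step
    rw [step] at ih
    rw [zpow_sub_one₀ hx, ← ih]
    field_simp
    ring

lemma qint_add (hx : x ≠ 0) (d e : ℤ) : qint x (d + e) = qint x d + x ^ d * qint x e := by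
  induction e using Int.induction_on with
  | zero => simp
  | succ i ih =>
    rw [← add_assoc, qint_add_one hx, qint_add_one hx i, ih, ← one_add_mul_qint hx d]
    ring
  | pred i ih =>
    have step := qint_add_one hx (-(i : ℤ) - 1)
    have step' := qint_add_one hx (d + (-(i : ℤ) - 1))
    rw [sub_add_cancel] at step
    rw [show d + (-(i : ℤ) - 1) + 1 = d + -(i : ℤ) by ring, ih, step] at step'
    apply mul_left_cancel₀ hx
    linear_combination -step' - one_add_mul_qint hx d

lemma qint_neg (hx : x ≠ 0) (d : ℤ) : qint x (-d) = -x ^ (-d) * qint x d := by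
  have h := qint_add hx (-d) d
  rw [neg_add_cancel, qint_zero] at h
  linear_combination -h

lemma qint_neg_eq_zero_iff (hx : x ≠ 0) (d : ℤ) : qint x (-d) = 0 ↔ qint x d = 0 := by
  simp [qint_neg hx, zpow_ne_zero _ hx]

lemma qint_eq_qint_iff (hx : x ≠ 0) (c d : ℤ) : qint x c = qint x d ↔ qint x (c - d) = 0 := by
  have h := qint_add hx d (c - d)
  rw [add_sub_cancel] at h
  simp [h, zpow_ne_zero _ hx]

lemma qintU_eq_qint (t : Kˣ) (d : ℤ) : qintU t d = qint (t : K) d := by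
  simp only [qintU, qint, Units.val_zpow_eq_zpow_val]

variable {t : Kˣ} {n ℓ : ℕ} {κ : ℕ → ℤ}

lemma SeparatesF.qint_ne_zero (h : SeparatesF t n ℓ κ) {d : ℤ} (hd₀ : d ≠ 0) (hd : |d| ≤ n) :
    qint (t : K) d ≠ 0 := by
  have pos (m : ℕ) (hm : m ∈ Finset.Icc 1 n) : qint (t : K) m ≠ 0 :=
    Finset.prod_ne_zero_iff.1 (left_ne_zero_of_mul h) m hm
  rw [abs_le] at hd
  obtain ⟨m, rfl | rfl⟩ := d.eq_nat_or_neg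
  · exact pos m (Finset.mem_Icc.2 (by omega))
  · rw [Ne, qint_neg_eq_zero_iff t.ne_zero]
    exact pos m (Finset.mem_Icc.2 (by omega))

lemma SeparatesF.qint_sub_add_ne_zero (h : SeparatesF t n ℓ κ) {l m : ℕ} (hl : l < ℓ)
    (hm : m < ℓ) (hlm : l ≠ m) {d : ℤ} (hd : |d| < n) : qint (t : K) (κ l - κ m + d) ≠ 0 := by
  wlog hlt : l < m generalizing l m d
  · rw [Ne, show κ l - κ m + d = -(κ m - κ l + -d) by ring, qint_neg_eq_zero_iff t.ne_zero]
    exact this hm hl hlm.symm (by rwa [abs_neg]) (by omega)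
  have hprod := right_ne_zero_of_mul h
  simp only [Finset.prod_ne_zero_iff] at hprod
  exact hprod l (Finset.mem_range.2 hl) m (Finset.mem_Ioo.2 ⟨hlt, hm⟩) d
    (Finset.mem_Ioo.2 (abs_lt.1 hd))

end QuantumIntegers

/-! ## Diagrams -/

/-- `A` lies weakly north-west of `B` in the same component. -/
def NodeLE (A B : Node) : Prop :=
  A.1 = B.1 ∧ A.2.1 ≤ B.2.1 ∧ A.2.2 ≤ B.2.2

/-- The content `κ_l + c - r` of the node `(l, r, c)`. -/
def nodeContent (κ : ℕ → ℤ) (A : Node) : ℤ :=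
  κ A.1 + A.2.2 - A.2.1

/-- The nodes weakly to the left of `A` in its row. -/
def rowSegment (A : Node) : Finset Node :=
  {A.1} ×ˢ {A.2.1} ×ˢ Finset.range (A.2.2 + 1)

/-- The nodes weakly above `A` in its column. -/
def colSegment (A : Node) : Finset Node :=
  {A.1} ×ˢ Finset.range (A.2.1 + 1) ×ˢ {A.2.2}

lemma card_rowSegment (A : Node) : (rowSegment A).card = A.2.2 + 1 := by
  simp [rowSegment]

lemma card_colSegment (A : Node) : (colSegment A).card = A.2.1 + 1 := by
  simp [colSegment]

lemma card_rowSegment_inter_colSegment_le (A B : Node) :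
    (rowSegment A ∩ colSegment B).card ≤ 1 := by
  rw [Finset.card_le_one]
  rintro ⟨l, r, c⟩ hx ⟨l', r', c'⟩ hy
  simp only [rowSegment, colSegment, Finset.mem_inter, Finset.mem_product,
    Finset.mem_singleton] at hx hy
  grind

lemma nodeLE_of_mem_segments {A B : Node} (h : B ∈ rowSegment A ∪ colSegment A) : NodeLE B A := by
  simp only [rowSegment, colSegment, Finset.mem_union, Finset.mem_product, Finset.mem_singleton,
    Finset.mem_range] at h
  unfold NodeLE
  omega

lemma lt_card_segments (A : Node) : A.2.1 + A.2.2 < (rowSegment A ∪ colSegment A).card := by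
  have h := Finset.card_union_add_card_inter (rowSegment A) (colSegment A)
  have h' := card_rowSegment_inter_colSegment_le A A
  rw [card_rowSegment, card_colSegment] at h
  omega

namespace IsDiagramSet

variable {ℓ : ℕ} {S S' : Set Node} {A B : Node}

protected lemma empty : IsDiagramSet ℓ ∅ := by
  simp [IsDiagramSet]

protected lemma union (hS : IsDiagramSet ℓ S) (hS' : IsDiagramSet ℓ S') :
    IsDiagramSet ℓ (S ∪ S') :=
  ⟨hS.1.union hS'.1, fun A hA ↦ hA.elim (hS.2.1 A) (hS'.2.1 A),
    fun l r c ↦ Or.imp (hS.2.2.1 l r c) (hS'.2.2.1 l r c),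
    fun l r c ↦ Or.imp (hS.2.2.2 l r c) (hS'.2.2.2 l r c)⟩

lemma mem_of_nodeLE (hS : IsDiagramSet ℓ S) (hB : B ∈ S) (hAB : NodeLE A B) : A ∈ S := by
  obtain ⟨l, r, c⟩ := A
  obtain ⟨l', r', c'⟩ := B
  obtain ⟨rfl, hr, hc⟩ : l = l' ∧ r ≤ r' ∧ c ≤ c' := hAB
  have left : (l, r', c) ∈ S := by
    induction c', hc using Nat.le_induction with
    | base => exact hB
    | succ c' _ ih => exact ih (hS.2.2.1 _ _ _ hB)
  clear hB
  induction r', hr using Nat.le_induction with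
  | base => exact left
  | succ r' _ ih => exact ih (hS.2.2.2 _ _ _ left)

lemma segments_subset {Γ : Finset Node} (hΓ : IsDiagramSet ℓ (Γ : Set Node)) (hA : A ∈ Γ) :
    rowSegment A ∪ colSegment A ⊆ Γ :=
  fun _ hB ↦ hΓ.mem_of_nodeLE hA (nodeLE_of_mem_segments hB)

lemma row_add_col_lt_card {Γ : Finset Node} (hΓ : IsDiagramSet ℓ (Γ : Set Node)) (hA : A ∈ Γ) :
    A.2.1 + A.2.2 < Γ.card :=
  (lt_card_segments A).trans_le (Finset.card_le_card (hΓ.segments_subset hA))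

lemma hooks_lt_card {Γ : Finset Node} (hΓ : IsDiagramSet ℓ (Γ : Set Node)) (hA : A ∈ Γ)
    (hB : B ∈ Γ) (hAB : A.1 ≠ B.1) : A.2.1 + A.2.2 + (B.2.1 + B.2.2) + 1 < Γ.card := by
  have hdisj : Disjoint (rowSegment A ∪ colSegment A) (rowSegment B ∪ colSegment B) :=
    Finset.disjoint_left.2 fun C hCA hCB ↦
      hAB ((nodeLE_of_mem_segments hCA).1.symm.trans (nodeLE_of_mem_segments hCB).1)
  have hcard := Finset.card_le_card
    (Finset.union_subset (hΓ.segments_subset hA) (hΓ.segments_subset hB))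
  rw [Finset.card_union_of_disjoint hdisj] at hcard
  have := lt_card_segments A
  have := lt_card_segments B
  omega

lemma col_add_row_lt_card {Γ : Finset Node} (hΓ : IsDiagramSet ℓ (Γ : Set Node)) (hA : A ∈ Γ)
    (hB : B ∈ Γ) : A.2.2 + B.2.1 < Γ.card := by
  have h := Finset.card_union_add_card_inter (rowSegment A) (colSegment B)
  have hinter := card_rowSegment_inter_colSegment_le A B
  have hsub := Finset.card_le_card (Finset.union_subset
    (Finset.union_subset_left (hΓ.segments_subset hA))
    (Finset.union_subset_right (hΓ.segments_subset hB)))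
  rw [card_rowSegment, card_colSegment] at h
  omega

end IsDiagramSet

section Separation

variable {K : Type*} [Field K] {t : Kˣ} {n ℓ : ℕ} {κ : ℕ → ℤ} {Γ : Finset Node} {A B : Node}

lemma SeparatesF.eq_diagonal (h : SeparatesF t n ℓ κ) (hΓ : IsDiagramSet ℓ (Γ : Set Node))
    (hA : A ∈ Γ) (hB : B ∈ Γ) {e : ℤ} (he : Γ.card + |e| ≤ n + 1)
    (heq : qint (t : K) (nodeContent κ A) = qint (t : K) (nodeContent κ B + e)) :
    A.1 = B.1 ∧ (A.2.2 : ℤ) - A.2.1 = B.2.2 - B.2.1 + e := by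
  rw [qint_eq_qint_iff t.ne_zero] at heq
  have he₁ := le_abs_self e
  have he₂ := neg_abs_le e
  have hcomp : A.1 = B.1 := by
    by_contra hne
    have := hΓ.hooks_lt_card hA hB hne
    rw [show nodeContent κ A - (nodeContent κ B + e) = κ A.1 - κ B.1 +
      ((A.2.2 : ℤ) - A.2.1 - (B.2.2 - B.2.1 + e)) by simp only [nodeContent]; ring] at heq
    exact h.qint_sub_add_ne_zero (hΓ.2.1 A hA) (hΓ.2.1 B hB) hne
      (abs_lt.2 ⟨by omega, by omega⟩) heq
  refine ⟨hcomp, ?_⟩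
  by_contra hne
  have := hΓ.col_add_row_lt_card hA hB
  have := hΓ.col_add_row_lt_card hB hA
  rw [show nodeContent κ A - (nodeContent κ B + e) =
    (A.2.2 : ℤ) - A.2.1 - (B.2.2 - B.2.1 + e) by simp only [nodeContent, hcomp]; ring] at heq
  exact h.qint_ne_zero (sub_ne_zero.2 hne) (abs_le.2 ⟨by omega, by omega⟩) heq

/-- By separation, `heq` forces `A` and `B` to lie on the same or on neighbouring diagonals. -/
lemma SeparatesF.nodeLE_total (h : SeparatesF t n ℓ κ) (hΓ : IsDiagramSet ℓ (Γ : Set Node))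
    (hA : A ∈ Γ) (hB : B ∈ Γ) {e : ℤ} (he₁ : |e| ≤ 1) (he : Γ.card + |e| ≤ n + 1)
    (heq : qint (t : K) (nodeContent κ A) = qint (t : K) (nodeContent κ B + e)) :
    NodeLE A B ∨ NodeLE B A := by
  obtain ⟨hcomp, hdiag⟩ := h.eq_diagonal hΓ hA hB he heq
  rw [abs_le] at he₁
  unfold NodeLE
  omega

end Separation

/-! ## Standard tableaux -/

lemma Multipartition.diagram_injective {ℓ n : ℕ} :
    Function.Injective (Multipartition.diagram : Multipartition ℓ n → Set Node) := by
  intro μ ν h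
  have hpart : μ.part = ν.part := by
    ext l r
    refine eq_of_forall_lt_iff fun c ↦ ?_
    exact Set.ext_iff.1 h (l, r, c)
  cases μ
  cases ν
  simpa using hpart

namespace StdTableau

variable {ℓ n : ℕ} {S T : StdTableau ℓ n} {A B : Node} {j k m : ℕ}

lemma entry_pos_iff : 1 ≤ T.entry A ↔ A ∈ T.shape.diagram := by
  refine ⟨fun h ↦ ?_, fun h ↦ (T.bijOn.mapsTo h).1⟩
  by_contra hA
  rw [T.entry_zero A hA] at h
  omega

lemma entry_le (T : StdTableau ℓ n) (A : Node) : T.entry A ≤ n := by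
  by_cases hA : A ∈ T.shape.diagram
  · exact (T.bijOn.mapsTo hA).2
  · simp [T.entry_zero A hA]

lemma entry_node (T : StdTableau ℓ n) (hk : k ∈ Finset.Icc 1 n) : T.entry (T.node k) = k :=
  Function.invFunOn_eq (T.bijOn.surjOn (Finset.mem_Icc.1 hk))

lemma node_entry (hA : A ∈ T.shape.diagram) : T.node (T.entry A) = A :=
  T.bijOn.invOn_invFunOn.1 hA

lemma node_mem_diagram (T : StdTableau ℓ n) (hk : k ∈ Finset.Icc 1 n) :
    T.node k ∈ T.shape.diagram :=
  Function.invFunOn_mem (T.bijOn.surjOn (Finset.mem_Icc.1 hk))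

lemma node_eq_of_entry_eq (hA : T.entry A = k) (hk : 1 ≤ k) : T.node k = A := by
  rw [← hA, node_entry (entry_pos_iff.1 (hA ▸ hk))]

lemma node_injOn (T : StdTableau ℓ n) : Set.InjOn T.node (Finset.Icc 1 n) := fun j hj k hk h ↦ by
  rw [← T.entry_node hj, h, T.entry_node hk]

lemma entry_injective : Function.Injective (entry : StdTableau ℓ n → Node → ℕ) := by
  intro S T h
  have hshape : S.shape = T.shape := Multipartition.diagram_injective <| Set.ext fun A ↦ by
    rw [← entry_pos_iff, ← entry_pos_iff, h]
  cases S
  cases T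
  simp_all

lemma eq_of_node_eq (h : ∀ k ∈ Finset.Icc 1 n, S.node k = T.node k) : S = T := by
  have le (S T : StdTableau ℓ n) (h : ∀ k ∈ Finset.Icc 1 n, S.node k = T.node k) (A : Node)
      (hA : 1 ≤ S.entry A) : S.entry A = T.entry A := by
    have hk := Finset.mem_Icc.2 ⟨hA, S.entry_le A⟩
    rw [← T.entry_node hk, ← h _ hk, node_entry (entry_pos_iff.1 hA)]
  refine entry_injective (funext fun A ↦ ?_)
  rcases Nat.eq_zero_or_pos (S.entry A) with hS | hS
  · rcases Nat.eq_zero_or_pos (T.entry A) with hT | hT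
    · rw [hS, hT]
    · exact (le T S (fun k hk ↦ (h k hk).symm) A hT).symm
  · exact le S T h A hS

lemma mem_diagram_of_nodeLE (hB : B ∈ T.shape.diagram) (hAB : NodeLE A B) :
    A ∈ T.shape.diagram := by
  obtain ⟨hl, hr, hc⟩ := hAB
  have h : B.2.2 < T.shape.part A.1 A.2.1 := by
    rw [hl]
    exact hB.trans_le (T.shape.antitone _ hr)
  exact hc.trans_lt h

lemma entry_mono (hB : B ∈ T.shape.diagram) (hAB : NodeLE A B) : T.entry A ≤ T.entry B := by
  obtain ⟨l, r, c⟩ := A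
  obtain ⟨l', r', c'⟩ := B
  obtain ⟨rfl, hr, hc⟩ : l = l' ∧ r ≤ r' ∧ c ≤ c' := hAB
  have hmem : (l, r', c) ∈ T.shape.diagram := mem_diagram_of_nodeLE hB ⟨rfl, le_rfl, hc⟩
  calc
    T.entry (l, r, c) ≤ T.entry (l, r', c) := by
      clear hB
      induction r', hr using Nat.le_induction with
      | base => exact le_rfl
      | succ r' _ ih =>
        exact (ih (mem_diagram_of_nodeLE hmem ⟨rfl, r'.le_succ, le_rfl⟩)).trans
          (T.col_inc l r' c hmem).le
    _ ≤ T.entry (l, r', c') := by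
      clear hmem
      induction c', hc using Nat.le_induction with
      | base => exact le_rfl
      | succ c' _ ih => exact (ih (Nat.lt_of_succ_lt hB)).trans (T.row_inc l r' c' hB).le

lemma entry_lt_entry (hB : B ∈ T.shape.diagram) (hAB : NodeLE A B) (hne : A ≠ B) :
    T.entry A < T.entry B :=
  (entry_mono hB hAB).lt_of_ne fun h ↦
    hne (T.bijOn.injOn (mem_diagram_of_nodeLE hB hAB) hB h)

lemma not_nodeLE_of_lt (hj : j ∈ Finset.Icc 1 n) (hk : k ∈ Finset.Icc 1 n) (hjk : j < k) :
    ¬NodeLE (T.node k) (T.node j) := fun h ↦ by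
  have hle := entry_mono (T.node_mem_diagram hj) h
  rw [T.entry_node hj, T.entry_node hk] at hle
  omega

/-- The nodes of `T` occupied by `1, …, m`. -/
noncomputable def nodesUpTo (T : StdTableau ℓ n) (m : ℕ) : Finset Node :=
  (Finset.Icc 1 m).image T.node

lemma card_nodesUpTo_le (T : StdTableau ℓ n) (m : ℕ) : (T.nodesUpTo m).card ≤ m :=
  Finset.card_image_le.trans (by simp)

lemma card_nodesUpTo (T : StdTableau ℓ n) (hm : m ≤ n) : (T.nodesUpTo m).card = m := by
  rw [nodesUpTo, Finset.card_image_of_injOn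
    (T.node_injOn.mono (Finset.coe_subset.2 (Finset.Icc_subset_Icc_right hm)))]
  simp

lemma mem_nodesUpTo (hm : m ≤ n) : A ∈ T.nodesUpTo m ↔ T.entry A ∈ Finset.Icc 1 m := by
  simp only [nodesUpTo, Finset.mem_image]
  constructor
  · rintro ⟨k, hk, rfl⟩
    rwa [T.entry_node (Finset.Icc_subset_Icc_right hm hk)]
  · exact fun hA ↦ ⟨_, hA, node_entry (entry_pos_iff.1 (Finset.mem_Icc.1 hA).1)⟩

lemma mem_nodesUpTo_self : A ∈ T.nodesUpTo n ↔ A ∈ T.shape.diagram := by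
  rw [mem_nodesUpTo le_rfl, Finset.mem_Icc, ← entry_pos_iff, and_iff_left (T.entry_le A)]

lemma node_mem_nodesUpTo (T : StdTableau ℓ n) (hk : 1 ≤ k) (hkm : k ≤ m) :
    T.node k ∈ T.nodesUpTo m :=
  Finset.mem_image_of_mem _ (Finset.mem_Icc.2 ⟨hk, hkm⟩)

lemma isDiagramSet_nodesUpTo (T : StdTableau ℓ n) (hm : m ≤ n) :
    IsDiagramSet ℓ (T.nodesUpTo m : Set Node) := by
  have closed {A B : Node} (hB : B ∈ T.nodesUpTo m) (hAB : NodeLE A B) : A ∈ T.nodesUpTo m := by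
    rw [mem_nodesUpTo hm, Finset.mem_Icc, entry_pos_iff] at hB ⊢
    exact ⟨mem_diagram_of_nodeLE hB.1 hAB, (entry_mono hB.1 hAB).trans hB.2⟩
  refine ⟨Finset.finite_toSet _, fun A hA ↦ ?_, fun l r c h ↦ closed h ?_,
    fun l r c h ↦ closed h ?_⟩
  · by_contra hl
    rw [Finset.mem_coe, mem_nodesUpTo hm, Finset.mem_Icc, entry_pos_iff] at hA
    have hlt : A.2.2 < T.shape.part A.1 A.2.1 := hA.1
    rw [T.shape.comp_bound A.1 (not_lt.1 hl)] at hlt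
    omega
  · simp [NodeLE]
  · simp [NodeLE]

lemma node_bounds (T : StdTableau ℓ n) (hk : k ∈ Finset.Icc 1 n) :
    (T.node k).1 < ℓ ∧ (T.node k).2.1 < n ∧ (T.node k).2.2 < n := by
  obtain ⟨hk₁, hkn⟩ := Finset.mem_Icc.1 hk
  have hD := T.isDiagramSet_nodesUpTo le_rfl
  have hmem := T.node_mem_nodesUpTo hk₁ hkn
  have hlt := hD.row_add_col_lt_card hmem
  rw [T.card_nodesUpTo le_rfl] at hlt
  exact ⟨hD.2.1 _ hmem, by omega, by omega⟩

instance : Finite (StdTableau ℓ n) := by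
  let f (T : StdTableau ℓ n) (k : Finset.Icc 1 n) : Fin ℓ × Fin n × Fin n :=
    (⟨_, (T.node_bounds k.2).1⟩, ⟨_, (T.node_bounds k.2).2.1⟩, ⟨_, (T.node_bounds k.2).2.2⟩)
  refine Finite.of_injective f fun S T h ↦ eq_of_node_eq fun k hk ↦ ?_
  have hk' := congrFun h ⟨k, hk⟩
  simp only [f, Prod.mk.injEq, Fin.mk.injEq] at hk'
  exact Prod.ext hk'.1 (Prod.ext hk'.2.1 hk'.2.2)

noncomputable instance : Fintype (StdTableau ℓ n) :=
  Fintype.ofFinite _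

end StdTableau

section Contents

variable {K : Type*} [Field K] {t : Kˣ} {n ℓ : ℕ} {κ : ℕ → ℤ} {S T : StdTableau ℓ n} {k m : ℕ}

lemma content_eq_nodeContent (κ : ℕ → ℤ) (T : StdTableau ℓ n) (k : ℕ) :
    content κ T k = nodeContent κ (T.node k) := rfl

lemma StdTableau.node_eq_of_nodeLE (hk : k ∈ Finset.Icc 1 n)
    (hlt : ∀ j ∈ Finset.Icc 1 n, j < k → S.node j = T.node j)
    (hle : NodeLE (S.node k) (T.node k)) : S.node k = T.node k := by
  by_contra hne
  have hT := T.node_mem_diagram hk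
  have hentry : T.entry (S.node k) < k := by
    simpa only [T.entry_node hk] using entry_lt_entry hT hle hne
  have hmem : S.node k ∈ T.shape.diagram := mem_diagram_of_nodeLE hT hle
  have hj : T.entry (S.node k) ∈ Finset.Icc 1 n :=
    Finset.mem_Icc.2 ⟨entry_pos_iff.2 hmem, T.entry_le _⟩
  have heq := S.node_injOn hj hk ((hlt _ hj hentry).trans (node_entry hmem))
  omega

lemma SeparatesF.eq_of_content_eq (h : SeparatesF t n ℓ κ)
    (heq : ∀ k ∈ Finset.Icc 1 n, qint (t : K) (content κ S k) = qint (t : K) (content κ T k)) :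
    S = T := by
  refine StdTableau.eq_of_node_eq fun k ↦ ?_
  induction k using Nat.strong_induction_on with
  | _ k ih =>
    intro hk
    obtain ⟨hk₁, hkn⟩ := Finset.mem_Icc.1 hk
    have hsub : S.nodesUpTo k ∪ T.nodesUpTo k ⊆ insert (S.node k) (T.nodesUpTo k) := by
      refine Finset.union_subset (Finset.image_subset_iff.2 fun j hj ↦ ?_)
        (Finset.subset_insert _ _)
      obtain ⟨hj₁, hjk⟩ := Finset.mem_Icc.1 hj
      rcases hjk.eq_or_lt with rfl | hjk'
      · exact Finset.mem_insert_self _ _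
      · rw [ih j hjk' (Finset.mem_Icc.2 ⟨hj₁, by omega⟩)]
        exact Finset.mem_insert_of_mem (T.node_mem_nodesUpTo hj₁ hjk)
    have hcard := (Finset.card_le_card hsub).trans (Finset.card_insert_le _ _)
    rw [T.card_nodesUpTo hkn] at hcard
    have hΓ : IsDiagramSet ℓ ((S.nodesUpTo k ∪ T.nodesUpTo k : Finset Node) : Set Node) := by
      rw [Finset.coe_union]
      exact (S.isDiagramSet_nodesUpTo hkn).union (T.isDiagramSet_nodesUpTo hkn)
    rcases h.nodeLE_total (e := 0) hΓ
      (Finset.mem_union_left _ (S.node_mem_nodesUpTo hk₁ le_rfl))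
      (Finset.mem_union_right _ (T.node_mem_nodesUpTo hk₁ le_rfl)) (by simp)
      (by rw [abs_zero]; omega) (by simpa [content_eq_nodeContent] using heq k hk) with hle | hle
    · exact StdTableau.node_eq_of_nodeLE hk (fun j hj hjk ↦ ih j hjk hj) hle
    · exact (StdTableau.node_eq_of_nodeLE hk (fun j hj hjk ↦ (ih j hjk hj).symm) hle).symm

lemma SeparatesF.qint_content_ne (h : SeparatesF t n ℓ κ) (hk : 1 ≤ k) (hkm : k < m)
    (hmk : m ≤ k + 2) (hmn : m ≤ n) :
    qint (t : K) (content κ T k) ≠ qint (t : K) (content κ T m) := by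
  intro heq
  have hkI : k ∈ Finset.Icc 1 n := Finset.mem_Icc.2 (by omega)
  have hmI : m ∈ Finset.Icc 1 n := Finset.mem_Icc.2 (by omega)
  have hcard := T.card_nodesUpTo_le m
  obtain ⟨hcomp, hdiag⟩ := h.eq_diagonal (e := 0) (T.isDiagramSet_nodesUpTo hmn)
    (T.node_mem_nodesUpTo hk hkm.le) (T.node_mem_nodesUpTo (by omega) le_rfl)
    (by rw [abs_zero]; omega) (by simpa [content_eq_nodeContent] using heq)
  have hnot := StdTableau.not_nodeLE_of_lt (T := T) hkI hmI hkm
  have hmem := T.node_mem_diagram hmI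
  have hentryk := T.entry_node hkI
  have hentrym := T.entry_node hmI
  generalize T.node k = A at *
  generalize T.node m = B at *
  obtain ⟨l, r, c⟩ := A
  obtain ⟨l', r', c'⟩ := B
  simp only [NodeLE] at hcomp hdiag hnot
  have between (X : Node) (hAX : NodeLE (l, r, c) X) (hAX' : (l, r, c) ≠ X)
      (hXB : NodeLE X (l', r', c')) (hXB' : X ≠ (l', r', c')) :
      k < T.entry X ∧ T.entry X < m ∧ X ∈ T.shape.diagram := by
    have hX := StdTableau.mem_diagram_of_nodeLE hmem hXB
    rw [← hentryk, ← hentrym]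
    exact ⟨StdTableau.entry_lt_entry hX hAX hAX', StdTableau.entry_lt_entry hmem hXB hXB', hX⟩
  obtain ⟨hkX, hXm, hX⟩ := between (l, r, c + 1) (by simp [NodeLE]) (by simp)
    (by simp only [NodeLE]; omega) (by simp only [ne_eq, Prod.mk.injEq]; omega)
  obtain ⟨hkY, hYm, hY⟩ := between (l, r + 1, c) (by simp [NodeLE]) (by simp)
    (by simp only [NodeLE]; omega) (by simp only [ne_eq, Prod.mk.injEq]; omega)
  have hXY := T.bijOn.injOn hX hY (by omega)
  simp at hXY

end Contents

/-! ## Relabelling standard tableaux -/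

/-- `V` is obtained from `T` by applying the permutation `σ` to its entries. -/
def IsRelabel {ℓ n : ℕ} (σ : Equiv.Perm ℕ) (V T : StdTableau ℓ n) : Prop :=
  ∀ A, V.entry A = σ (T.entry A)

/-- The permutation `σ` moves only the numbers `1, …, n`. -/
def SupportedIcc (n : ℕ) (σ : Equiv.Perm ℕ) : Prop :=
  {k | σ k ≠ k} ⊆ Finset.Icc 1 n

namespace SupportedIcc

variable {n k : ℕ} {σ τ : Equiv.Perm ℕ}

lemma apply_zero (hσ : SupportedIcc n σ) : σ 0 = 0 := by
  by_contra h
  simpa using hσ h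

lemma apply_mem_iff (hσ : SupportedIcc n σ) : σ k ∈ Finset.Icc 1 n ↔ k ∈ Finset.Icc 1 n := by
  by_cases h : σ k = k
  · rw [h]
  · exact iff_of_true (hσ fun h' ↦ h (σ.injective h')) (hσ h)

lemma mul (hσ : SupportedIcc n σ) (hτ : SupportedIcc n τ) : SupportedIcc n (σ * τ) := by
  intro k hk
  by_cases h : τ k = k
  · exact hσ (by simpa [h] using hk)
  · exact hτ h

lemma swap {r : ℕ} (hr : r ∈ Finset.Ico 1 n) : SupportedIcc n (Equiv.swap r (r + 1)) := by
  intro k hk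
  rw [Finset.mem_Ico] at hr
  by_contra h
  rw [Finset.mem_coe, Finset.mem_Icc] at h
  exact hk (Equiv.swap_apply_of_ne_of_ne (by omega) (by omega))

end SupportedIcc

namespace IsRelabel

variable {ℓ n : ℕ} {S T U V : StdTableau ℓ n} {σ τ : Equiv.Perm ℕ} {j k : ℕ}

lemma inv (h : IsRelabel σ V T) : IsRelabel σ⁻¹ T V := fun A ↦ by
  simp [h A]

lemma mul (h : IsRelabel σ V U) (h' : IsRelabel τ U T) : IsRelabel (σ * τ) V T := fun A ↦ by
  rw [h A, h' A, Equiv.Perm.mul_apply]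

lemma unique (h : IsRelabel σ U T) (h' : IsRelabel σ V T) : U = V :=
  StdTableau.entry_injective (funext fun A ↦ (h A).trans (h' A).symm)

lemma shape_eq (h : IsRelabel σ V T) (hσ : SupportedIcc n σ) : V.shape = T.shape := by
  refine Multipartition.diagram_injective (Set.ext fun A ↦ ?_)
  rw [← StdTableau.entry_pos_iff, ← StdTableau.entry_pos_iff, h A, Nat.one_le_iff_ne_zero,
    Nat.one_le_iff_ne_zero, not_iff_not, ← hσ.apply_zero, σ.injective.eq_iff, hσ.apply_zero]

lemma node_apply (h : IsRelabel σ V T) (hσ : SupportedIcc n σ) (hk : k ∈ Finset.Icc 1 n) :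
    V.node (σ k) = T.node k :=
  StdTableau.node_eq_of_entry_eq (by rw [h, T.entry_node hk])
    (Finset.mem_Icc.1 (hσ.apply_mem_iff.2 hk)).1

lemma content_apply (h : IsRelabel σ V T) (hσ : SupportedIcc n σ) (hk : k ∈ Finset.Icc 1 n)
    (κ : ℕ → ℤ) : content κ V (σ k) = content κ T k := by
  rw [content_eq_nodeContent, content_eq_nodeContent, h.node_apply hσ hk]

lemma lt_of_nodeLE (h : IsRelabel σ V T) (hσ : SupportedIcc n σ) (hj : j ∈ Finset.Icc 1 n)
    (hk : k ∈ Finset.Icc 1 n) (hjk : j ≠ k) (hle : NodeLE (T.node j) (T.node k)) :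
    σ j < σ k := by
  rw [← h.node_apply hσ hj, ← h.node_apply hσ hk] at hle
  have hk' := hσ.apply_mem_iff.2 hk
  have hj' := hσ.apply_mem_iff.2 hj
  have hlt := StdTableau.entry_lt_entry (V.node_mem_diagram hk') hle
    fun heq ↦ hjk (σ.injective (V.node_injOn hj' hk' heq))
  rwa [V.entry_node hj', V.entry_node hk'] at hlt

end IsRelabel

lemma exists_isRelabel {ℓ n : ℕ} {T : StdTableau ℓ n} {σ : Equiv.Perm ℕ} (hσ : SupportedIcc n σ)
    (hlt : ∀ j ∈ Finset.Icc 1 n, ∀ k ∈ Finset.Icc 1 n, j < k →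
      NodeLE (T.node j) (T.node k) → σ j < σ k) :
    ∃ V : StdTableau ℓ n, IsRelabel σ V T := by
  have mono {A B : Node} (hB : B ∈ T.shape.diagram) (hAB : NodeLE A B) (hne : A ≠ B) :
      σ (T.entry A) < σ (T.entry B) := by
    have hA := StdTableau.mem_diagram_of_nodeLE hB hAB
    refine hlt _ (Finset.mem_Icc.2 (T.bijOn.mapsTo hA)) _ (Finset.mem_Icc.2 (T.bijOn.mapsTo hB))
      (StdTableau.entry_lt_entry hB hAB hne) ?_
    rwa [StdTableau.node_entry hA, StdTableau.node_entry hB]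
  refine ⟨⟨T.shape, σ ∘ T.entry, fun A hA ↦ ?_, ?_, fun l r c h ↦ mono h ?_ ?_,
    fun l r c h ↦ mono h ?_ ?_⟩, fun A ↦ rfl⟩
  · rw [Function.comp_apply, T.entry_zero A hA, hσ.apply_zero]
  · refine Set.BijOn.comp ⟨fun k hk ↦ ?_, σ.injective.injOn, fun k hk ↦ ⟨σ⁻¹ k, ?_, by simp⟩⟩
      T.bijOn
    · exact Finset.mem_Icc.1 (hσ.apply_mem_iff.2 (Finset.mem_Icc.2 hk))
    · refine Finset.mem_Icc.1 (hσ.apply_mem_iff.1 ?_)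
      simpa using hk
  all_goals simp [NodeLE]

section Swap

variable {ℓ n : ℕ} {S T V : StdTableau ℓ n} {r : ℕ}

lemma exists_isRelabel_swap (hr : r ∈ Finset.Ico 1 n)
    (h : ¬NodeLE (T.node r) (T.node (r + 1))) :
    ∃ V : StdTableau ℓ n, IsRelabel (Equiv.swap r (r + 1)) V T := by
  refine exists_isRelabel (SupportedIcc.swap hr) fun j _ k _ hjk hle ↦ ?_
  have hne : ¬(j = r ∧ k = r + 1) := by
    rintro ⟨rfl, rfl⟩
    exact h hle
  grind

lemma IsRelabel.not_nodeLE_of_swap (h : IsRelabel (Equiv.swap r (r + 1)) V T)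
    (hr : r ∈ Finset.Ico 1 n) : ¬NodeLE (T.node r) (T.node (r + 1)) := fun hle ↦ by
  rw [Finset.mem_Ico] at hr
  have hlt := h.lt_of_nodeLE (SupportedIcc.swap (Finset.mem_Ico.2 hr))
    (Finset.mem_Icc.2 (by omega)) (Finset.mem_Icc.2 (by omega)) (by omega) hle
  rw [Equiv.swap_apply_left, Equiv.swap_apply_right] at hlt
  omega

/-- No node lies strictly between `T.node r` and `T.node (r + 1)`. -/
lemma StdTableau.content_succ_of_nodeLE (κ : ℕ → ℤ) (hr : r ∈ Finset.Ico 1 n)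
    (hle : NodeLE (T.node r) (T.node (r + 1))) :
    content κ T (r + 1) = content κ T r + 1 ∨ content κ T r = content κ T (r + 1) + 1 := by
  rw [Finset.mem_Ico] at hr
  have hrI : r ∈ Finset.Icc 1 n := Finset.mem_Icc.2 (by omega)
  have hrI' : r + 1 ∈ Finset.Icc 1 n := Finset.mem_Icc.2 (by omega)
  have hne : T.node r ≠ T.node (r + 1) := fun h ↦ by
    have := T.node_injOn hrI hrI' h
    omega
  have hcover (X : Node) (hAX : NodeLE (T.node r) X) (hAX' : T.node r ≠ X)
      (hXB : NodeLE X (T.node (r + 1))) : X = T.node (r + 1) := by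
    by_contra hXB'
    have hmem := T.node_mem_diagram hrI'
    have h₁ := entry_lt_entry (mem_diagram_of_nodeLE hmem hXB) hAX hAX'
    have h₂ := entry_lt_entry hmem hXB hXB'
    rw [T.entry_node hrI] at h₁
    rw [T.entry_node hrI'] at h₂
    omega
  rw [content_eq_nodeContent, content_eq_nodeContent]
  generalize T.node r = A at *
  generalize T.node (r + 1) = B at *
  obtain ⟨l, i, j⟩ := A
  obtain ⟨l', i', j'⟩ := B
  obtain ⟨rfl, hi, hj⟩ : l = l' ∧ i ≤ i' ∧ j ≤ j' := hle
  rcases hi.eq_or_lt with rfl | hi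
  · have hj' : j < j' := hj.lt_of_ne fun h ↦ hne (by rw [h])
    have hX := hcover (l, i, j + 1) (by simp [NodeLE]) (by simp) ⟨rfl, le_rfl, hj'⟩
    left
    rw [← hX]
    simp only [nodeContent]
    push_cast
    ring
  · have hX := hcover (l, i + 1, j) (by simp [NodeLE]) (by simp) ⟨rfl, hi, hj⟩
    right
    rw [← hX]
    simp only [nodeContent]
    push_cast
    ring

lemma SeparatesF.qint_content_ne_of_swap {K : Type*} [Field K] {t : Kˣ} {κ : ℕ → ℤ}
    (h : SeparatesF t n ℓ κ) (hr : r ∈ Finset.Ico 1 n)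
    (hV : IsRelabel (Equiv.swap r (r + 1)) V T) {e : ℤ} (he : |e| = 1) :
    qint (t : K) (content κ T r) ≠ qint (t : K) (content κ T (r + 1) + e) := by
  intro heq
  obtain ⟨hr₁, hrn⟩ := Finset.mem_Ico.1 hr
  have hcard := T.card_nodesUpTo_le (r + 1)
  have hmem : T.node r ∈ T.nodesUpTo (r + 1) := T.node_mem_nodesUpTo hr₁ (Nat.le_add_right r 1)
  rcases h.nodeLE_total (T.isDiagramSet_nodesUpTo (m := r + 1) hrn) hmem
    (T.node_mem_nodesUpTo (by omega) le_rfl) he.le (by omega) heq with hle | hle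
  · exact hV.not_nodeLE_of_swap hr hle
  · exact StdTableau.not_nodeLE_of_lt (Finset.mem_Icc.2 (by omega)) (Finset.mem_Icc.2 (by omega))
      r.lt_succ_self hle

/-- `S` is obtained from `T` by swapping two consecutive entries. -/
def SwapAdj (S T : StdTableau ℓ n) : Prop :=
  ∃ r ∈ Finset.Ico 1 n, IsRelabel (Equiv.swap r (r + 1)) S T

lemma StdTableau.eq_of_entry_node_strictMono (hshape : S.shape = T.shape)
    (hmono : ∀ r ∈ Finset.Ico 1 n, T.entry (S.node r) < T.entry (S.node (r + 1))) : S = T := by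
  have hbound {k : ℕ} (hk : k ∈ Finset.Icc 1 n) : T.entry (S.node k) ∈ Set.Icc 1 n :=
    T.bijOn.mapsTo (hshape ▸ S.node_mem_diagram hk)
  have hge (k : ℕ) (hk : 1 ≤ k) : k ≤ n → k ≤ T.entry (S.node k) := by
    induction k, hk using Nat.le_induction with
    | base => exact fun h ↦ (hbound (Finset.mem_Icc.2 ⟨le_rfl, h⟩)).1
    | succ k hk ih => exact fun h ↦ (ih (by omega)).trans_lt (hmono k (Finset.mem_Ico.2 ⟨hk, h⟩))
  have hle (k : ℕ) (hk : k ≤ n) : 1 ≤ k → T.entry (S.node k) ≤ k := by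
    induction hk using Nat.decreasingInduction with
    | self => exact fun h ↦ (hbound (Finset.mem_Icc.2 ⟨h, le_rfl⟩)).2
    | of_succ k hk ih =>
      exact fun h ↦ Nat.le_of_lt_succ
        ((hmono k (Finset.mem_Ico.2 ⟨h, hk⟩)).trans_le (ih (by omega)))
  refine eq_of_node_eq fun k hk ↦ ?_
  obtain ⟨hk₁, hkn⟩ := Finset.mem_Icc.1 hk
  exact (node_eq_of_entry_eq ((hle k hkn hk₁).antisymm (hge k hk₁ hkn)) hk₁).symm

lemma sum_mul_entry_swap (hr : r ∈ Finset.Ico 1 n)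
    (hV : IsRelabel (Equiv.swap r (r + 1)) V S) :
    ∑ k ∈ Finset.Icc 1 n, (k : ℤ) * T.entry (V.node k) =
      ∑ k ∈ Finset.Icc 1 n, (k : ℤ) * T.entry (S.node k) +
        (T.entry (S.node r) - T.entry (S.node (r + 1))) := by
  have hσ := SupportedIcc.swap hr
  rw [Finset.mem_Ico] at hr
  rw [← sub_eq_iff_eq_add', ← Equiv.Perm.sum_comp _ _ _ hσ, ← Finset.sum_sub_distrib,
    ← Finset.sum_subset (s₁ := {r, r + 1})]
  · have hnode {k : ℕ} (hk : k ∈ Finset.Icc 1 n) := hV.node_apply hσ hk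
    rw [Finset.sum_pair (by omega), hnode (Finset.mem_Icc.2 (by omega)),
      hnode (Finset.mem_Icc.2 (by omega)), Equiv.swap_apply_left, Equiv.swap_apply_right]
    push_cast
    ring
  · intro k hk
    rw [Finset.mem_insert, Finset.mem_singleton] at hk
    exact Finset.mem_Icc.2 (by omega)
  · intro k hk hne
    rw [Finset.mem_insert, Finset.mem_singleton, not_or] at hne
    have hk' := hV.node_apply hσ hk
    rw [Equiv.swap_apply_of_ne_of_ne hne.1 hne.2] at hk' ⊢
    rw [hk', sub_self]

/-- A tableau maximizing `∑ k · T.entry (S.node k)` among those reachable from a given tableau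
can only be `T`, since otherwise some swap would increase the sum. -/
theorem reflTransGen_swapAdj_of_shape_eq (hshape : S.shape = T.shape) :
    Relation.ReflTransGen SwapAdj T S := by
  let potential (V : StdTableau ℓ n) : ℤ := ∑ k ∈ Finset.Icc 1 n, (k : ℤ) * T.entry (V.node k)
  obtain ⟨V, ⟨hVS, hVT⟩, hmax⟩ := Set.exists_max_image
    {V | Relation.ReflTransGen SwapAdj V S ∧ V.shape = T.shape} potential (Set.toFinite _)
    ⟨S, .refl, hshape⟩
  suffices V = T from this ▸ hVS
  refine StdTableau.eq_of_entry_node_strictMono hVT fun r hr ↦ ?_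
  by_contra! hlt
  obtain ⟨hr₁, hrn⟩ := Finset.mem_Ico.1 hr
  have hrI : r ∈ Finset.Icc 1 n := Finset.mem_Icc.2 (by omega)
  have hrI' : r + 1 ∈ Finset.Icc 1 n := Finset.mem_Icc.2 (by omega)
  have hmem : V.node r ∈ T.shape.diagram := hVT ▸ V.node_mem_diagram hrI
  have hmem' : V.node (r + 1) ∈ T.shape.diagram := hVT ▸ V.node_mem_diagram hrI'
  have hne : V.node r ≠ V.node (r + 1) := fun h ↦ by
    have := V.node_injOn hrI hrI' h
    omega
  obtain ⟨U, hU⟩ := exists_isRelabel_swap hr fun hle ↦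
    hlt.not_gt (StdTableau.entry_lt_entry hmem' hle hne)
  have hpot : potential U = potential V + (T.entry (V.node r) - T.entry (V.node (r + 1))) :=
    sum_mul_entry_swap hr hU
  have hle := hmax U ⟨.head ⟨r, hr, hU⟩ hVS, (hU.shape_eq (SupportedIcc.swap hr)).trans hVT⟩
  have heq : T.entry (V.node r) = T.entry (V.node (r + 1)) := by omega
  exact hne (T.bijOn.injOn hmem hmem' heq)

end Swap

/-! ## The seminormal representation -/

section Coefficients

variable {K : Type*} [Field K] {x a b : K}

/-- The coefficient of a basis vector in its image under `T_r` in the seminormal representation,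
where `a` and `b` are its weights for `L_r` and `L_{r+1}` and `x` is the Hecke parameter. -/
def diagCoeff (x a b : K) : K :=
  (1 + (x - 1) * b) / (b - a)

lemma diagCoeff_mul_sub (hab : a ≠ b) : diagCoeff x a b * (b - a) = 1 + (x - 1) * b :=
  div_mul_cancel₀ _ (sub_ne_zero.2 hab.symm)

lemma diagCoeff_add_swap (hab : a ≠ b) : diagCoeff x a b + diagCoeff x b a = x - 1 := by
  refine mul_right_cancel₀ (sub_ne_zero.2 hab.symm) ?_
  linear_combination diagCoeff_mul_sub (x := x) hab - diagCoeff_mul_sub (x := x) hab.symm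

lemma diagCoeff_eq_self_of_eq_succ (hab : a ≠ b) (h : b = x * a + 1) : diagCoeff x a b = x := by
  refine mul_right_cancel₀ (sub_ne_zero.2 hab.symm) ?_
  rw [diagCoeff_mul_sub hab, h]
  ring

lemma one_add_diagCoeff_eq_zero_iff (hab : a ≠ b) : 1 + diagCoeff x a b = 0 ↔ a = x * b + 1 := by
  rw [← mul_left_inj' (sub_ne_zero.2 hab.symm), add_mul, diagCoeff_mul_sub hab, zero_mul]
  constructor <;> intro h <;> linear_combination -h

end Coefficients

/-- The eigenvalue of `L_k` on the seminormal basis vector of `T`. -/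
noncomputable def StdTableau.weight {ℓ n : ℕ} {K : Type*} [Field K] (t : Kˣ) (κ : ℕ → ℤ)
    (T : StdTableau ℓ n) (k : ℕ) : K :=
  qint (t : K) (content κ T k)

/-- Square matrices indexed by the standard tableaux. -/
abbrev TableauMatrix (ℓ n : ℕ) (K : Type*) : Type _ :=
  Matrix (StdTableau ℓ n) (StdTableau ℓ n) K

section Matrices

variable {ℓ n : ℕ} {K : Type*} [Field K] (t : Kˣ) (κ : ℕ → ℤ)

/-- The diagonal entry of the matrix of `T_r` at `T`. -/
noncomputable def StdTableau.coeff (T : StdTableau ℓ n) (r : ℕ) : K :=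
  diagCoeff (t : K) (T.weight t κ r) (T.weight t κ (r + 1))

/-- The matrix of `L_k` in the seminormal representation. -/
noncomputable def jmMatrix (k : ℕ) : TableauMatrix ℓ n K :=
  Matrix.diagonal fun T ↦ T.weight t κ k

/-- The diagonal part of the matrix of `T_r` in the seminormal representation. -/
noncomputable def diagPart (r : ℕ) : TableauMatrix ℓ n K :=
  Matrix.diagonal fun T ↦ T.coeff t κ r

/-- The off-diagonal part of the matrix of `T_r` in the seminormal representation. -/
noncomputable def swapPart (r : ℕ) : TableauMatrix ℓ n K :=
  Matrix.of fun U T ↦ if IsRelabel (Equiv.swap r (r + 1)) U T then 1 + T.coeff t κ r else 0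

/-- The matrix of `T_r` in the seminormal representation. -/
noncomputable def heckeMatrix (r : ℕ) : TableauMatrix ℓ n K :=
  diagPart t κ r + swapPart t κ r

end Matrices

section WeightLemmas

variable {ℓ n : ℕ} {K : Type*} [Field K] {t : Kˣ} {κ : ℕ → ℤ} {T U V : StdTableau ℓ n}
  {σ : Equiv.Perm ℕ} {k r : ℕ}

lemma IsRelabel.weight_apply (h : IsRelabel σ U T) (hσ : SupportedIcc n σ)
    (hk : k ∈ Finset.Icc 1 n) : U.weight t κ (σ k) = T.weight t κ k := by
  rw [StdTableau.weight, h.content_apply hσ hk, StdTableau.weight]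

lemma IsRelabel.weight_swap_left (h : IsRelabel (Equiv.swap r (r + 1)) V T)
    (hr : r ∈ Finset.Ico 1 n) : V.weight t κ r = T.weight t κ (r + 1) := by
  have hr' := Finset.mem_Ico.1 hr
  rw [← h.weight_apply (SupportedIcc.swap hr) (Finset.mem_Icc.2 (by omega)),
    Equiv.swap_apply_right]

lemma IsRelabel.weight_swap_right (h : IsRelabel (Equiv.swap r (r + 1)) V T)
    (hr : r ∈ Finset.Ico 1 n) : V.weight t κ (r + 1) = T.weight t κ r := by
  have hr' := Finset.mem_Ico.1 hr
  rw [← h.weight_apply (SupportedIcc.swap hr) (Finset.mem_Icc.2 (by omega)),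
    Equiv.swap_apply_left]

lemma IsRelabel.weight_swap_of_ne (h : IsRelabel (Equiv.swap r (r + 1)) V T)
    (hr : r ∈ Finset.Ico 1 n) (hk : k ∈ Finset.Icc 1 n) (hkr : k ≠ r) (hkr' : k ≠ r + 1) :
    V.weight t κ k = T.weight t κ k := by
  rw [← h.weight_apply (SupportedIcc.swap hr) hk, Equiv.swap_apply_of_ne_of_ne hkr hkr']

lemma SeparatesF.weight_ne (h : SeparatesF t n ℓ κ) (hr : r ∈ Finset.Ico 1 n) :
    T.weight t κ r ≠ T.weight t κ (r + 1) := by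
  rw [Finset.mem_Ico] at hr
  exact h.qint_content_ne hr.1 r.lt_succ_self (by omega) hr.2

lemma SeparatesF.coeff_add_coeff (h : SeparatesF t n ℓ κ) (hr : r ∈ Finset.Ico 1 n)
    (hV : IsRelabel (Equiv.swap r (r + 1)) V T) :
    V.coeff t κ r + T.coeff t κ r = (t : K) - 1 := by
  rw [add_comm, StdTableau.coeff, StdTableau.coeff, hV.weight_swap_left hr,
    hV.weight_swap_right hr]
  exact diagCoeff_add_swap (h.weight_ne hr)

lemma SeparatesF.coeff_eq_of_nodeLE (h : SeparatesF t n ℓ κ) (hr : r ∈ Finset.Ico 1 n)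
    (hle : NodeLE (T.node r) (T.node (r + 1))) :
    T.coeff t κ r = t ∨ 1 + T.coeff t κ r = 0 := by
  refine (StdTableau.content_succ_of_nodeLE κ hr hle).imp (fun hc ↦ ?_) fun hc ↦ ?_
  · refine diagCoeff_eq_self_of_eq_succ (h.weight_ne hr) ?_
    rw [StdTableau.weight, hc, qint_add_one t.ne_zero, StdTableau.weight]
  · refine (one_add_diagCoeff_eq_zero_iff (h.weight_ne hr)).2 ?_
    rw [StdTableau.weight, hc, qint_add_one t.ne_zero, StdTableau.weight]

lemma SeparatesF.one_add_coeff_ne_zero (h : SeparatesF t n ℓ κ) (hr : r ∈ Finset.Ico 1 n)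
    (hV : IsRelabel (Equiv.swap r (r + 1)) V T) : 1 + T.coeff t κ r ≠ 0 := by
  refine mt (one_add_diagCoeff_eq_zero_iff (h.weight_ne hr)).1 ?_
  rw [StdTableau.weight, StdTableau.weight, ← qint_add_one t.ne_zero]
  exact h.qint_content_ne_of_swap hr hV abs_one

end WeightLemmas

section MatrixRelations

variable {ℓ n : ℕ} {K : Type*} [Field K] {t : Kˣ} {κ : ℕ → ℤ} {T U V : StdTableau ℓ n}
  {σ : Equiv.Perm ℕ} {j k r s : ℕ}

lemma swapPart_apply_of_isRelabel (h : IsRelabel (Equiv.swap r (r + 1)) U T) :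
    swapPart t κ r U T = 1 + T.coeff t κ r :=
  if_pos h

lemma mul_swapPart_apply (X : TableauMatrix ℓ n K)
    (h : IsRelabel (Equiv.swap r (r + 1)) V T) :
    (X * swapPart t κ r : TableauMatrix ℓ n K) U T = X U V * (1 + T.coeff t κ r) := by
  rw [Matrix.mul_apply, Finset.sum_eq_single V, swapPart_apply_of_isRelabel h]
  · intro W _ hW
    rw [swapPart, Matrix.of_apply, if_neg fun hW' ↦ hW (hW'.unique h), mul_zero]
  · exact fun hV ↦ absurd (Finset.mem_univ V) hV

lemma mul_swapPart_apply_eq_zero (X : TableauMatrix ℓ n K)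
    (h : ∀ V, ¬IsRelabel (Equiv.swap r (r + 1)) V T) :
    (X * swapPart t κ r : TableauMatrix ℓ n K) U T = 0 := by
  rw [Matrix.mul_apply]
  exact Finset.sum_eq_zero fun V _ ↦ by rw [swapPart, Matrix.of_apply, if_neg (h V), mul_zero]

lemma jmMatrix_mul_comm (j k : ℕ) :
    (jmMatrix t κ j * jmMatrix t κ k : TableauMatrix ℓ n K) =
      jmMatrix t κ k * jmMatrix t κ j := by
  simp only [jmMatrix, Matrix.diagonal_mul_diagonal, mul_comm]

lemma diagPart_mul_jmMatrix (r k : ℕ) :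
    (diagPart t κ r * jmMatrix t κ k : TableauMatrix ℓ n K) =
      jmMatrix t κ k * diagPart t κ r := by
  simp only [diagPart, jmMatrix, Matrix.diagonal_mul_diagonal, mul_comm]

lemma swapPart_mul_jmMatrix (hr : r ∈ Finset.Ico 1 n) (hk : k ∈ Finset.Icc 1 n) :
    (swapPart t κ r * jmMatrix t κ k : TableauMatrix ℓ n K) =
      jmMatrix t κ (Equiv.swap r (r + 1) k) * swapPart t κ r := by
  ext U T
  rw [jmMatrix, jmMatrix, Matrix.mul_diagonal, Matrix.diagonal_mul, swapPart, Matrix.of_apply]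
  split_ifs with h
  · rw [h.weight_apply (SupportedIcc.swap hr) hk, mul_comm]
  · rw [zero_mul, mul_zero]

lemma SeparatesF.diagPart_mul_sub (h : SeparatesF t n ℓ κ) (hr : r ∈ Finset.Ico 1 n) :
    diagPart t κ r * (jmMatrix t κ (r + 1) - jmMatrix t κ r : TableauMatrix ℓ n K) =
      1 + ((t : K) - 1) • jmMatrix t κ (r + 1) := by
  rw [diagPart, jmMatrix, jmMatrix, Matrix.diagonal_sub, Matrix.diagonal_mul_diagonal,
    ← Matrix.diagonal_smul, ← Matrix.diagonal_one, Matrix.diagonal_add]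
  exact congrArg Matrix.diagonal (funext fun T ↦ diagCoeff_mul_sub (h.weight_ne hr))

lemma SeparatesF.heckeMatrix_mul_jmMatrix_self (h : SeparatesF t n ℓ κ)
    (hr : r ∈ Finset.Ico 1 n) :
    (heckeMatrix t κ r * jmMatrix t κ r : TableauMatrix ℓ n K) =
      jmMatrix t κ (r + 1) * heckeMatrix t κ r - (((t : K) - 1) • jmMatrix t κ (r + 1) + 1) := by
  have hswap := swapPart_mul_jmMatrix (K := K) (t := t) (κ := κ) (ℓ := ℓ) hr (k := r)
    (Finset.mem_Icc.2 (by rw [Finset.mem_Ico] at hr; omega))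
  rw [Equiv.swap_apply_left] at hswap
  rw [heckeMatrix, add_mul, mul_add, hswap, ← diagPart_mul_jmMatrix,
    add_comm _ (1 : TableauMatrix ℓ n K), ← h.diagPart_mul_sub hr, mul_sub]
  abel

lemma SeparatesF.heckeMatrix_mul_jmMatrix_succ (h : SeparatesF t n ℓ κ)
    (hr : r ∈ Finset.Ico 1 n) :
    (heckeMatrix t κ r * jmMatrix t κ (r + 1) : TableauMatrix ℓ n K) =
      jmMatrix t κ r * heckeMatrix t κ r + (((t : K) - 1) • jmMatrix t κ (r + 1) + 1) := by
  have hswap := swapPart_mul_jmMatrix (K := K) (t := t) (κ := κ) (ℓ := ℓ) hr (k := r + 1)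
    (Finset.mem_Icc.2 (by rw [Finset.mem_Ico] at hr; omega))
  rw [Equiv.swap_apply_right] at hswap
  rw [heckeMatrix, add_mul, mul_add, hswap, ← diagPart_mul_jmMatrix,
    add_comm _ (1 : TableauMatrix ℓ n K), ← h.diagPart_mul_sub hr, mul_sub]
  abel

lemma heckeMatrix_mul_jmMatrix_of_ne (hr : r ∈ Finset.Ico 1 n) (hk : k ∈ Finset.Icc 1 n)
    (hkr : k ≠ r) (hkr' : k ≠ r + 1) :
    (heckeMatrix t κ r * jmMatrix t κ k : TableauMatrix ℓ n K) =
      jmMatrix t κ k * heckeMatrix t κ r := by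
  rw [heckeMatrix, add_mul, mul_add, diagPart_mul_jmMatrix, swapPart_mul_jmMatrix hr hk,
    Equiv.swap_apply_of_ne_of_ne hkr hkr']

lemma SeparatesF.diagPart_mul_swapPart_add (h : SeparatesF t n ℓ κ) (hr : r ∈ Finset.Ico 1 n) :
    (diagPart t κ r * swapPart t κ r + swapPart t κ r * diagPart t κ r : TableauMatrix ℓ n K) =
      ((t : K) - 1) • swapPart t κ r := by
  ext U T
  rw [Matrix.add_apply, diagPart, Matrix.diagonal_mul, Matrix.mul_diagonal, Matrix.smul_apply,
    smul_eq_mul, swapPart, Matrix.of_apply]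
  split_ifs with hU
  · rw [← h.coeff_add_coeff hr hU]
    ring
  · ring

lemma SeparatesF.diagPart_sq_add_swapPart_sq (h : SeparatesF t n ℓ κ)
    (hr : r ∈ Finset.Ico 1 n) :
    (diagPart t κ r * diagPart t κ r + swapPart t κ r * swapPart t κ r : TableauMatrix ℓ n K) =
      ((t : K) - 1) • diagPart t κ r + (t : K) • 1 := by
  have hdiag : ((t : K) - 1) • diagPart t κ r + (t : K) • (1 : TableauMatrix ℓ n K) =
      Matrix.diagonal fun T ↦ ((t : K) - 1) * T.coeff t κ r + (t : K) := by
    rw [diagPart, ← Matrix.diagonal_smul, ← Matrix.diagonal_one, ← Matrix.diagonal_smul,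
      Matrix.diagonal_add]
    simp
  ext U T
  rw [hdiag, Matrix.add_apply, diagPart, Matrix.diagonal_mul_diagonal, Matrix.diagonal_apply,
    Matrix.diagonal_apply]
  by_cases hle : NodeLE (T.node r) (T.node (r + 1))
  · rw [mul_swapPart_apply_eq_zero _ fun V hV ↦ hV.not_nodeLE_of_swap hr hle]
    split_ifs with hUT
    · subst hUT
      rcases h.coeff_eq_of_nodeLE hr hle with hc | hc
      · rw [hc]
        ring
      · linear_combination (U.coeff t κ r - t) * hc
    · rw [add_zero]
  · obtain ⟨V, hV⟩ := exists_isRelabel_swap hr hle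
    have hV' : IsRelabel (Equiv.swap r (r + 1)) T V := by simpa using hV.inv
    rw [mul_swapPart_apply _ hV, swapPart, Matrix.of_apply]
    split_ifs with hUT hU hU
    · subst hUT
      linear_combination (1 + U.coeff t κ r) * h.coeff_add_coeff hr hV
    · exact absurd (hUT ▸ hV') hU
    · exact absurd (hU.unique hV') hUT
    · ring

lemma SeparatesF.heckeMatrix_sq (h : SeparatesF t n ℓ κ) (hr : r ∈ Finset.Ico 1 n) :
    (heckeMatrix t κ r * heckeMatrix t κ r : TableauMatrix ℓ n K) =
      ((t : K) - 1) • heckeMatrix t κ r + (t : K) • 1 := by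
  rw [heckeMatrix, smul_add, ← h.diagPart_mul_swapPart_add hr, add_right_comm,
    ← h.diagPart_sq_add_swapPart_sq hr]
  noncomm_ring

end MatrixRelations

/-! ## Braid relations -/

lemma IsRelabel.exists_of_lt {ℓ n : ℕ} {U T : StdTableau ℓ n} {σ : Equiv.Perm ℕ} {r : ℕ}
    (h : IsRelabel σ U T) (hσ : SupportedIcc n σ) (hr : r ∈ Finset.Ico 1 n)
    (hlt : σ (r + 1) < σ r) :
    ∃ V, IsRelabel (Equiv.swap r (r + 1)) V T ∧ IsRelabel (σ * Equiv.swap r (r + 1)) U V := by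
  have hr' := Finset.mem_Ico.1 hr
  obtain ⟨V, hV⟩ := exists_isRelabel_swap hr fun hle ↦ hlt.not_gt <|
    h.lt_of_nodeLE hσ (Finset.mem_Icc.2 (by omega)) (Finset.mem_Icc.2 (by omega)) (by omega) hle
  exact ⟨V, hV, h.mul (by simpa using hV.inv)⟩

lemma swap_mul_swap_comm {r s : ℕ} (h : r + 1 < s) :
    Equiv.swap r (r + 1) * Equiv.swap s (s + 1) = Equiv.swap s (s + 1) * Equiv.swap r (r + 1) := by
  ext k
  simp only [Equiv.Perm.mul_apply]
  grind

lemma swap_braid (r : ℕ) :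
    Equiv.swap r (r + 1) * Equiv.swap (r + 1) (r + 2) * Equiv.swap r (r + 1) =
      Equiv.swap (r + 1) (r + 2) * Equiv.swap r (r + 1) * Equiv.swap (r + 1) (r + 2) := by
  ext k
  simp only [Equiv.Perm.mul_apply]
  grind

/-- The matrix `X` has nonzero entries only at pairs `(U, T)` where `U` is `T` with its entries
permuted by `σ`. -/
def SupportedOnRelabel {ℓ n : ℕ} {K : Type*} [Field K] (σ : Equiv.Perm ℕ)
    (X : TableauMatrix ℓ n K) : Prop :=
  ∀ U T, X U T ≠ 0 → IsRelabel σ U T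

section Braid

variable {ℓ n : ℕ} {K : Type*} [Field K] {t : Kˣ} {κ : ℕ → ℤ} {T U V : StdTableau ℓ n}
  {X Y : TableauMatrix ℓ n K} {σ τ : Equiv.Perm ℕ} {r s : ℕ}

lemma SupportedOnRelabel.mul (hX : SupportedOnRelabel σ X) (hY : SupportedOnRelabel τ Y) :
    SupportedOnRelabel (σ * τ) (X * Y) := fun U T hUT ↦ by
  rw [Matrix.mul_apply] at hUT
  obtain ⟨V, -, hV⟩ := Finset.exists_ne_zero_of_sum_ne_zero hUT
  exact (hX U V (left_ne_zero_of_mul hV)).mul (hY V T (right_ne_zero_of_mul hV))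

lemma supportedOnRelabel_diagPart :
    SupportedOnRelabel 1 (diagPart t κ r : TableauMatrix ℓ n K) := fun U T hUT ↦ by
  rw [diagPart, Matrix.diagonal_apply, ne_eq, ite_eq_right_iff, Classical.not_imp] at hUT
  exact fun A ↦ by rw [hUT.1, Equiv.Perm.one_apply]

lemma supportedOnRelabel_swapPart :
    SupportedOnRelabel (Equiv.swap r (r + 1)) (swapPart t κ r : TableauMatrix ℓ n K) :=
  fun U T hUT ↦ by
    rw [swapPart, Matrix.of_apply, ne_eq, ite_eq_right_iff, Classical.not_imp] at hUT
    exact hUT.1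

lemma SupportedOnRelabel.ext (hX : SupportedOnRelabel σ X) (hY : SupportedOnRelabel σ Y)
    (h : ∀ U T, IsRelabel σ U T → X U T = Y U T) : X = Y := by
  ext U T
  by_cases hUT : IsRelabel σ U T
  · exact h U T hUT
  · rw [of_not_not (mt (hX U T) hUT), of_not_not (mt (hY U T) hUT)]

lemma IsRelabel.coeff_eq_of_far (h : IsRelabel (Equiv.swap s (s + 1)) V T)
    (hr : r ∈ Finset.Ico 1 n) (hs : s ∈ Finset.Ico 1 n) (hrs : r + 1 < s ∨ s + 1 < r) :
    V.coeff t κ r = T.coeff t κ r := by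
  rw [Finset.mem_Ico] at hr
  rw [StdTableau.coeff, StdTableau.coeff,
    h.weight_swap_of_ne hs (Finset.mem_Icc.2 (by omega)) (by omega) (by omega),
    h.weight_swap_of_ne hs (Finset.mem_Icc.2 (by omega)) (by omega) (by omega)]

lemma diagPart_mul_swapPart_of_far (hr : r ∈ Finset.Ico 1 n) (hs : s ∈ Finset.Ico 1 n)
    (hrs : r + 1 < s ∨ s + 1 < r) :
    (diagPart t κ r * swapPart t κ s : TableauMatrix ℓ n K) =
      swapPart t κ s * diagPart t κ r := by
  ext U T
  rw [diagPart, Matrix.diagonal_mul, Matrix.mul_diagonal, swapPart, Matrix.of_apply]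
  split_ifs with h
  · rw [h.coeff_eq_of_far hr hs hrs, mul_comm]
  · rw [zero_mul, mul_zero]

lemma swapPart_mul_swapPart_apply_of_far (hr : r ∈ Finset.Ico 1 n) (hs : s ∈ Finset.Ico 1 n)
    (hrs : r + 1 < s ∨ s + 1 < r)
    (h : IsRelabel (Equiv.swap r (r + 1) * Equiv.swap s (s + 1)) U T) :
    (swapPart t κ r * swapPart t κ s : TableauMatrix ℓ n K) U T =
      (1 + T.coeff t κ r) * (1 + T.coeff t κ s) := by
  obtain ⟨V, hVT, hUV⟩ := h.exists_of_lt ((SupportedIcc.swap hr).mul (.swap hs)) hs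
    (by simp only [Equiv.Perm.mul_apply]; grind)
  rw [mul_assoc, Equiv.swap_mul_self, mul_one] at hUV
  rw [mul_swapPart_apply _ hVT, swapPart_apply_of_isRelabel hUV, hVT.coeff_eq_of_far hr hs hrs]

lemma swapPart_mul_swapPart_comm_of_far (hr : r ∈ Finset.Ico 1 n) (hs : s ∈ Finset.Ico 1 n)
    (hrs : r + 1 < s) :
    (swapPart t κ r * swapPart t κ s : TableauMatrix ℓ n K) = swapPart t κ s * swapPart t κ r := by
  refine (supportedOnRelabel_swapPart.mul supportedOnRelabel_swapPart).ext ?_ fun U T hUT ↦ ?_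
  · exact swap_mul_swap_comm hrs ▸ supportedOnRelabel_swapPart.mul supportedOnRelabel_swapPart
  · rw [swapPart_mul_swapPart_apply_of_far hr hs (.inl hrs) hUT,
      swapPart_mul_swapPart_apply_of_far hs hr (.inr hrs) (swap_mul_swap_comm hrs ▸ hUT), mul_comm]

lemma heckeMatrix_mul_comm_of_far (hr : r ∈ Finset.Ico 1 n) (hs : s ∈ Finset.Ico 1 n)
    (hrs : r + 1 < s) :
    (heckeMatrix t κ r * heckeMatrix t κ s : TableauMatrix ℓ n K) =
      heckeMatrix t κ s * heckeMatrix t κ r := by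
  have hdiag : (diagPart t κ r * diagPart t κ s : TableauMatrix ℓ n K) =
      diagPart t κ s * diagPart t κ r := by
    simp only [diagPart, Matrix.diagonal_mul_diagonal, mul_comm]
  rw [heckeMatrix, heckeMatrix, add_mul, mul_add, mul_add, hdiag,
    diagPart_mul_swapPart_of_far hr hs (.inl hrs), ← diagPart_mul_swapPart_of_far hs hr (.inr hrs),
    swapPart_mul_swapPart_comm_of_far hr hs hrs]
  noncomm_ring

lemma SupportedIcc.swap_braid (hr : 1 ≤ r) (hrn : r + 2 ≤ n) :
    SupportedIcc n
      (Equiv.swap r (r + 1) * Equiv.swap (r + 1) (r + 2) * Equiv.swap r (r + 1)) :=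
  ((SupportedIcc.swap (Finset.mem_Ico.2 (by omega))).mul
    (.swap (Finset.mem_Ico.2 (by omega)))).mul (.swap (Finset.mem_Ico.2 (by omega)))

lemma swapPart_braid_apply_left (hr : 1 ≤ r) (hrn : r + 2 ≤ n)
    (h : IsRelabel
      (Equiv.swap r (r + 1) * Equiv.swap (r + 1) (r + 2) * Equiv.swap r (r + 1)) U T) :
    (swapPart t κ r * swapPart t κ (r + 1) * swapPart t κ r : TableauMatrix ℓ n K) U T =
      (1 + diagCoeff (t : K) (T.weight t κ (r + 1)) (T.weight t κ (r + 2))) *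
        (1 + diagCoeff (t : K) (T.weight t κ r) (T.weight t κ (r + 2))) *
        (1 + diagCoeff (t : K) (T.weight t κ r) (T.weight t κ (r + 1))) := by
  have hr₀ : r ∈ Finset.Ico 1 n := Finset.mem_Ico.2 (by omega)
  have hr₁ : r + 1 ∈ Finset.Ico 1 n := Finset.mem_Ico.2 (by omega)
  obtain ⟨V, hVT, hUV⟩ := h.exists_of_lt (.swap_braid hr hrn) hr₀
    (by simp only [Equiv.Perm.mul_apply]; grind)
  rw [mul_assoc, Equiv.swap_mul_self, mul_one] at hUV
  obtain ⟨W, hWV, hUW⟩ := hUV.exists_of_lt ((SupportedIcc.swap hr₀).mul (.swap hr₁)) hr₁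
    (by simp only [Equiv.Perm.mul_apply]; grind)
  rw [mul_assoc, Equiv.swap_mul_self, mul_one] at hUW
  have hV : V.weight t κ (r + 2) = T.weight t κ (r + 2) :=
    hVT.weight_swap_of_ne hr₀ (Finset.mem_Icc.2 (by omega)) (by omega) (by omega)
  have hW : W.weight t κ r = V.weight t κ r :=
    hWV.weight_swap_of_ne hr₁ (Finset.mem_Icc.2 (by omega)) (by omega) (by omega)
  rw [mul_swapPart_apply _ hVT, mul_swapPart_apply _ hWV, swapPart_apply_of_isRelabel hUW,
    StdTableau.coeff, StdTableau.coeff, StdTableau.coeff, hW, hWV.weight_swap_left hr₁, hV,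
    hVT.weight_swap_left hr₀, hVT.weight_swap_right hr₀]

lemma swapPart_braid_apply_right (hr : 1 ≤ r) (hrn : r + 2 ≤ n)
    (h : IsRelabel
      (Equiv.swap (r + 1) (r + 2) * Equiv.swap r (r + 1) * Equiv.swap (r + 1) (r + 2)) U T) :
    (swapPart t κ (r + 1) * swapPart t κ r * swapPart t κ (r + 1) : TableauMatrix ℓ n K) U T =
      (1 + diagCoeff (t : K) (T.weight t κ r) (T.weight t κ (r + 1))) *
        (1 + diagCoeff (t : K) (T.weight t κ r) (T.weight t κ (r + 2))) *
        (1 + diagCoeff (t : K) (T.weight t κ (r + 1)) (T.weight t κ (r + 2))) := by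
  have hr₀ : r ∈ Finset.Ico 1 n := Finset.mem_Ico.2 (by omega)
  have hr₁ : r + 1 ∈ Finset.Ico 1 n := Finset.mem_Ico.2 (by omega)
  obtain ⟨V, hVT, hUV⟩ := h.exists_of_lt (swap_braid r ▸ .swap_braid hr hrn) hr₁
    (by simp only [Equiv.Perm.mul_apply]; grind)
  rw [mul_assoc, Equiv.swap_mul_self, mul_one] at hUV
  obtain ⟨W, hWV, hUW⟩ := hUV.exists_of_lt ((SupportedIcc.swap hr₁).mul (.swap hr₀)) hr₀
    (by simp only [Equiv.Perm.mul_apply]; grind)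
  rw [mul_assoc, Equiv.swap_mul_self, mul_one] at hUW
  have hV : V.weight t κ r = T.weight t κ r :=
    hVT.weight_swap_of_ne hr₁ (Finset.mem_Icc.2 (by omega)) (by omega) (by omega)
  have hW : W.weight t κ (r + 2) = V.weight t κ (r + 2) :=
    hWV.weight_swap_of_ne hr₀ (Finset.mem_Icc.2 (by omega)) (by omega) (by omega)
  rw [mul_swapPart_apply _ hVT, mul_swapPart_apply _ hWV, swapPart_apply_of_isRelabel hUW,
    StdTableau.coeff, StdTableau.coeff, StdTableau.coeff, hW, hWV.weight_swap_right hr₀, hV,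
    hVT.weight_swap_left hr₁, hVT.weight_swap_right hr₁]

lemma swapPart_braid (hr : 1 ≤ r) (hrn : r + 2 ≤ n) :
    (swapPart t κ r * swapPart t κ (r + 1) * swapPart t κ r : TableauMatrix ℓ n K) =
      swapPart t κ (r + 1) * swapPart t κ r * swapPart t κ (r + 1) := by
  refine ((supportedOnRelabel_swapPart.mul supportedOnRelabel_swapPart).mul
    supportedOnRelabel_swapPart).ext ?_ fun U T hUT ↦ ?_
  · exact swap_braid r ▸ (supportedOnRelabel_swapPart.mul supportedOnRelabel_swapPart).mul
      supportedOnRelabel_swapPart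
  · rw [swapPart_braid_apply_left hr hrn hUT,
      swapPart_braid_apply_right hr hrn (swap_braid r ▸ hUT)]
    ring

lemma heckeMatrix_mul_mul_apply (h₁ : ¬IsRelabel 1 U T)
    (hr : ¬IsRelabel (Equiv.swap r (r + 1)) U T) (hs : ¬IsRelabel (Equiv.swap s (s + 1)) U T)
    (hrs : ¬IsRelabel (Equiv.swap r (r + 1) * Equiv.swap s (s + 1)) U T)
    (hsr : ¬IsRelabel (Equiv.swap s (s + 1) * Equiv.swap r (r + 1)) U T) :
    (heckeMatrix t κ r * heckeMatrix t κ s * heckeMatrix t κ r : TableauMatrix ℓ n K) U T =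
      (swapPart t κ r * swapPart t κ s * swapPart t κ r : TableauMatrix ℓ n K) U T := by
  have vanish {σ : Equiv.Perm ℕ} {X : TableauMatrix ℓ n K} (hX : SupportedOnRelabel σ X)
      (hσ : ¬IsRelabel σ U T) : X U T = 0 := of_not_not (mt (hX U T) hσ)
  have D {i : ℕ} : SupportedOnRelabel 1 (diagPart t κ i : TableauMatrix ℓ n K) :=
    supportedOnRelabel_diagPart
  have B {i : ℕ} : SupportedOnRelabel _ (swapPart t κ i : TableauMatrix ℓ n K) :=
    supportedOnRelabel_swapPart
  simp only [heckeMatrix, add_mul, mul_add, Matrix.add_apply]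
  rw [vanish ((D.mul D).mul D) (by simpa), vanish ((B.mul D).mul D) (by simpa),
    vanish ((D.mul B).mul D) (by simpa), vanish ((B.mul B).mul D) (by simpa),
    vanish ((D.mul D).mul B) (by simpa), vanish ((B.mul D).mul B) (by simpa),
    vanish ((D.mul B).mul B) (by simpa)]
  simp only [zero_add]

lemma weight_eq_of_mul_jmMatrix {j k : ℕ} (hX : X * jmMatrix t κ k = jmMatrix t κ j * X)
    (hUT : X U T ≠ 0) : U.weight t κ j = T.weight t κ k := by
  have hentry := congrFun (congrFun hX U) T
  rw [jmMatrix, jmMatrix, Matrix.mul_diagonal, Matrix.diagonal_mul, mul_comm] at hentry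
  exact (mul_right_cancel₀ hUT hentry).symm

lemma SeparatesF.eq_of_weight_eq (h : SeparatesF t n ℓ κ) {j k : ℕ} (hr : 1 ≤ r)
    (hrn : r + 2 ≤ n) (hj : j ∈ Finset.Icc r (r + 2)) (hk : k ∈ Finset.Icc r (r + 2))
    (heq : T.weight t κ j = T.weight t κ k) : j = k := by
  rw [Finset.mem_Icc] at hj hk
  rcases lt_trichotomy j k with hjk | hjk | hjk
  · exact absurd heq (h.qint_content_ne (by omega) hjk (by omega) (by omega))
  · exact hjk
  · exact absurd heq.symm (h.qint_content_ne (by omega) hjk (by omega) (by omega))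

lemma braid_defect_mul {R A : Type*} [CommRing R] [Ring A] [Algebra R A] {q : R}
    {S T x y z : A}
    (hTx : T * x = y * T - ((q - 1) • y + 1)) (hTy : T * y = x * T + ((q - 1) • y + 1))
    (hTz : T * z = z * T) (hSx : S * x = x * S)
    (hSy : S * y = z * S - ((q - 1) • z + 1)) (hSz : S * z = y * S + ((q - 1) • z + 1))
    (hTT : T * T = (q - 1) • T + q • 1) (hSS : S * S = (q - 1) • S + q • 1) :
    (T * S * T - S * T * S) * x = z * (T * S * T - S * T * S) ∧
      (T * S * T - S * T * S) * z = x * (T * S * T - S * T * S) := by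
  have assoc {a b c : A} (h : a * b = c) (d : A) : a * (b * d) = c * d := by
    rw [← mul_assoc, h]
  constructor <;>
  · simp only [mul_assoc, sub_mul, mul_sub, add_mul, mul_add, hTx, hTz, hSy, hSz, hSx,
      assoc hTx, assoc hTy, assoc hTz, assoc hSy, assoc hSz, assoc hSx, hTT, hSS,
      smul_mul_assoc, mul_smul_comm, mul_one, one_mul, smul_add, smul_sub]
    module

lemma SeparatesF.reverses_of_isRelabel (h : SeparatesF t n ℓ κ) (hr : 1 ≤ r) (hrn : r + 2 ≤ n)
    (hw : U.weight t κ (r + 2) = T.weight t κ r) (hw' : U.weight t κ r = T.weight t κ (r + 2))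
    (hfix : ∀ k, k < r ∨ r + 2 < k → σ k = k) (hσ : IsRelabel σ U T) :
    σ r = r + 2 ∧ σ (r + 2) = r := by
  have hsub : Finset.Icc r (r + 2) ⊆ Finset.Icc 1 n := Finset.Icc_subset_Icc hr hrn
  have hsupp : {k | σ k ≠ k} ⊆ Finset.Icc r (r + 2) := fun k hk ↦ by
    rw [Finset.mem_coe, Finset.mem_Icc]
    by_contra hk'
    exact hk (hfix k (by omega))
  have hmaps {k : ℕ} (hk : k ∈ Finset.Icc r (r + 2)) : σ k ∈ Finset.Icc r (r + 2) := by
    by_cases hσk : σ k = k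
    · rwa [hσk]
    · exact hsupp fun h' ↦ hσk (σ.injective h')
  have hsuppn : SupportedIcc n σ := hsupp.trans (Finset.coe_subset.2 hsub)
  have hmem : r ∈ Finset.Icc r (r + 2) := by simp
  have hmem' : r + 2 ∈ Finset.Icc r (r + 2) := by simp
  constructor
  · refine h.eq_of_weight_eq (T := U) hr hrn (hmaps hmem) hmem' ?_
    rw [hσ.weight_apply hsuppn (hsub hmem), hw]
  · refine h.eq_of_weight_eq (T := U) hr hrn (hmaps hmem') hmem ?_
    rw [hσ.weight_apply hsuppn (hsub hmem'), hw']

/-- The defect `X` of the braid relation intertwines the eigenvalues of `L_r` and `L_{r+2}`. Hence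
`X U T ≠ 0` forces the weights of `U` and `T` to differ by the transposition `(r, r+2)`, and among
the products of diagonal and off-diagonal parts only those of three off-diagonal parts contribute
to `X U T`. -/
lemma SeparatesF.heckeMatrix_braid (h : SeparatesF t n ℓ κ) (hr : 1 ≤ r) (hrn : r + 2 ≤ n) :
    (heckeMatrix t κ r * heckeMatrix t κ (r + 1) * heckeMatrix t κ r : TableauMatrix ℓ n K) =
      heckeMatrix t κ (r + 1) * heckeMatrix t κ r * heckeMatrix t κ (r + 1) := by
  have hr₀ : r ∈ Finset.Ico 1 n := Finset.mem_Ico.2 (by omega)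
  have hr₁ : r + 1 ∈ Finset.Ico 1 n := Finset.mem_Ico.2 (by omega)
  obtain ⟨hleft, hright⟩ := braid_defect_mul (h.heckeMatrix_mul_jmMatrix_self hr₀)
    (h.heckeMatrix_mul_jmMatrix_succ hr₀)
    (heckeMatrix_mul_jmMatrix_of_ne hr₀ (Finset.mem_Icc.2 ⟨by omega, hrn⟩) (by omega) (by omega))
    (heckeMatrix_mul_jmMatrix_of_ne hr₁ (Finset.mem_Icc.2 (by omega)) (by omega) (by omega))
    (h.heckeMatrix_mul_jmMatrix_self hr₁) (h.heckeMatrix_mul_jmMatrix_succ hr₁)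
    (h.heckeMatrix_sq hr₀) (h.heckeMatrix_sq hr₁)
  rw [← sub_eq_zero]
  ext U T
  rw [Matrix.zero_apply]
  by_contra hUT
  have reverses {σ : Equiv.Perm ℕ} := h.reverses_of_isRelabel (σ := σ) hr hrn
    (weight_eq_of_mul_jmMatrix hleft hUT) (weight_eq_of_mul_jmMatrix hright hUT)
  have h₁ : ¬IsRelabel 1 U T := mt (reverses (by simp)) (by simp)
  have hr' : ¬IsRelabel (Equiv.swap r (r + 1)) U T := mt (reverses (by grind)) (by grind)
  have hs : ¬IsRelabel (Equiv.swap (r + 1) (r + 2)) U T := mt (reverses (by grind)) (by grind)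
  have hrs : ¬IsRelabel (Equiv.swap r (r + 1) * Equiv.swap (r + 1) (r + 2)) U T :=
    mt (reverses (by simp only [Equiv.Perm.mul_apply]; grind))
      (by simp only [Equiv.Perm.mul_apply]; grind)
  have hsr : ¬IsRelabel (Equiv.swap (r + 1) (r + 2) * Equiv.swap r (r + 1)) U T :=
    mt (reverses (by simp only [Equiv.Perm.mul_apply]; grind))
      (by simp only [Equiv.Perm.mul_apply]; grind)
  rw [Matrix.sub_apply, heckeMatrix_mul_mul_apply h₁ hr' hs hrs hsr,
    heckeMatrix_mul_mul_apply h₁ hs hr' hsr hrs, swapPart_braid hr hrn, sub_self] at hUT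
  exact hUT rfl

end Braid

/-! ## The image of the seminormal representation -/

lemma StdTableau.exists_node_one_eq {ℓ n : ℕ} (T : StdTableau ℓ n) (hn : 1 ≤ n) :
    ∃ l < ℓ, T.node 1 = (l, 0, 0) := by
  have h1 : 1 ∈ Finset.Icc 1 n := Finset.mem_Icc.2 ⟨le_rfl, hn⟩
  have hle : NodeLE ((T.node 1).1, 0, 0) (T.node 1) := ⟨rfl, Nat.zero_le _, Nat.zero_le _⟩
  have hmem := T.node_mem_diagram h1
  refine ⟨_, (T.node_bounds h1).1, ?_⟩
  by_contra hne
  have hlt := T.entry_lt_entry hmem hle fun h ↦ hne h.symm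
  rw [T.entry_node h1] at hlt
  exact hlt.not_ge (entry_pos_iff.2 (T.mem_diagram_of_nodeLE hmem hle))

section Representation

variable {ℓ n : ℕ} {K : Type*} [Field K] {t : Kˣ} {κ : ℕ → ℤ} {S T : StdTableau ℓ n} {r : ℕ}

lemma StdTableau.exists_weight_one_eq (T : StdTableau ℓ n) (hn : 1 ≤ n) :
    ∃ l < ℓ, T.weight t κ 1 = qint (t : K) (κ l) := by
  obtain ⟨l, hl, hnode⟩ := T.exists_node_one_eq hn
  refine ⟨l, hl, ?_⟩
  rw [StdTableau.weight, content_eq_nodeContent, hnode]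
  simp [nodeContent]

lemma prod_jmMatrix_one_sub_eq_zero (hn : 1 ≤ n) :
    ((List.range ℓ).map fun l ↦
      (jmMatrix t κ 1 : TableauMatrix ℓ n K) - algebraMap K _ (qintU t (κ l))).prod = 0 := by
  have hdiag : ((List.range ℓ).map fun l ↦
      (jmMatrix t κ 1 : TableauMatrix ℓ n K) - algebraMap K _ (qintU t (κ l))) =
      ((List.range ℓ).map fun l (T : StdTableau ℓ n) ↦ T.weight t κ 1 - qint (t : K) (κ l)).map
        (Matrix.diagonalAlgHom K) := by
    rw [List.map_map]
    refine List.map_congr_left fun l _ ↦ ?_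
    rw [Function.comp_apply, Matrix.diagonalAlgHom_apply, jmMatrix, qintU_eq_qint,
      Matrix.algebraMap_eq_diagonal, Matrix.diagonal_sub]
    rfl
  rw [hdiag, ← map_list_prod, ← map_zero (Matrix.diagonalAlgHom K)]
  congr 1
  funext T
  obtain ⟨l, hl, hw⟩ := T.exists_weight_one_eq (t := t) (κ := κ) hn
  refine (map_list_prod (Pi.evalRingHom (fun _ : StdTableau ℓ n ↦ K) T) _).trans ?_
  rw [List.map_map, Pi.zero_apply, List.prod_eq_zero_iff, List.mem_map]
  exact ⟨l, List.mem_range.2 hl, by simp [hw]⟩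

variable (t κ) in
/-- The images of the generators in the seminormal representation; the generators are
`0`-based. -/
noncomputable def generatorMatrix : HeckeGen n → TableauMatrix ℓ n K
  | HeckeGen.L k => jmMatrix t κ (k + 1)
  | HeckeGen.T r => heckeMatrix t κ (r + 1)

lemma lift_generatorMatrix_hL (k : Fin n) :
    FreeAlgebra.lift K (generatorMatrix t κ : _ → TableauMatrix ℓ n K) (hL K k) =
      jmMatrix t κ (k + 1) := by
  rw [hL, FreeAlgebra.lift_ι_apply, generatorMatrix]

lemma lift_generatorMatrix_hT (r : Fin (n - 1)) :
    FreeAlgebra.lift K (generatorMatrix t κ : _ → TableauMatrix ℓ n K) (hT K r) =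
      heckeMatrix t κ (r + 1) := by
  rw [hT, FreeAlgebra.lift_ι_apply, generatorMatrix]

lemma succ_mem_Ico_one (r : Fin (n - 1)) : (r : ℕ) + 1 ∈ Finset.Ico 1 n :=
  Finset.mem_Ico.2 (by omega)

lemma lift_generatorMatrix_eq_of_heckeRel (hs : SeparatesF t n ℓ κ)
    {x y : FreeAlgebra K (HeckeGen n)} (h : HeckeRel K t n ℓ κ x y) :
    FreeAlgebra.lift K (generatorMatrix t κ : _ → TableauMatrix ℓ n K) x =
      FreeAlgebra.lift K (generatorMatrix t κ : _ → TableauMatrix ℓ n K) y := by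
  cases h with
  | cyc hn =>
    rw [map_list_prod, List.map_map, map_zero,
      ← prod_jmMatrix_one_sub_eq_zero (t := t) (κ := κ) hn]
    congr 1
    refine List.map_congr_left fun l _ ↦ ?_
    rw [Function.comp_apply, map_sub, lift_generatorMatrix_hL, AlgHom.commutes]
  | quad r =>
    have hsq := hs.heckeMatrix_sq (succ_mem_Ico_one r)
    rw [map_mul, map_add, map_sub, map_one, map_zero, lift_generatorMatrix_hT, AlgHom.commutes,
      Algebra.algebraMap_eq_smul_one, add_mul, mul_sub, hsq, one_mul, mul_smul_comm, mul_one]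
    module
  | LL j k =>
    simp only [map_mul, lift_generatorMatrix_hL]
    exact jmMatrix_mul_comm _ _
  | TTfar r s hrs =>
    simp only [map_mul, lift_generatorMatrix_hT]
    rcases hrs with hrs | hsr
    · exact heckeMatrix_mul_comm_of_far (succ_mem_Ico_one r) (succ_mem_Ico_one s) (by omega)
    · exact (heckeMatrix_mul_comm_of_far (succ_mem_Ico_one s) (succ_mem_Ico_one r)
        (by omega)).symm
  | braid r s hrs =>
    simp only [map_mul, lift_generatorMatrix_hT, hrs]
    exact hs.heckeMatrix_braid (by omega) (by omega)
  | TL r k hrk =>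
    simp only [map_mul, lift_generatorMatrix_hT, lift_generatorMatrix_hL]
    exact heckeMatrix_mul_jmMatrix_of_ne (succ_mem_Ico_one r) (Finset.mem_Icc.2 (by omega))
      (by omega) (by omega)
  | LT r =>
    simp only [map_mul, map_add, map_sub, map_one, lift_generatorMatrix_hT,
      lift_generatorMatrix_hL, AlgHom.commutes, pR, pL]
    rw [hs.heckeMatrix_mul_jmMatrix_self (succ_mem_Ico_one r), Algebra.algebraMap_eq_smul_one,
      mul_add, mul_sub, mul_smul_comm, mul_one]
    module

/-- The seminormal representation: the direct sum of the seminormal forms of the Specht modules,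
in the basis of all standard tableaux. -/
noncomputable def seminormalRep (hs : SeparatesF t n ℓ κ) :
    CycHecke K t n ℓ κ →ₐ[K] TableauMatrix ℓ n K :=
  RingQuot.liftAlgHom K
    ⟨FreeAlgebra.lift K (generatorMatrix t κ), fun _ _ ↦ lift_generatorMatrix_eq_of_heckeRel hs⟩

lemma seminormalRep_Lgen (hs : SeparatesF t n ℓ κ) (k : Fin n) :
    seminormalRep hs (Lgen K t n ℓ κ k) = jmMatrix t κ (k + 1) := by
  rw [seminormalRep, Lgen, RingQuot.liftAlgHom_mkAlgHom_apply, lift_generatorMatrix_hL]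

lemma seminormalRep_Tgen (hs : SeparatesF t n ℓ κ) (r : Fin (n - 1)) :
    seminormalRep hs (Tgen K t n ℓ κ r) = heckeMatrix t κ (r + 1) := by
  rw [seminormalRep, Tgen, RingQuot.liftAlgHom_mkAlgHom_apply, lift_generatorMatrix_hT]

lemma jmMatrix_mem_range_seminormalRep (hs : SeparatesF t n ℓ κ) {k : ℕ}
    (hk : k ∈ Finset.Icc 1 n) : jmMatrix t κ k ∈ (seminormalRep hs).range := by
  obtain ⟨hk₁, hkn⟩ := Finset.mem_Icc.1 hk
  refine ⟨Lgen K t n ℓ κ ⟨k - 1, by omega⟩, ?_⟩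
  exact (seminormalRep_Lgen hs _).trans (by rw [Nat.sub_add_cancel hk₁])

lemma heckeMatrix_mem_range_seminormalRep (hs : SeparatesF t n ℓ κ)
    (hr : r ∈ Finset.Ico 1 n) : heckeMatrix t κ r ∈ (seminormalRep hs).range := by
  obtain ⟨hr₁, hrn⟩ := Finset.mem_Ico.1 hr
  refine ⟨Tgen K t n ℓ κ ⟨r - 1, by omega⟩, ?_⟩
  exact (seminormalRep_Tgen hs _).trans (by rw [Nat.sub_add_cancel hr₁])

end Representation

lemma piSingle_one_mem_of_separates {ι K : Type*} [Finite ι] [DecidableEq ι] [Field K]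
    (B : Subalgebra K (ι → K)) {i : ι} (h : ∀ j, j ≠ i → ∃ f ∈ B, f j ≠ f i) :
    Pi.single i (1 : K) ∈ B := by
  have := Fintype.ofFinite ι
  choose! f hfB hf using h
  have hprod : ∏ j ∈ Finset.univ.erase i,
      (f j i - f j j)⁻¹ • (f j - algebraMap K (ι → K) (f j j)) = Pi.single i 1 := by
    funext k
    rw [Finset.prod_apply]
    by_cases hk : k = i
    · subst hk
      rw [Pi.single_eq_same]
      exact Finset.prod_eq_one fun j hj ↦
        inv_mul_cancel₀ (sub_ne_zero.2 (hf j (Finset.ne_of_mem_erase hj)).symm)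
    · rw [Pi.single_eq_of_ne hk]
      exact Finset.prod_eq_zero (Finset.mem_erase.2 ⟨hk, Finset.mem_univ k⟩) (by simp)
  rw [← hprod]
  exact Subalgebra.prod_mem B fun j hj ↦ B.smul_mem
    (B.sub_mem (hfB j (Finset.ne_of_mem_erase hj)) (B.algebraMap_mem _)) _

section Image

variable {ℓ n : ℕ} {K : Type*} [Field K] {t : Kˣ} {κ : ℕ → ℤ} {S T : StdTableau ℓ n} {r : ℕ}

lemma single_self_mem_range_seminormalRep (hs : SeparatesF t n ℓ κ) (T : StdTableau ℓ n) :
    Matrix.single T T (1 : K) ∈ (seminormalRep hs).range := by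
  suffices h : Pi.single T (1 : K) ∈
      (seminormalRep hs).range.comap (Matrix.diagonalAlgHom (n := StdTableau ℓ n) K) by
    rwa [Subalgebra.mem_comap, Matrix.diagonalAlgHom_apply, Matrix.diagonal_single] at h
  refine piSingle_one_mem_of_separates _ fun S hST ↦ ?_
  contrapose! hST
  exact hs.eq_of_content_eq fun k hk ↦
    hST (fun U ↦ U.weight t κ k) (jmMatrix_mem_range_seminormalRep hs hk)

lemma heckeMatrix_apply_of_isRelabel (hs : SeparatesF t n ℓ κ) (hr : r ∈ Finset.Ico 1 n)
    (h : IsRelabel (Equiv.swap r (r + 1)) S T) : heckeMatrix t κ r S T = 1 + T.coeff t κ r := by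
  have hne : S ≠ T := by
    rintro rfl
    exact hs.weight_ne hr (h.weight_swap_left hr)
  rw [heckeMatrix, Matrix.add_apply, swapPart_apply_of_isRelabel h, diagPart,
    Matrix.diagonal_apply_ne _ hne, zero_add]

lemma single_mem_range_seminormalRep_of_swapAdj (hs : SeparatesF t n ℓ κ) (h : SwapAdj S T) :
    Matrix.single S T (1 : K) ∈ (seminormalRep hs).range := by
  obtain ⟨r, hr, hST⟩ := h
  have hmem := mul_mem (mul_mem (single_self_mem_range_seminormalRep hs S)
    (heckeMatrix_mem_range_seminormalRep hs hr)) (single_self_mem_range_seminormalRep hs T)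
  rw [Matrix.single_mul_mul_single, one_mul, mul_one,
    heckeMatrix_apply_of_isRelabel hs hr hST] at hmem
  have hscaled := (seminormalRep hs).range.smul_mem hmem (1 + T.coeff t κ r)⁻¹
  rwa [Matrix.smul_single, smul_eq_mul, inv_mul_cancel₀ (hs.one_add_coeff_ne_zero hr hST)]
    at hscaled

lemma single_mem_range_seminormalRep (hs : SeparatesF t n ℓ κ) (hST : S.shape = T.shape) :
    Matrix.single S T (1 : K) ∈ (seminormalRep hs).range := by
  have hpath := reflTransGen_swapAdj_of_shape_eq hST.symm
  clear hST
  induction hpath with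
  | refl => exact single_self_mem_range_seminormalRep hs S
  | tail _ hadj ih =>
    have hmem := mul_mem ih (single_mem_range_seminormalRep_of_swapAdj hs hadj)
    rwa [Matrix.single_mul_single_same, one_mul] at hmem

end Image

/-! ## A spanning set of the cyclotomic Hecke algebra -/

section Algebras

variable {R A : Type*} [CommRing R] [Ring A] [Algebra R A]

lemma pow_mul_eq_mul_pow_add_sum {x y z u : A} (h : y * u = u * x + z) (a : ℕ) :
    y ^ a * u = u * x ^ a + ∑ b ∈ Finset.range a, y ^ b * z * x ^ (a - 1 - b) := by
  induction a with
  | zero => simp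
  | succ a ih =>
    have hsum : ∑ b ∈ Finset.range a, y ^ b * z * x ^ (a - b) =
        (∑ b ∈ Finset.range a, y ^ b * z * x ^ (a - 1 - b)) * x := by
      rw [Finset.sum_mul]
      refine Finset.sum_congr rfl fun b hb ↦ ?_
      rw [Finset.mem_range] at hb
      rw [mul_assoc _ (x ^ _) x, ← pow_succ, show a - 1 - b + 1 = a - b by omega]
    rw [Finset.sum_range_succ, Nat.add_sub_cancel, Nat.sub_self, hsum, pow_succ y, mul_assoc, h,
      mul_add, ← mul_assoc, ih, pow_succ x, pow_zero]
    noncomm_ring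

lemma pow_natDegree_mem_of_aeval_eq_zero {x : A} {p : Polynomial R} (hp : p.Monic)
    (hx : Polynomial.aeval x p = 0) {M : Submodule R A} (hM : ∀ a < p.natDegree, x ^ a ∈ M) :
    x ^ p.natDegree ∈ M := by
  rw [Polynomial.aeval_eq_sum_range, Finset.sum_range_succ, hp.coeff_natDegree, one_smul] at hx
  rw [eq_neg_of_add_eq_zero_right hx]
  exact M.neg_mem (M.sum_mem fun a ha ↦ M.smul_mem _ (hM a (Finset.mem_range.1 ha)))

lemma mul_mem_of_mem_adjoin {s : Set A} {M : Submodule R A} (h : ∀ b ∈ s, ∀ x ∈ M, x * b ∈ M)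
    {b : A} (hb : b ∈ Algebra.adjoin R s) : ∀ x ∈ M, x * b ∈ M := by
  induction hb using Algebra.adjoin_induction with
  | mem b hb => exact h b hb
  | algebraMap c =>
    intro x hx
    rw [← Algebra.commutes, ← Algebra.smul_def]
    exact M.smul_mem c hx
  | add a b _ _ ha hb =>
    intro x hx
    rw [mul_add]
    exact M.add_mem (ha x hx) (hb x hx)
  | mul a b _ _ ha hb =>
    intro x hx
    rw [← mul_assoc]
    exact hb _ (ha x hx)

end Algebras

/-- Sequences `L 0, …, L (n - 1)` and `T 0, …, T (n - 2)` in an algebra which satisfy the relations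
of a cyclotomic Hecke algebra of level `ℓ` with parameter `q`. -/
structure IsHeckeFamily {R A : Type*} [CommRing R] [Ring A] [Algebra R A] (q : Rˣ) (n ℓ : ℕ)
    (L T : ℕ → A) : Prop where
  commute_LL : ∀ {i j}, i < n → j < n → Commute (L i) (L j)
  sq_T : ∀ {i}, i + 1 < n → T i * T i = ((q : R) - 1) • T i + (q : R) • (1 : A)
  commute_TT : ∀ {i j}, i + 1 < n → j + 1 < n → i + 1 < j ∨ j + 1 < i → Commute (T i) (T j)
  braid : ∀ {i}, i + 2 < n → T i * T (i + 1) * T i = T (i + 1) * T i * T (i + 1)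
  commute_TL : ∀ {i k}, i + 1 < n → k < n → k ≠ i → k ≠ i + 1 → Commute (T i) (L k)
  L_mul_T : ∀ {i}, i + 1 < n → L (i + 1) * T i = T i * L i + (((q : R) - 1) • L (i + 1) + 1)
  cyclotomic : 0 < n → ∃ p : Polynomial R, p.Monic ∧ p.natDegree = ℓ ∧ Polynomial.aeval (L 0) p = 0

section Cosets

variable {A : Type*} [Ring A]

/-- The product `T (j + d - 1) * ⋯ * T j`, which lifts a minimal length coset representative of
`S_{j + d}` in `S_{j + d + 1}`. -/
def descProd (T : ℕ → A) (j : ℕ) : ℕ → A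
  | 0 => 1
  | d + 1 => T (j + d) * descProd T j d

variable {T : ℕ → A}

lemma descProd_succ_eq_mul (j d : ℕ) : descProd T j (d + 1) = descProd T (j + 1) d * T j := by
  induction d with
  | zero => simp [descProd]
  | succ d ih => rw [descProd, ih, descProd, mul_assoc, ← add_assoc, add_right_comm]

lemma commute_descProd {x : A} {j d : ℕ} (h : ∀ m, j ≤ m → m < j + d → Commute (T m) x) :
    Commute (descProd T j d) x := by
  induction d with
  | zero => exact Commute.one_left x
  | succ d ih =>
    exact (h _ (by omega) (by omega)).mul_left (ih fun m hm hm' ↦ h m hm (by omega))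

end Cosets

namespace IsHeckeFamily

variable {R A : Type*} [CommRing R] [Ring A] [Algebra R A] {q : Rˣ} {n ℓ : ℕ} {L T : ℕ → A}
  {i j d k : ℕ}

lemma descProd_mul_T (H : IsHeckeFamily q n ℓ L T) (hji : j ≤ i) (hid : i + 1 < j + d)
    (hn : j + d < n) : descProd T j d * T (i + 1) = T i * descProd T j d := by
  induction d with
  | zero => omega
  | succ d ih =>
    rcases lt_or_ge (i + 1) (j + d) with hlt | hge
    · rw [descProd, mul_assoc, ih hlt (by omega), ← mul_assoc, ← mul_assoc,
        (H.commute_TT (i := j + d) (j := i) (by omega) (by omega) (by omega)).eq]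
    · obtain ⟨e, rfl, rfl⟩ : ∃ e, i = j + e ∧ d = e + 1 := ⟨i - j, by omega, by omega⟩
      have hcomm : descProd T j e * T (j + e + 1) = T (j + e + 1) * descProd T j e :=
        commute_descProd fun m _ hm ↦ H.commute_TT (by omega) (by omega) (by omega)
      rw [descProd, descProd, ← add_assoc, mul_assoc, mul_assoc, hcomm, ← mul_assoc, ← mul_assoc,
        ← H.braid (by omega), mul_assoc, mul_assoc]

lemma commute_descProd_L_pow (H : IsHeckeFamily q n ℓ L T) (hij : i < j) (hn : j + d < n) (c : ℕ) :
    Commute (descProd T j d) (L i ^ c) :=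
  (commute_descProd fun _ _ _ ↦
    H.commute_TL (by omega) (by omega) (by omega) (by omega)).pow_right c

lemma descProd_mul_pow_mul_T (H : IsHeckeFamily q n ℓ L T) (hn : i + 1 + d < n) (a : ℕ) :
    descProd T (i + 1) d * L (i + 1) ^ a * T i =
      descProd T i (d + 1) * L i ^ a +
        ∑ b ∈ Finset.range a, L i ^ (a - 1 - b) * (((q : R) - 1) •
          (descProd T (i + 1) d * L (i + 1) ^ (b + 1)) + descProd T (i + 1) d * L (i + 1) ^ b) := by
  rw [mul_assoc, pow_mul_eq_mul_pow_add_sum (H.L_mul_T (by omega)) a, mul_add, ← mul_assoc,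
    ← descProd_succ_eq_mul, Finset.mul_sum]
  congr 1
  refine Finset.sum_congr rfl fun b _ ↦ ?_
  have hL : Commute (L i ^ (a - 1 - b))
      (((q : R) - 1) • (descProd T (i + 1) d * L (i + 1) ^ (b + 1)) +
        descProd T (i + 1) d * L (i + 1) ^ b) := by
    have hC := (H.commute_descProd_L_pow i.lt_succ_self hn (a - 1 - b)).symm
    have hLL (c : ℕ) : Commute (L i ^ (a - 1 - b)) (L (i + 1) ^ c) :=
      (H.commute_LL (by omega) (by omega)).pow_pow _ c
    exact ((hC.mul_right (hLL _)).smul_right _).add_right (hC.mul_right (hLL _))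
  rw [hL.eq, pow_succ]
  simp only [mul_add, add_mul, mul_one, mul_smul_comm, smul_mul_assoc, mul_assoc]

end IsHeckeFamily

section CosetModule

variable (R : Type*) {A : Type*} [CommRing R] [Ring A] [Algebra R A] (L T : ℕ → A)

/-- The subalgebra generated by `L 0, …, L (k - 1)` and `T 0, …, T (k - 2)`. -/
def initialSubalgebra (k : ℕ) : Subalgebra R A :=
  Algebra.adjoin R ({x | ∃ i < k, x = L i} ∪ {x | ∃ i, i + 1 < k ∧ x = T i})

/-- The elements `T (k - 1) * ⋯ * T j * L j ^ a` with `j ≤ k` and `a < ℓ`, which generate the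
subalgebra `initialSubalgebra R L T (k + 1)` over `initialSubalgebra R L T k`. -/
noncomputable def cosetGenerators (ℓ k : ℕ) : Finset A :=
  (Finset.range (k + 1) ×ˢ Finset.range ℓ).image fun p ↦ descProd T p.1 (k - p.1) * L p.1 ^ p.2

/-- The left `initialSubalgebra R L T k`-module generated by the coset generators. -/
noncomputable def cosetModule (ℓ k : ℕ) : Submodule R A :=
  Subalgebra.toSubmodule (initialSubalgebra R L T k) *
    Submodule.span R (cosetGenerators L T ℓ k : Set A)

variable {R L T} {n ℓ i j d a k : ℕ}

lemma L_mem_initialSubalgebra (h : i < k) : L i ∈ initialSubalgebra R L T k :=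
  Algebra.subset_adjoin (Or.inl ⟨i, h, rfl⟩)

lemma T_mem_initialSubalgebra (h : i + 1 < k) : T i ∈ initialSubalgebra R L T k :=
  Algebra.subset_adjoin (Or.inr ⟨i, h, rfl⟩)

lemma card_cosetGenerators_le (L T : ℕ → A) (ℓ k : ℕ) :
    (cosetGenerators L T ℓ k).card ≤ (k + 1) * ℓ :=
  Finset.card_image_le.trans (by simp)

lemma mul_mem_cosetModule {b x : A} (hb : b ∈ initialSubalgebra R L T k)
    (hx : x ∈ cosetModule R L T ℓ k) : b * x ∈ cosetModule R L T ℓ k := by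
  have h := Submodule.mul_mem_mul ((Subalgebra.mem_toSubmodule _).2 hb) hx
  rwa [cosetModule, ← mul_assoc, (Subalgebra.isIdempotentElem_toSubmodule _).eq] at h

lemma descProd_mul_pow_mem_cosetModule (hk : j + d = k) (ha : a < ℓ) :
    descProd T j d * L j ^ a ∈ cosetModule R L T ℓ k := by
  rw [← one_mul (descProd T j d * L j ^ a)]
  refine Submodule.mul_mem_mul (one_mem (initialSubalgebra R L T k)) (Submodule.subset_span ?_)
  refine Finset.mem_image.2 ⟨(j, a), ?_, by simp [← hk]⟩
  simp only [Finset.mem_product, Finset.mem_range]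
  omega

lemma one_mem_cosetModule (hℓ : 1 ≤ ℓ) (k : ℕ) : (1 : A) ∈ cosetModule R L T ℓ k := by
  simpa [descProd] using
    descProd_mul_pow_mem_cosetModule (R := R) (L := L) (T := T) (j := k) (d := 0) (a := 0) rfl hℓ

lemma mul_mem_cosetModule_of_generators {g : A}
    (h : ∀ j d a, j + d = k → a < ℓ → descProd T j d * L j ^ a * g ∈ cosetModule R L T ℓ k)
    {x : A} (hx : x ∈ cosetModule R L T ℓ k) : x * g ∈ cosetModule R L T ℓ k := by
  have hspan : Submodule.span R (cosetGenerators L T ℓ k : Set A) ≤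
      (cosetModule R L T ℓ k).comap (LinearMap.mulRight R g) := by
    refine Submodule.span_le.2 fun u hu ↦ ?_
    obtain ⟨⟨j, a⟩, hja, rfl⟩ := Finset.mem_image.1 (Finset.mem_coe.1 hu)
    simp only [Finset.mem_product, Finset.mem_range] at hja
    exact h j (k - j) a (by omega) hja.2
  rw [cosetModule] at hx
  induction hx using Submodule.mul_induction_on' with
  | mem_mul_mem b hb u hu =>
    rw [mul_assoc]
    exact mul_mem_cosetModule hb (hspan hu)
  | add x _ y _ hx hy =>
    rw [add_mul]
    exact add_mem hx hy

end CosetModule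

namespace IsHeckeFamily

variable {R A : Type*} [CommRing R] [Ring A] [Algebra R A] {q : Rˣ} {n ℓ : ℕ} {L T : ℕ → A}
  {i j d a k : ℕ} {x : A}

lemma descProd_mul_pow_mul_T_mem_of_succ_eq (H : IsHeckeFamily q n ℓ L T) (hk : i + 1 + d = k)
    (hkn : k < n) (ha : a < ℓ) :
    descProd T (i + 1) d * L (i + 1) ^ a * T i ∈ cosetModule R L T ℓ k := by
  rw [H.descProd_mul_pow_mul_T (by omega)]
  refine add_mem (descProd_mul_pow_mem_cosetModule (by omega) ha) (sum_mem fun b hb ↦ ?_)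
  rw [Finset.mem_range] at hb
  exact mul_mem_cosetModule (pow_mem (L_mem_initialSubalgebra (by omega)) _)
    (add_mem (Submodule.smul_mem _ _ (descProd_mul_pow_mem_cosetModule hk (by omega)))
      (descProd_mul_pow_mem_cosetModule hk (by omega)))

lemma descProd_mul_pow_mul_T_mem_of_eq (H : IsHeckeFamily q n ℓ L T) (hk : i + 1 + d = k)
    (hkn : k < n) (ha : a < ℓ) :
    descProd T i (d + 1) * L i ^ a * T i ∈ cosetModule R L T ℓ k := by
  have hT {b : ℕ} (hb : b < ℓ) := H.descProd_mul_pow_mul_T_mem_of_succ_eq hk hkn hb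
  rw [eq_sub_of_add_eq (H.descProd_mul_pow_mul_T (by omega) a).symm, sub_mul, Finset.sum_mul]
  refine sub_mem ?_ (sum_mem fun b hb ↦ ?_)
  · rw [mul_assoc, H.sq_T (by omega), mul_add, mul_smul_comm, mul_smul_comm, mul_one]
    exact add_mem (Submodule.smul_mem _ _ (hT ha))
      (Submodule.smul_mem _ _ (descProd_mul_pow_mem_cosetModule hk ha))
  · rw [Finset.mem_range] at hb
    rw [mul_assoc, add_mul, smul_mul_assoc]
    exact mul_mem_cosetModule (pow_mem (L_mem_initialSubalgebra (by omega)) _)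
      (add_mem (Submodule.smul_mem _ _ (hT (by omega))) (hT (by omega)))

lemma mul_T_mem_cosetModule (H : IsHeckeFamily q n ℓ L T) (hkn : k < n) (hi : i < k)
    (hx : x ∈ cosetModule R L T ℓ k) : x * T i ∈ cosetModule R L T ℓ k := by
  refine mul_mem_cosetModule_of_generators (fun j d a hk ha ↦ ?_) hx
  have hmem := descProd_mul_pow_mem_cosetModule (R := R) (L := L) (T := T) hk ha
  rcases lt_trichotomy i j with hij | rfl | hji
  · rcases Nat.succ_le_iff.2 hij |>.eq_or_lt with rfl | hij
    · exact H.descProd_mul_pow_mul_T_mem_of_succ_eq hk hkn ha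
    · have hL := (H.commute_TL (i := i) (k := j) (by omega) (by omega) (by omega)
        (by omega)).pow_right a
      have hC : Commute (descProd T j d) (T i) :=
        commute_descProd fun m _ _ ↦ H.commute_TT (by omega) (by omega) (by omega)
      rw [(hC.mul_left hL.symm).eq]
      exact mul_mem_cosetModule (T_mem_initialSubalgebra (by omega)) hmem
  · obtain ⟨e, rfl⟩ : ∃ e, d = e + 1 := ⟨d - 1, by omega⟩
    exact H.descProd_mul_pow_mul_T_mem_of_eq (by omega) hkn ha
  · obtain ⟨i, rfl⟩ : ∃ e, i = e + 1 := ⟨i - 1, by omega⟩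
    have hL := (H.commute_TL (i := i + 1) (k := j) (by omega) (by omega) (by omega)
      (by omega)).pow_right a
    rw [mul_assoc, ← hL.eq, ← mul_assoc, H.descProd_mul_T (by omega) (by omega) (by omega),
      mul_assoc]
    exact mul_mem_cosetModule (T_mem_initialSubalgebra (by omega)) hmem

lemma mul_L_zero_mem_cosetModule (H : IsHeckeFamily q n ℓ L T) (hkn : k < n)
    (hx : x ∈ cosetModule R L T ℓ k) : x * L 0 ∈ cosetModule R L T ℓ k := by
  refine mul_mem_cosetModule_of_generators (fun j d a hk ha ↦ ?_) hx
  rcases Nat.eq_zero_or_pos j with rfl | hj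
  · rw [mul_assoc, ← pow_succ]
    rcases (Nat.succ_le_iff.2 ha).eq_or_lt with hal | hal
    · obtain ⟨p, hp, hdeg, hroot⟩ := H.cyclotomic (by omega)
      have hpow := pow_natDegree_mem_of_aeval_eq_zero hp hroot
        (M := (cosetModule R L T ℓ k).comap (LinearMap.mulLeft R (descProd T 0 d)))
        fun b hb ↦ descProd_mul_pow_mem_cosetModule hk (hdeg ▸ hb)
      rw [hdeg] at hpow
      rw [show a + 1 = ℓ from hal]
      exact hpow
    · exact descProd_mul_pow_mem_cosetModule hk hal
  · have hC := H.commute_descProd_L_pow hj (d := d) (by omega) 1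
    have hL := (H.commute_LL (i := j) (j := 0) (by omega) (by omega)).pow_left a
    rw [pow_one] at hC
    rw [(hC.mul_left hL).eq]
    exact mul_mem_cosetModule (L_mem_initialSubalgebra (by omega))
      (descProd_mul_pow_mem_cosetModule hk ha)

lemma L_succ_eq (H : IsHeckeFamily q n ℓ L T) (hi : i + 1 < n) :
    L (i + 1) = (↑q⁻¹ : R) • (T i * L i * T i + T i) := by
  have h : L (i + 1) * T i * T i = (T i * L i + (((q : R) - 1) • L (i + 1) + 1)) * T i := by
    rw [H.L_mul_T hi]
  rw [mul_assoc, H.sq_T hi, mul_add, mul_smul_comm, mul_smul_comm, mul_one, add_mul, add_mul,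
    smul_mul_assoc, one_mul, add_left_comm, add_right_inj] at h
  rw [← h, smul_smul, Units.inv_mul, one_smul]

lemma mul_L_mem_cosetModule (H : IsHeckeFamily q n ℓ L T) (hkn : k < n) (hi : i ≤ k)
    (hx : x ∈ cosetModule R L T ℓ k) : x * L i ∈ cosetModule R L T ℓ k := by
  induction i generalizing x with
  | zero => exact H.mul_L_zero_mem_cosetModule hkn hx
  | succ i ih =>
    have hxT := H.mul_T_mem_cosetModule hkn hi hx
    rw [H.L_succ_eq (by omega), mul_smul_comm, mul_add, ← mul_assoc, ← mul_assoc]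
    exact Submodule.smul_mem _ _
      (add_mem (H.mul_T_mem_cosetModule hkn hi (ih (by omega) hxT)) hxT)

lemma initialSubalgebra_succ_le (H : IsHeckeFamily q n ℓ L T) (hℓ : 1 ≤ ℓ) (hkn : k < n) :
    Subalgebra.toSubmodule (initialSubalgebra R L T (k + 1)) ≤ cosetModule R L T ℓ k := by
  intro b hb
  have hmul := mul_mem_of_mem_adjoin (M := cosetModule R L T ℓ k) (fun g hg x hx ↦ ?_)
    ((Subalgebra.mem_toSubmodule _).1 hb) 1 (one_mem_cosetModule hℓ k)
  · rwa [one_mul] at hmul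
  · rcases hg with ⟨i, hi, rfl⟩ | ⟨i, hi, rfl⟩
    · exact H.mul_L_mem_cosetModule hkn (by omega) hx
    · exact H.mul_T_mem_cosetModule hkn (by omega) hx

theorem exists_finset_span_initialSubalgebra (H : IsHeckeFamily q n ℓ L T) (hℓ : 1 ≤ ℓ)
    (hkn : k ≤ n) :
    ∃ s : Finset A, s.card ≤ ℓ ^ k * k.factorial ∧
      Subalgebra.toSubmodule (initialSubalgebra R L T k) ≤ Submodule.span R (s : Set A) := by
  induction k with
  | zero =>
    have hbot : initialSubalgebra R L T 0 = ⊥ := by simp [initialSubalgebra]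
    exact ⟨{1}, by simp, by
      rw [hbot, Algebra.toSubmodule_bot, Finset.coe_singleton, Submodule.one_eq_span]⟩
  | succ k ih =>
    obtain ⟨s, hcard, hspan⟩ := ih (by omega)
    refine ⟨Finset.image₂ (· * ·) s (cosetGenerators L T ℓ k), ?_, ?_⟩
    · calc (Finset.image₂ (· * ·) s (cosetGenerators L T ℓ k)).card
          ≤ s.card * (cosetGenerators L T ℓ k).card := Finset.card_image₂_le _ _ _
        _ ≤ ℓ ^ k * k.factorial * ((k + 1) * ℓ) :=
          Nat.mul_le_mul hcard (card_cosetGenerators_le L T ℓ k)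
        _ = ℓ ^ (k + 1) * (k + 1).factorial := by rw [Nat.factorial_succ, pow_succ]; ring
    · calc Subalgebra.toSubmodule (initialSubalgebra R L T (k + 1))
          ≤ cosetModule R L T ℓ k := H.initialSubalgebra_succ_le hℓ (by omega)
        _ ≤ Submodule.span R (s : Set A) * Submodule.span R (cosetGenerators L T ℓ k : Set A) :=
          mul_le_mul' hspan le_rfl
        _ = Submodule.span R (Finset.image₂ (· * ·) s (cosetGenerators L T ℓ k) : Set A) := by
          rw [Submodule.span_mul_span, Finset.coe_image₂]
          rfl

end IsHeckeFamily

section Generators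

lemma mul_self_eq_of_add_one_mul_sub_eq_zero {R A : Type*} [CommRing R] [Ring A] [Algebra R A]
    {q : R} {x : A} (h : (x + 1) * (x - algebraMap R A q) = 0) :
    x * x = (q - 1) • x + q • (1 : A) := by
  rw [add_mul, mul_sub, one_mul, ← Algebra.commutes, ← Algebra.smul_def,
    Algebra.algebraMap_eq_smul_one] at h
  rw [sub_smul, one_smul, ← sub_eq_zero, ← h]
  abel

lemma mul_eq_of_mul_sub_add_one_eq {R A : Type*} [CommRing R] [Ring A] [Algebra R A]
    {q : R} {x y z : A} (h : y * (x - algebraMap R A q + 1) = z + 1) :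
    y * x = z + ((q - 1) • y + 1) := by
  rw [mul_add, mul_sub, mul_one, ← Algebra.commutes, ← Algebra.smul_def, ← sub_eq_zero] at h
  rw [sub_smul, one_smul, ← sub_eq_zero, ← h]
  abel

variable (R : Type*) [CommRing R] (t : Rˣ) (n ℓ : ℕ) (κ : ℕ → ℤ)

/-- The generators `L` of the cyclotomic Hecke algebra, as a sequence extended by `0`. -/
noncomputable def seqL (i : ℕ) : CycHecke R t n ℓ κ :=
  if h : i < n then Lgen R t n ℓ κ ⟨i, h⟩ else 0

/-- The generators `T` of the cyclotomic Hecke algebra, as a sequence extended by `0`. -/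
noncomputable def seqT (i : ℕ) : CycHecke R t n ℓ κ :=
  if h : i < n - 1 then Tgen R t n ℓ κ ⟨i, h⟩ else 0

variable {R t n ℓ κ}

lemma mkAlgHom_hL (k : Fin n) :
    RingQuot.mkAlgHom R (HeckeRel R t n ℓ κ) (hL R k) = seqL R t n ℓ κ k := by
  rw [seqL, dif_pos k.2]
  rfl

lemma mkAlgHom_hT (r : Fin (n - 1)) :
    RingQuot.mkAlgHom R (HeckeRel R t n ℓ κ) (hT R r) = seqT R t n ℓ κ r := by
  rw [seqT, dif_pos r.2]
  rfl

lemma aeval_seqL_zero (hn : 0 < n) :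
    Polynomial.aeval (seqL R t n ℓ κ 0)
      (∏ l ∈ Finset.range ℓ, (Polynomial.X - Polynomial.C (qintU t (κ l)))) = 0 := by
  have hrel := RingQuot.mkAlgHom_rel R (HeckeRel.cyc (R := R) (t := t) (ℓ := ℓ) (κ := κ) hn)
  rw [map_zero, map_list_prod, List.map_map] at hrel
  rw [← List.toFinset_range, List.prod_toFinset _ List.nodup_range, ← hrel, map_list_prod,
    List.map_map]
  congr 1
  refine List.map_congr_left fun l _ ↦ ?_
  simp only [Function.comp_apply, map_sub, Polynomial.aeval_X, Polynomial.aeval_C, mkAlgHom_hL,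
    AlgHom.commutes]

lemma isHeckeFamily_seq [Nontrivial R] :
    IsHeckeFamily t n ℓ (seqL R t n ℓ κ) (seqT R t n ℓ κ) where
  commute_LL {i j} hi hj := by
    have h := RingQuot.mkAlgHom_rel R
      (HeckeRel.LL (R := R) (t := t) (ℓ := ℓ) (κ := κ) ⟨i, hi⟩ ⟨j, hj⟩)
    simpa only [commute_iff_eq, map_mul, mkAlgHom_hL] using h
  sq_T {i} hi := by
    have h := RingQuot.mkAlgHom_rel R
      (HeckeRel.quad (R := R) (t := t) (n := n) (ℓ := ℓ) (κ := κ) ⟨i, by omega⟩)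
    simp only [map_mul, map_add, map_sub, map_one, map_zero, mkAlgHom_hT, AlgHom.commutes] at h
    exact mul_self_eq_of_add_one_mul_sub_eq_zero h
  commute_TT {i j} hi hj hij := by
    have h := RingQuot.mkAlgHom_rel R
      (HeckeRel.TTfar (R := R) (t := t) (n := n) (ℓ := ℓ) (κ := κ) ⟨i, by omega⟩ ⟨j, by omega⟩ hij)
    simpa only [commute_iff_eq, map_mul, mkAlgHom_hT] using h
  braid {i} hi := by
    have h := RingQuot.mkAlgHom_rel R (HeckeRel.braid (R := R) (t := t) (n := n) (ℓ := ℓ) (κ := κ)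
      ⟨i, by omega⟩ ⟨i + 1, by omega⟩ rfl)
    simpa only [map_mul, mkAlgHom_hT] using h
  commute_TL {i k} hi hk hki hki' := by
    have h := RingQuot.mkAlgHom_rel R
      (HeckeRel.TL (R := R) (t := t) (ℓ := ℓ) (κ := κ) ⟨i, by omega⟩ ⟨k, hk⟩ ⟨hki, hki'⟩)
    simpa only [commute_iff_eq, map_mul, mkAlgHom_hT, mkAlgHom_hL] using h
  L_mul_T {i} hi := by
    have h := RingQuot.mkAlgHom_rel R
      (HeckeRel.LT (R := R) (t := t) (n := n) (ℓ := ℓ) (κ := κ) ⟨i, by omega⟩)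
    simp only [map_mul, map_add, map_sub, map_one, mkAlgHom_hT, mkAlgHom_hL, AlgHom.commutes, pL,
      pR] at h
    exact mul_eq_of_mul_sub_add_one_eq h
  cyclotomic hn := by
    refine ⟨_, Polynomial.monic_prod_X_sub_C _ _, ?_, aeval_seqL_zero hn⟩
    rw [Polynomial.natDegree_finsetProd_X_sub_C_eq_card, Finset.card_range]

lemma initialSubalgebra_seq_eq_top :
    initialSubalgebra R (seqL R t n ℓ κ) (seqT R t n ℓ κ) n = ⊤ := by
  rw [eq_top_iff, ← AlgHom.range_eq_top _ |>.2 (RingQuot.mkAlgHom_surjective R _),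
    ← Algebra.map_top, ← FreeAlgebra.adjoin_range_ι, AlgHom.map_adjoin, Algebra.adjoin_le_iff]
  rintro _ ⟨_, ⟨g, rfl⟩, rfl⟩
  cases g with
  | L k => exact mkAlgHom_hL (t := t) k ▸ L_mem_initialSubalgebra k.2
  | T r => exact mkAlgHom_hT (t := t) r ▸ T_mem_initialSubalgebra (by omega)

end Generators

theorem finite_cycHecke_and_finrank_le {K : Type*} [Field K] {t : Kˣ} {n ℓ : ℕ} {κ : ℕ → ℤ}
    (hℓ : 1 ≤ ℓ) :
    Module.Finite K (CycHecke K t n ℓ κ) ∧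
      Module.finrank K (CycHecke K t n ℓ κ) ≤ ℓ ^ n * n.factorial := by
  obtain ⟨s, hcard, hspan⟩ :=
    (isHeckeFamily_seq (t := t) (κ := κ)).exists_finset_span_initialSubalgebra hℓ (le_refl n)
  rw [initialSubalgebra_seq_eq_top, Algebra.top_toSubmodule, top_le_iff] at hspan
  refine ⟨⟨s, hspan⟩, ?_⟩
  rw [← finrank_top, ← hspan]
  exact (finrank_span_finset_le_card s).trans hcard

/-! ## Path counts in differential posets -/

section Paths

variable {α : Type*} (r : α → α → Prop) [DecidableRel r] (P : ℕ → Finset α)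

/-- The number of chains `x₀, …, x_k = x` with `x_i ∈ P i` in which consecutive terms are related
by `r`, for `x ∈ P k`. -/
noncomputable def pathCount : ℕ → α → ℕ
  | 0, _ => 1
  | k + 1, x => ∑ z ∈ P k with r z x, pathCount k z

/-- The up and down operators `U`, `D` of the graded relation `r` on the levels `P k` satisfy
`D U - U D ≥ d` entrywise. Equality, for the covering relation of a graded poset, defines Stanley's
`d`-differential posets. -/
structure IsDifferential [DecidableEq α] (d : ℕ) : Prop where
  le_up_zero : ∀ x ∈ P 0, d ≤ {w ∈ P 1 | r x w}.card
  down_add_le_up : ∀ k, ∀ x ∈ P (k + 1), ∀ y ∈ P (k + 1),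
    {z ∈ P k | r z x ∧ r z y}.card + (if x = y then d else 0) ≤
      {w ∈ P (k + 2) | r x w ∧ r y w}.card

lemma sum_filter_sum_filter_comm (s u : Finset α) (f : α → ℕ) (x : α) :
    ∑ w ∈ s with r x w, ∑ y ∈ u with r y w, f y =
      ∑ y ∈ u, {w ∈ s | r x w ∧ r y w}.card * f y := by
  simp_rw [Finset.sum_filter (s := u)]
  rw [Finset.sum_comm]
  simp_rw [← Finset.sum_filter, Finset.sum_const, Finset.filter_filter, smul_eq_mul]

variable {r P} [DecidableEq α] {d : ℕ}

lemma IsDifferential.mul_pathCount_le_sum (h : IsDifferential r P d) (k : ℕ) :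
    ∀ x ∈ P k, d * (k + 1) * pathCount r P k x ≤
      ∑ w ∈ P (k + 1) with r x w, pathCount r P (k + 1) w := by
  induction k with
  | zero =>
    intro x hx
    have hpos : ∀ w ∈ {w ∈ P 1 | r x w}, 1 ≤ pathCount r P 1 w := fun w hw ↦ by
      simp only [pathCount, Finset.sum_const, smul_eq_mul, mul_one]
      exact Finset.card_pos.2 ⟨x, Finset.mem_filter.2 ⟨hx, (Finset.mem_filter.1 hw).2⟩⟩
    simpa [pathCount] using
      (h.le_up_zero x hx).trans ((mul_one _).ge.trans (Finset.card_nsmul_le_sum _ _ _ hpos))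
  | succ k ih =>
    intro x hx
    calc d * (k + 1 + 1) * pathCount r P (k + 1) x
        = ∑ z ∈ P k with r z x, d * (k + 1) * pathCount r P k z + d * pathCount r P (k + 1) x := by
          rw [← Finset.mul_sum, pathCount]
          ring
      _ ≤ ∑ z ∈ P k with r z x, ∑ y ∈ P (k + 1) with r z y, pathCount r P (k + 1) y +
            d * pathCount r P (k + 1) x :=
          Nat.add_le_add_right
            (Finset.sum_le_sum fun z hz ↦ ih z (Finset.mem_filter.1 hz).1) _
      _ = ∑ y ∈ P (k + 1), ({z ∈ P k | r z x ∧ r z y}.card + if x = y then d else 0) *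
            pathCount r P (k + 1) y := by
          rw [sum_filter_sum_filter_comm (fun a b ↦ r b a)]
          simp_rw [add_mul, Finset.sum_add_distrib, ite_mul, zero_mul]
          rw [Finset.sum_ite_eq, if_pos hx]
      _ ≤ ∑ y ∈ P (k + 1), {w ∈ P (k + 2) | r x w ∧ r y w}.card * pathCount r P (k + 1) y :=
          Finset.sum_le_sum fun y hy ↦ Nat.mul_le_mul_right _ (h.down_add_le_up k x hx y hy)
      _ = ∑ w ∈ P (k + 2) with r x w, pathCount r P (k + 2) w :=
          (sum_filter_sum_filter_comm r _ _ _ x).symm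

theorem IsDifferential.pow_mul_factorial_le_sum (h : IsDifferential r P d) (k : ℕ) :
    d ^ k * k.factorial * (P 0).card ≤ ∑ x ∈ P k, pathCount r P k x ^ 2 := by
  induction k with
  | zero => simp [pathCount]
  | succ k ih =>
    calc d ^ (k + 1) * (k + 1).factorial * (P 0).card
        = d * (k + 1) * (d ^ k * k.factorial * (P 0).card) := by
          rw [Nat.factorial_succ]
          ring
      _ ≤ d * (k + 1) * ∑ x ∈ P k, pathCount r P k x ^ 2 := Nat.mul_le_mul_left _ ih
      _ = ∑ x ∈ P k, pathCount r P k x * (d * (k + 1) * pathCount r P k x) := by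
          rw [Finset.mul_sum]
          exact Finset.sum_congr rfl fun x _ ↦ by ring
      _ ≤ ∑ x ∈ P k, pathCount r P k x *
            ∑ w ∈ P (k + 1) with r x w, pathCount r P (k + 1) w :=
          Finset.sum_le_sum fun x hx ↦ Nat.mul_le_mul_left _ (h.mul_pathCount_le_sum k x hx)
      _ = ∑ w ∈ P (k + 1), pathCount r P (k + 1) w ^ 2 := by
          simp_rw [Finset.mul_sum, Finset.sum_filter]
          rw [Finset.sum_comm]
          simp_rw [← Finset.sum_filter, ← Finset.sum_mul, sq, pathCount]

end Paths

/-! ## Young's lattice of multipartitions -/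

/-- The diagrams of `ℓ`-multipartitions of `k`. -/
noncomputable def diagrams (ℓ k : ℕ) : Finset (Finset Node) :=
  {D ∈ (Finset.range ℓ ×ˢ Finset.range k ×ˢ Finset.range k).powersetCard k |
    IsDiagramSet ℓ (D : Set Node)}

lemma mem_diagrams {ℓ k : ℕ} {D : Finset Node} :
    D ∈ diagrams ℓ k ↔ IsDiagramSet ℓ (D : Set Node) ∧ D.card = k := by
  rw [diagrams, Finset.mem_filter, Finset.mem_powersetCard]
  refine ⟨fun h ↦ ⟨h.2, h.1.2⟩, fun h ↦ ⟨⟨fun A hA ↦ ?_, h.2⟩, h.1⟩⟩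
  have hlt := h.1.row_add_col_lt_card hA
  rw [h.2] at hlt
  simp only [Finset.mem_product, Finset.mem_range]
  exact ⟨h.1.2.1 A hA, by omega, by omega⟩

/-- The length of the row `r` of the component `l` of a diagram. -/
noncomputable def rowLength (D : Finset Node) (l r : ℕ) : ℕ :=
  {A ∈ D | A.1 = l ∧ A.2.1 = r}.card

/-- The rows `(l, r)` of a diagram which are longer than the following row. -/
noncomputable def descentRows (ℓ : ℕ) (D : Finset Node) : Finset (ℕ × ℕ) :=
  {p ∈ Finset.range ℓ ×ˢ Finset.range D.card | rowLength D p.1 (p.2 + 1) < rowLength D p.1 p.2}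

namespace IsDiagramSet

variable {ℓ k l r c : ℕ} {D : Finset Node}

lemma mem_iff_lt_rowLength (hD : IsDiagramSet ℓ (D : Set Node)) :
    (l, r, c) ∈ D ↔ c < rowLength D l r := by
  constructor
  · intro h
    rw [← Nat.succ_le_iff, Nat.succ_eq_add_one, ← card_rowSegment (l, r, c)]
    refine Finset.card_le_card fun B hB ↦ Finset.mem_filter.2
      ⟨hD.segments_subset h (Finset.mem_union_left _ hB), ?_⟩
    simp only [rowSegment, Finset.mem_product, Finset.mem_singleton] at hB
    exact ⟨hB.1, hB.2.1⟩
  · contrapose!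
    intro h
    have hsub : {A ∈ D | A.1 = l ∧ A.2.1 = r} ⊆ {l} ×ˢ {r} ×ˢ Finset.range c := by
      rintro ⟨l', r', c'⟩ hA
      obtain ⟨hmem, rfl, rfl⟩ := Finset.mem_filter.1 hA
      simp only [Finset.mem_product, Finset.mem_singleton, Finset.mem_range, true_and]
      by_contra! hc
      exact h (hD.mem_of_nodeLE hmem ⟨rfl, le_rfl, hc⟩)
    simpa [rowLength] using Finset.card_le_card hsub

lemma insert_rowLength (hD : IsDiagramSet ℓ (D : Set Node)) (hl : l < ℓ)
    (hr : ∀ r', r = r' + 1 → rowLength D l r < rowLength D l r') :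
    IsDiagramSet ℓ (insert (l, r, rowLength D l r) D : Finset Node) := by
  refine ⟨Finset.finite_toSet _, ?_, fun l' r' c' h ↦ ?_, fun l' r' c' h ↦ ?_⟩
  · simp only [Finset.mem_coe, Finset.forall_mem_insert]
    exact ⟨hl, hD.2.1⟩
  · simp only [Finset.mem_coe, Finset.mem_insert, hD.mem_iff_lt_rowLength] at h ⊢
    grind
  · simp only [Finset.mem_coe, Finset.mem_insert, hD.mem_iff_lt_rowLength] at h ⊢
    rcases h with h | h
    · grind
    · exact Or.inr (hD.mem_iff_lt_rowLength.1 (hD.2.2.2 _ _ _ (hD.mem_iff_lt_rowLength.2 h)))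

lemma rowLength_of_insert {F : Finset Node} {A : Node} (hF : IsDiagramSet ℓ (F : Set Node))
    (hA : A ∉ F) (hD : IsDiagramSet ℓ ((insert A F : Finset Node) : Set Node)) :
    A.2.2 + 1 = rowLength (insert A F) A.1 A.2.1 ∧
      rowLength (insert A F) A.1 (A.2.1 + 1) ≤ A.2.2 := by
  obtain ⟨l, r, c⟩ := A
  have notMem {B : Node} (hne : B ≠ (l, r, c)) (hle : NodeLE (l, r, c) B) :
      B ∉ insert (l, r, c) F := fun hB ↦
    hA (hF.mem_of_nodeLE ((Finset.mem_insert.1 hB).resolve_left hne) hle)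
  have right : (l, r, c + 1) ∉ insert (l, r, c) F := notMem (by simp) (by simp [NodeLE])
  have below : (l, r + 1, c) ∉ insert (l, r, c) F := notMem (by simp) (by simp [NodeLE])
  have hmem := Finset.mem_insert_self (l, r, c) F
  rw [hD.mem_iff_lt_rowLength] at right below hmem
  exact ⟨le_antisymm hmem (not_lt.1 right), not_lt.1 below⟩

end IsDiagramSet

section Covers

variable {ℓ k : ℕ} {D D' : Finset Node}

lemma card_subdiagrams_le (hD : D ∈ diagrams ℓ (k + 1)) :
    {F ∈ diagrams ℓ k | F ⊆ D}.card ≤ (descentRows ℓ D).card := by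
  refine Finset.card_le_card_of_surjOn
    (fun p ↦ D.erase (p.1, p.2, rowLength D p.1 p.2 - 1)) fun F hF ↦ ?_
  obtain ⟨hFk, hFD⟩ := Finset.mem_filter.1 (Finset.mem_coe.1 hF)
  rw [mem_diagrams] at hD hFk
  obtain ⟨A, hA, rfl⟩ := Finset.exists_eq_insert_iff.2 ⟨hFD, by rw [hFk.2, hD.2]⟩
  obtain ⟨hright, hbelow⟩ := hFk.1.rowLength_of_insert hA hD.1
  have hmem := Finset.mem_insert_self A F
  have hlt := hD.1.row_add_col_lt_card hmem
  refine ⟨(A.1, A.2.1), ?_, ?_⟩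
  · simp only [descentRows, Finset.coe_filter, Finset.mem_product, Finset.mem_range,
      Set.mem_ofPred_eq]
    exact ⟨⟨hD.1.2.1 A hmem, by omega⟩, by omega⟩
  · simp only [← hright, Nat.add_sub_cancel]
    exact Finset.erase_insert hA

lemma card_descentRows_add_le (hD : D ∈ diagrams ℓ k) :
    (descentRows ℓ D).card + ℓ ≤ {E ∈ diagrams ℓ (k + 1) | D ⊆ E}.card := by
  let row : (ℕ × ℕ) ⊕ ℕ → ℕ × ℕ := Sum.elim (fun p ↦ (p.1, p.2 + 1)) (fun l ↦ (l, 0))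
  rw [mem_diagrams] at hD
  have notMem (p : ℕ × ℕ) : (p.1, p.2, rowLength D p.1 p.2) ∉ D := by
    simp [hD.1.mem_iff_lt_rowLength]
  rw [← Finset.card_range ℓ, ← Finset.card_disjSum, Finset.card_range ℓ]
  refine Finset.card_le_card_of_injOn
    (fun x ↦ insert ((row x).1, (row x).2, rowLength D (row x).1 (row x).2) D) ?_ ?_
  · intro x hx
    refine Finset.mem_filter.2 ⟨mem_diagrams.2 ⟨?_, ?_⟩, Finset.subset_insert _ _⟩
    · rcases x with p | l
      · simp only [descentRows, Finset.mem_coe, Finset.inl_mem_disjSum, Finset.mem_filter,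
          Finset.mem_product, Finset.mem_range] at hx
        exact hD.1.insert_rowLength hx.1.1 fun r' hr' ↦ Nat.succ_injective hr' ▸ hx.2
      · simp only [Finset.mem_coe, Finset.inr_mem_disjSum, Finset.mem_range] at hx
        exact hD.1.insert_rowLength hx fun r' hr' ↦ absurd hr' (Nat.succ_ne_zero r').symm
    · rw [Finset.card_insert_of_notMem (notMem _), hD.2]
  · intro x _ y _ hxy
    have hrow := (Finset.insert_inj (notMem _)).1 hxy
    rcases x with p | l <;> rcases y with q | m <;> grind

lemma card_lower_bounds_le_card_upper_bounds (hD : D ∈ diagrams ℓ (k + 1))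
    (hD' : D' ∈ diagrams ℓ (k + 1)) (hne : D ≠ D') :
    {F ∈ diagrams ℓ k | F ⊆ D ∧ F ⊆ D'}.card ≤ {E ∈ diagrams ℓ (k + 2) | D ⊆ E ∧ D' ⊆ E}.card := by
  rcases Finset.eq_empty_or_nonempty {F ∈ diagrams ℓ k | F ⊆ D ∧ F ⊆ D'} with hempty | ⟨F, hF⟩
  · simp [hempty]
  rw [mem_diagrams] at hD hD'
  have hinter : (D ∩ D').card ≤ k := by
    have hle := Finset.card_le_card (Finset.inter_subset_left (s₁ := D) (s₂ := D'))
    by_contra! hlt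
    have h₁ := Finset.eq_of_subset_of_card_le
      (Finset.inter_subset_left (s₁ := D) (s₂ := D')) (by omega)
    have h₂ := Finset.eq_of_subset_of_card_le
      (Finset.inter_subset_right (s₁ := D) (s₂ := D')) (by omega)
    exact hne (h₁.symm.trans h₂)
  have eq_inter {G : Finset Node} (hG : G ∈ {F ∈ diagrams ℓ k | F ⊆ D ∧ F ⊆ D'}) :
      G = D ∩ D' := by
    obtain ⟨hG, hsub⟩ := Finset.mem_filter.1 hG
    refine Finset.eq_of_subset_of_card_le (Finset.subset_inter hsub.1 hsub.2) ?_
    rwa [(mem_diagrams.1 hG).2]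
  have hcard := Finset.card_union_add_card_inter D D'
  rw [← eq_inter hF, (mem_diagrams.1 (Finset.mem_filter.1 hF).1).2] at hcard
  refine (Finset.card_le_one.2 fun G hG G' hG' ↦ (eq_inter hG).trans (eq_inter hG').symm).trans ?_
  refine Finset.card_pos.2 ⟨D ∪ D', Finset.mem_filter.2
    ⟨mem_diagrams.2 ⟨?_, by omega⟩, Finset.subset_union_left, Finset.subset_union_right⟩⟩
  rw [Finset.coe_union]
  exact hD.1.union hD'.1

end Covers

lemma isDifferential_diagrams (ℓ : ℕ) : IsDifferential (· ⊆ ·) (diagrams ℓ) ℓ where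
  le_up_zero D hD := le_of_add_le_right (card_descentRows_add_le hD)
  down_add_le_up k D hD D' hD' := by
    rcases eq_or_ne D D' with rfl | hne
    · simp only [and_self, if_true]
      exact (Nat.add_le_add_right (card_subdiagrams_le hD) ℓ).trans
        (card_descentRows_add_le hD)
    · rw [if_neg hne, add_zero]
      exact card_lower_bounds_le_card_upper_bounds hD hD' hne

/-! ## Counting standard tableaux -/

section Shapes

variable {ℓ n : ℕ} {D : Finset Node}

lemma sum_rowLength_eq_card (hD : D ∈ diagrams ℓ n) :
    ∑ l ∈ Finset.range ℓ, ∑ r ∈ Finset.range n, rowLength D l r = n := by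
  rw [mem_diagrams] at hD
  have hmaps : Set.MapsTo (fun A : Node ↦ (A.1, A.2.1)) (D : Set Node)
      (Finset.range ℓ ×ˢ Finset.range n : Finset (ℕ × ℕ)) := fun A hA ↦ by
    have hlt := hD.1.row_add_col_lt_card hA
    simp only [Finset.coe_product, Finset.coe_range, Set.mem_prod, Set.mem_Iio]
    exact ⟨hD.1.2.1 A hA, by omega⟩
  refine Eq.trans ?_ ((Finset.card_eq_sum_card_fiberwise hmaps).symm.trans hD.2)
  rw [← Finset.sum_product']
  exact Finset.sum_congr rfl fun p _ ↦ by simp only [rowLength, Prod.ext_iff]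

lemma exists_diagram_eq (hD : D ∈ diagrams ℓ n) :
    ∃ μ : Multipartition ℓ n, μ.diagram = (D : Set Node) := by
  have hsum := sum_rowLength_eq_card hD
  rw [mem_diagrams] at hD
  have mem_of_pos {l r : ℕ} (h : rowLength D l r ≠ 0) : (l, r, 0) ∈ D :=
    hD.1.mem_iff_lt_rowLength.2 (Nat.pos_of_ne_zero h)
  refine ⟨⟨rowLength D, fun l hl r ↦ ?_, fun l ↦ ?_, fun l r hr ↦ ?_, hsum⟩, ?_⟩
  · by_contra h
    exact absurd (hD.1.2.1 _ (mem_of_pos h)) (not_lt.2 hl)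
  · exact antitone_nat_of_succ_le fun r ↦ le_of_forall_lt fun c hc ↦
      hD.1.mem_iff_lt_rowLength.1 (hD.1.2.2.2 _ _ _ (hD.1.mem_iff_lt_rowLength.2 hc))
  · by_contra h
    exact absurd (hD.1.row_add_col_lt_card (mem_of_pos h)) (by simp [hD.2, hr])
  · ext A
    exact hD.1.mem_iff_lt_rowLength.symm

end Shapes

namespace StdTableau

variable {ℓ n k : ℕ} {D E : Finset Node}

lemma nodesUpTo_mem_diagrams (T : StdTableau ℓ n) : T.nodesUpTo n ∈ diagrams ℓ n :=
  mem_diagrams.2 ⟨T.isDiagramSet_nodesUpTo le_rfl, T.card_nodesUpTo le_rfl⟩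

lemma coe_nodesUpTo_self (T : StdTableau ℓ n) : (T.nodesUpTo n : Set Node) = T.shape.diagram :=
  Set.ext fun _ ↦ mem_nodesUpTo_self

lemma nodesUpTo_eq_iff_shape_eq {S T : StdTableau ℓ n} :
    S.nodesUpTo n = T.nodesUpTo n ↔ S.shape = T.shape := by
  rw [← Finset.coe_inj, coe_nodesUpTo_self, coe_nodesUpTo_self,
    Multipartition.diagram_injective.eq_iff]

instance : Inhabited (StdTableau ℓ 0) where
  default :=
    { shape := ⟨fun _ _ ↦ 0, by simp, fun _ ↦ antitone_const, by simp, by simp⟩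
      entry := fun _ ↦ 0
      entry_zero := fun _ _ ↦ rfl
      bijOn := by simp [Multipartition.diagram]
      row_inc := by simp [Multipartition.diagram]
      col_inc := by simp [Multipartition.diagram] }

lemma update_entry_lt_update_entry {T : StdTableau ℓ k} {A B C : Node}
    (hA : A ∉ T.shape.diagram) (hC : C ∈ insert A T.shape.diagram)
    (hBC : NodeLE B C) (hne : B ≠ C) :
    Function.update T.entry A (k + 1) B < Function.update T.entry A (k + 1) C := by
  rcases hC with rfl | hC
  · rw [Function.update_self, Function.update_of_ne hne]
    exact Nat.lt_succ_of_le (T.entry_le B)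
  · have hB := mem_diagram_of_nodeLE hC hBC
    rw [Function.update_of_ne (ne_of_mem_of_not_mem hB hA),
      Function.update_of_ne (ne_of_mem_of_not_mem hC hA)]
    exact entry_lt_entry hC hBC hne

/-- Reducing modulo `k + 1` deletes the entry `k + 1`. -/
lemma exists_extension (T : StdTableau ℓ k) (hE : E ∈ diagrams ℓ (k + 1))
    (hTE : T.nodesUpTo k ⊆ E) :
    ∃ T' : StdTableau ℓ (k + 1), T'.nodesUpTo (k + 1) = E ∧
      ∀ B, T.entry B = T'.entry B % (k + 1) := by
  obtain ⟨μ, hμ⟩ := exists_diagram_eq hE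
  obtain ⟨A, hA, rfl⟩ := Finset.exists_eq_insert_iff.2
    ⟨hTE, by rw [T.card_nodesUpTo le_rfl, (mem_diagrams.1 hE).2]⟩
  rw [mem_nodesUpTo_self] at hA
  rw [Finset.coe_insert, coe_nodesUpTo_self] at hμ
  have hIcc : insert (k + 1) (Set.Icc 1 k) = Set.Icc 1 (k + 1) := by
    ext
    simp only [Set.mem_insert_iff, Set.mem_Icc]
    omega
  have hbij := (T.bijOn.congr fun B hB ↦
    (Function.update_of_ne (ne_of_mem_of_not_mem hB hA) (k + 1) T.entry).symm).insert
    (a := A) (by simp)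
  rw [Function.update_self, hIcc, ← hμ] at hbij
  have hlt {B C : Node} (hC : C ∈ μ.diagram) := update_entry_lt_update_entry (B := B) hA (hμ ▸ hC)
  refine ⟨⟨μ, Function.update T.entry A (k + 1), fun B hB ↦ ?_, hbij,
    fun l r c h ↦ hlt h (by simp [NodeLE]) (by simp),
    fun l r c h ↦ hlt h (by simp [NodeLE]) (by simp)⟩, ?_, fun B ↦ ?_⟩
  · rw [hμ, Set.mem_insert_iff, not_or] at hB
    rw [Function.update_of_ne hB.1, T.entry_zero B hB.2]
  · rw [← Finset.coe_inj, coe_nodesUpTo_self, hμ, Finset.coe_insert, coe_nodesUpTo_self]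
  · rcases eq_or_ne B A with rfl | hne
    · simp [T.entry_zero B hA]
    · simp only [Function.update_of_ne hne]
      rw [Nat.mod_eq_of_lt (Nat.lt_succ_of_le (T.entry_le B))]

lemma card_nodesUpTo_subset_le (hE : E ∈ diagrams ℓ (k + 1)) :
    Finset.card {T : StdTableau ℓ k | T.nodesUpTo k ⊆ E} ≤
      Finset.card {T : StdTableau ℓ (k + 1) | T.nodesUpTo (k + 1) = E} := by
  choose ext hshape hentry using fun T : {T : StdTableau ℓ k // T.nodesUpTo k ⊆ E} ↦
    T.1.exists_extension hE T.2
  rw [← Fintype.card_subtype, ← Fintype.card_subtype]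
  refine Fintype.card_le_of_injective (fun T ↦ ⟨ext T, hshape T⟩) fun S T h ↦ Subtype.ext ?_
  have hext : ext S = ext T := congrArg Subtype.val h
  exact entry_injective (funext fun B ↦ by rw [hentry S, hentry T, hext])

lemma pathCount_le_card (k : ℕ) : ∀ D ∈ diagrams ℓ k,
    pathCount (· ⊆ ·) (diagrams ℓ) k D ≤ Finset.card {T : StdTableau ℓ k | T.nodesUpTo k = D} := by
  induction k with
  | zero =>
    intro D hD
    have hempty : D = ∅ := Finset.card_eq_zero.1 (mem_diagrams.1 hD).2
    exact Finset.card_pos.2 ⟨default, by simp [hempty, nodesUpTo]⟩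
  | succ k ih =>
    intro E hE
    calc ∑ D ∈ diagrams ℓ k with D ⊆ E, pathCount (· ⊆ ·) (diagrams ℓ) k D
        ≤ ∑ D ∈ diagrams ℓ k with D ⊆ E,
            Finset.card {T : StdTableau ℓ k | T.nodesUpTo k = D} :=
          Finset.sum_le_sum fun D hD ↦ ih D (Finset.mem_filter.1 hD).1
      _ = ∑ D ∈ diagrams ℓ k with D ⊆ E,
            Finset.card {T ∈ {T : StdTableau ℓ k | T.nodesUpTo k ⊆ E} | T.nodesUpTo k = D} := by
          refine Finset.sum_congr rfl fun D hD ↦ congrArg _ ?_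
          ext T
          simp only [Finset.mem_filter, Finset.mem_univ, true_and, iff_and_self] at hD ⊢
          exact fun h ↦ h ▸ hD.2
      _ = Finset.card {T : StdTableau ℓ k | T.nodesUpTo k ⊆ E} := by
          refine (Finset.card_eq_sum_card_fiberwise fun T hT ↦ ?_).symm
          simp only [Finset.coe_filter, Finset.mem_univ, true_and, Set.mem_ofPred_eq] at hT ⊢
          exact ⟨T.nodesUpTo_mem_diagrams, hT⟩
      _ ≤ Finset.card {T : StdTableau ℓ (k + 1) | T.nodesUpTo (k + 1) = E} :=
          card_nodesUpTo_subset_le hE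

theorem pow_mul_factorial_le_card_pairs (ℓ n : ℕ) :
    ℓ ^ n * n.factorial ≤
      Fintype.card {p : StdTableau ℓ n × StdTableau ℓ n // p.1.shape = p.2.shape} := by
  have hzero : (diagrams ℓ 0).card = 1 := Finset.card_eq_one.2 ⟨∅, by
    ext D
    simp only [mem_diagrams, Finset.card_eq_zero, Finset.mem_singleton, and_iff_right_iff_imp]
    rintro rfl
    simpa using IsDiagramSet.empty⟩
  calc ℓ ^ n * n.factorial
      ≤ ∑ D ∈ diagrams ℓ n, pathCount (· ⊆ ·) (diagrams ℓ) n D ^ 2 := by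
        simpa only [hzero, mul_one] using (isDifferential_diagrams ℓ).pow_mul_factorial_le_sum n
    _ ≤ ∑ D ∈ diagrams ℓ n, Finset.card {T : StdTableau ℓ n | T.nodesUpTo n = D} ^ 2 :=
        Finset.sum_le_sum fun D hD ↦ Nat.pow_le_pow_left (pathCount_le_card n D hD) 2
    _ = ∑ D ∈ diagrams ℓ n, Finset.card
          {p ∈ {p : StdTableau ℓ n × StdTableau ℓ n | p.1.shape = p.2.shape} |
            p.1.nodesUpTo n = D} := by
        refine Finset.sum_congr rfl fun D _ ↦ ?_
        rw [sq, ← Finset.card_product]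
        congr 1
        ext p
        simp only [Finset.mem_product, Finset.mem_filter, Finset.mem_univ, true_and,
          ← nodesUpTo_eq_iff_shape_eq]
        grind
    _ = Fintype.card {p : StdTableau ℓ n × StdTableau ℓ n // p.1.shape = p.2.shape} := by
        rw [Fintype.card_subtype, ← Finset.card_eq_sum_card_fiberwise]
        exact fun p _ ↦ p.1.nodesUpTo_mem_diagrams

end StdTableau

/-! ## Simultaneous eigenspaces -/

section Eigenspaces

variable {K : Type*} [Field K] {t : Kˣ} {n ℓ : ℕ} {κ : ℕ → ℤ} {S T : StdTableau ℓ n}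

lemma jmMatrix_mul_single (S T : StdTableau ℓ n) (k : ℕ) :
    jmMatrix t κ k * Matrix.single S T (1 : K) = S.weight t κ k • Matrix.single S T 1 := by
  ext A B
  rw [jmMatrix, Matrix.diagonal_mul, Matrix.smul_apply, smul_eq_mul, Matrix.single_apply]
  split_ifs with h
  · rw [h.1]
  · simp only [mul_zero]

lemma single_mul_jmMatrix (S T : StdTableau ℓ n) (k : ℕ) :
    Matrix.single S T (1 : K) * jmMatrix t κ k = T.weight t κ k • Matrix.single S T 1 := by
  ext A B
  rw [jmMatrix, Matrix.mul_diagonal, Matrix.smul_apply, smul_eq_mul, mul_comm, Matrix.single_apply]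
  split_ifs with h
  · rw [h.2]
  · simp only [mul_zero]

lemma SeparatesF.eq_of_weight_mul_eq (hs : SeparatesF t n ℓ κ) {x : K} (hx : x ≠ 0)
    (h : ∀ k : Fin n, S.weight t κ (k + 1) * x = T.weight t κ (k + 1) * x) : S = T := by
  refine hs.eq_of_content_eq fun k hk ↦ ?_
  rw [Finset.mem_Icc] at hk
  have hk' := mul_right_cancel₀ hx (h ⟨k - 1, by omega⟩)
  rwa [Nat.sub_add_cancel hk.1] at hk'

lemma SeparatesF.eq_smul_single_of_jmMatrix_mul (hs : SeparatesF t n ℓ κ)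
    {M : TableauMatrix ℓ n K}
    (hleft : ∀ k : Fin n, jmMatrix t κ (k + 1) * M = S.weight t κ (k + 1) • M)
    (hright : ∀ k : Fin n, M * jmMatrix t κ (k + 1) = T.weight t κ (k + 1) • M) :
    M = M S T • Matrix.single S T 1 := by
  ext A B
  by_cases hM : M A B = 0
  · rw [hM, Matrix.smul_apply, Matrix.single_apply]
    split_ifs with h
    · rw [h.1, h.2, hM, zero_smul]
    · rw [smul_zero]
  · have hA : A = S := hs.eq_of_weight_mul_eq hM fun k ↦ by
      simpa [jmMatrix] using congrFun₂ (hleft k) A B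
    have hB : B = T := hs.eq_of_weight_mul_eq hM fun k ↦ by
      simpa [jmMatrix, mul_comm] using congrFun₂ (hright k) A B
    simp [hA, hB]

/-- Ordered pairs of standard tableaux of the same shape, the index set of the seminormal units. -/
abbrev StdPair (ℓ n : ℕ) : Type :=
  {p : StdTableau ℓ n × StdTableau ℓ n // p.1.shape = p.2.shape}

/-- The seminormal matrix unit of the cyclotomic Hecke algebra attached to `(S, T)`: a preimage
of the matrix unit at `(S, T)` under the seminormal representation. -/
noncomputable def seminormalUnit (hs : SeparatesF t n ℓ κ) (p : StdPair ℓ n) :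
    CycHecke K t n ℓ κ :=
  (single_mem_range_seminormalRep hs p.2).choose

lemma seminormalRep_seminormalUnit (hs : SeparatesF t n ℓ κ) (p : StdPair ℓ n) :
    seminormalRep hs (seminormalUnit hs p) = Matrix.single p.1.1 p.1.2 1 :=
  (single_mem_range_seminormalRep hs p.2).choose_spec

lemma linearIndependent_seminormalRep_seminormalUnit (hs : SeparatesF t n ℓ κ) :
    LinearIndependent K ((seminormalRep hs).toLinearMap ∘ seminormalUnit hs) := by
  have heq : (seminormalRep hs).toLinearMap ∘ seminormalUnit hs =
      Matrix.stdBasis K (StdTableau ℓ n) (StdTableau ℓ n) ∘ fun p ↦ p.1 :=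
    funext fun p ↦ (seminormalRep_seminormalUnit hs p).trans (Matrix.stdBasis_eq_single ..).symm
  exact heq ▸ (Matrix.stdBasis K _ _).linearIndependent.comp _ Subtype.val_injective

lemma linearIndependent_seminormalUnit (hs : SeparatesF t n ℓ κ) :
    LinearIndependent K (seminormalUnit hs) :=
  (linearIndependent_seminormalRep_seminormalUnit hs).of_comp _

lemma span_range_seminormalUnit (hℓ : 1 ≤ ℓ) (hs : SeparatesF t n ℓ κ) :
    Submodule.span K (Set.range (seminormalUnit hs)) = ⊤ := by
  obtain ⟨_, hrank⟩ := finite_cycHecke_and_finrank_le (K := K) (t := t) (n := n) (κ := κ) hℓ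
  have hli := linearIndependent_seminormalUnit hs
  exact hli.span_eq_top_of_card_eq_finrank' (le_antisymm hli.fintype_card_le_finrank
    (hrank.trans (StdTableau.pow_mul_factorial_le_card_pairs ℓ n)))

lemma seminormalRep_injective (hℓ : 1 ≤ ℓ) (hs : SeparatesF t n ℓ κ) :
    Function.Injective (seminormalRep hs) := by
  refine (injective_iff_map_eq_zero _).2 fun x hx ↦ ?_
  have hmem : x ∈ Submodule.span K (Set.range (seminormalUnit hs)) :=
    span_range_seminormalUnit hℓ hs ▸ Submodule.mem_top
  obtain ⟨c, rfl⟩ := (Submodule.mem_span_range_iff_exists_fun K).1 hmem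
  have hc := Fintype.linearIndependent_iff.1 (linearIndependent_seminormalRep_seminormalUnit hs) c
    (by simpa using hx)
  simp [hc]

lemma eigSub_eq_span_seminormalUnit (hℓ : 1 ≤ ℓ) (hs : SeparatesF t n ℓ κ) (p : StdPair ℓ n) :
    eigSub K t n ℓ κ p.1.1 p.1.2 = Submodule.span K {seminormalUnit hs p} := by
  have hinj := seminormalRep_injective hℓ hs
  refine le_antisymm (fun h hh ↦ ?_) ?_
  · have hsingle := hs.eq_smul_single_of_jmMatrix_mul (M := seminormalRep hs h)
      (fun k ↦ by rw [← seminormalRep_Lgen hs, ← map_mul, (hh k).1, map_smul, StdTableau.weight])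
      (fun k ↦ by rw [← seminormalRep_Lgen hs, ← map_mul, (hh k).2, map_smul, StdTableau.weight])
    refine Submodule.mem_span_singleton.2 ⟨seminormalRep hs h p.1.1 p.1.2, hinj ?_⟩
    rw [map_smul, seminormalRep_seminormalUnit, ← hsingle]
  · refine (Submodule.span_singleton_le_iff_mem _ _).2 fun k ↦ ⟨hinj ?_, hinj ?_⟩
    · rw [map_mul, map_smul, seminormalRep_Lgen, seminormalRep_seminormalUnit,
        jmMatrix_mul_single, StdTableau.weight]
    · rw [map_mul, map_smul, seminormalRep_Lgen, seminormalRep_seminormalUnit,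
        single_mul_jmMatrix, StdTableau.weight]

end Eigenspaces

end Paper

namespace Paper

/-- Proposition P:LDecomposition: when `(K, t)` separates
`Std(P_n)`, the cyclotomic Hecke algebra decomposes as the internal direct sum of the
one-dimensional simultaneous two-sided eigenspaces `H_{S,T}`, over pairs of standard
tableaux of the same shape. -/
theorem seminormal_decomposition (n ℓ : ℕ) (hℓ : 1 ≤ ℓ) (κ : ℕ → ℤ)
    (K : Type) [Field K] (t : Kˣ) (hsep : SeparatesF t n ℓ κ) :
    (⨆ p : {p : StdTableau ℓ n × StdTableau ℓ n // p.1.shape = p.2.shape},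
        eigSub K t n ℓ κ p.1.1 p.1.2) = ⊤ ∧
    (∀ p : {p : StdTableau ℓ n × StdTableau ℓ n // p.1.shape = p.2.shape},
      Disjoint (eigSub K t n ℓ κ p.1.1 p.1.2)
        (⨆ q : {q : StdTableau ℓ n × StdTableau ℓ n // q.1.shape = q.2.shape},
          ⨆ _ : q ≠ p, eigSub K t n ℓ κ q.1.1 q.1.2)) ∧
    (∀ p : {p : StdTableau ℓ n × StdTableau ℓ n // p.1.shape = p.2.shape},
      Module.finrank K (eigSub K t n ℓ κ p.1.1 p.1.2) = 1) := by
  have hli := linearIndependent_seminormalUnit hsep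
  have heig := eigSub_eq_span_seminormalUnit hℓ hsep
  refine ⟨?_, fun p ↦ ?_, fun p ↦ ?_⟩
  · simp only [heig]
    rw [← Submodule.span_range_eq_iSup, span_range_seminormalUnit hℓ hsep]
  · simpa only [heig] using hli.iSupIndep_span_singleton p
  · rw [heig]
    exact finrank_span_singleton (hli.ne_zero p)

end Paper
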